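/- If Y ⊆ L²([0,a)) is a perfect set that is gap-rich (with some discrete exceptional set S ⊆ ℝ), then for generic y ∈ LP(ℤ,Y) (i.e., for every y in some dense Gδ subset of LP(ℤ,Y)), the spectrum of the continuum Schrödinger operator L_y = −d²/dx² + y^♮ on L²(ℝ) is a Cantor set of zero Hausdorff dimension. -/

import Mathlib

/-!
The spectrum is handled through lower bounds. A distributional solution of `-g'' + W g = h` with
`g, h ∈ L²` and `W` uniformly locally square integrable has a `C¹` representative, which is
controlled on each block `[ja, (j+1)a)` by the `L²` norms of `g` and `h` there. Hence such
potentials are relatively bounded, solutions can be cut off with errors living near the cut, and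
the maximal operator is symmetric. It follows that `E` is outside the spectrum iff `-d²/dx² + V - E`
is bounded below, a condition stable under perturbations of the energy and of the potential.

For every limit-periodic `y` the spectrum is closed, nonempty and without isolated points. For the
last claim, an isolated point of the spectrum is an eigenvalue of multiplicity at most two, with a
lower bound on the complement of its eigenspace, whereas three translates of a compactly supported
approximate eigenfunction by quasi-periods of `y` are disjointly supported approximate
eigenfunctions.

For the dimension, let `Kₙ` be an exhaustion of `ℝ ∖ S` by compact sets, and call the spectrum in
`Kₙ` thin when it is covered by `N` intervals of radius `ρ` with `N ^ n * ρ < 1 / (n + 1)`. The set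
of `y` for which this holds is open. It is dense: near a periodic sequence `x`, gap-richness and
compactness give finitely many sequences such that each energy in `Kₙ` lies in a gap of one of them,
with a uniform lower bound. Concatenate stretches of length `2L` of these sequences periodically,
with total period `q = O(L)`. At an energy of the new spectrum, solutions decay exponentially inside
the stretch which has a gap there, so there are approximate eigenfunctions supported in one period
box with exponentially small error. Approximate eigenfunctions in one box at well-separated energies
are almost orthogonal, and there are only `O(q)` of them. The spectrum in `Kₙ` is therefore covered
by `O(q)` intervals of length exponentially small in `q`.

By Baire's theorem, the intersection of these open dense sets is a dense `Gδ`. On it the spectrum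
meets each `Kₙ` in a set of Hausdorff dimension zero, and `S` is countable, so the spectrum has
dimension zero, and in particular empty interior.
-/

open Set MeasureTheory BoundedContinuousFunction

noncomputable section

/-- `L²(ℝ)`. -/
abbrev L2R := Lp ℝ 2 (volume : Measure ℝ)

/-- `L²([0,a))`. -/
abbrev L2I (a : ℝ) := Lp ℝ 2 (volume.restrict (Ico (0 : ℝ) a))

/-- `g` and `h` satisfy `(-d²/dx² + (V - E)) g = h` in the distributional sense. -/
def WeakSchrodingerEq (V : ℝ → ℝ) (E : ℝ) (g h : L2R) : Prop :=
  ∀ φ : ℝ → ℝ, ContDiff ℝ (⊤ : ℕ∞) φ → HasCompactSupport φ →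
    ∫ x, g x * (-(deriv (deriv φ) x) + (V x - E) * φ x) = ∫ x, h x * φ x

/-- The spectrum of the continuum Schrödinger operator `L_V = -d²/dx² + V` on
`L²(ℝ)`: `E` is in the spectrum iff there is no bounded operator `T` inverting
`L_V - E` (in the distributional sense). -/
def ContSpectrum (V : ℝ → ℝ) : Set ℝ :=
  {E : ℝ | ¬ ∃ T : L2R →L[ℝ] L2R,
      (∀ f : L2R, WeakSchrodingerEq V E (T f) f) ∧
      (∀ g h : L2R, WeakSchrodingerEq V E g h → T h = g)}

/-- A subset of ℝ is discrete if it has no accumulation points. -/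
def IsDiscreteSet (S : Set ℝ) : Prop := ∀ x : ℝ, ¬ AccPt x (Filter.principal S)

/-- Periodic extension `w^{♯ℤ}` of a finite word `w`. -/
def perExt {α : Type*} [Zero α] {m : ℕ} (w : Fin m → α) : ℤ → α :=
  fun n =>
    if h : 0 < m then
      w ⟨(n % (m : ℤ)).toNat, by
        have h1 : 0 ≤ n % (m : ℤ) := Int.emod_nonneg n (by exact_mod_cast h.ne')
        have h2 : n % (m : ℤ) < (m : ℤ) := Int.emod_lt_of_pos n (by exact_mod_cast h)
        omega⟩
    else 0

/-- Concatenation `y^♮ : ℝ → ℝ` of a bi-infinite sequence of pieces in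
`L²([0,a))`: `y^♮(ja + t) = y_j(t)` for `t ∈ [0,a)`. -/
def aggC (a : ℝ) (y : ℤ → L2I a) : ℝ → ℝ :=
  fun t => (y ⌊t / a⌋) (t - (⌊t / a⌋ : ℝ) * a)

/-- `Y ⊆ L²([0,a))` is gap-rich with exceptional set `S`. -/
def GapRichC (a : ℝ) (Y : Set (L2I a)) (S : Set ℝ) : Prop :=
  IsDiscreteSet S ∧
  ∀ E : ℝ, E ∉ S → ∀ m : ℕ, 0 < m → ∀ x : Fin m → L2I a, (∀ i, x i ∈ Y) →
    ∀ ε : ℝ, 0 < ε →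
      ∃ l : ℕ, 0 < l ∧ ∃ y : Fin l → L2I a,
        (∀ i, y i ∈ Y) ∧
        (∀ j : ℤ, dist (perExt x j) (perExt y j) < ε) ∧
        E ∉ ContSpectrum (aggC a (perExt y))

/-- The periodic elements of `Y^ℤ`. -/
def PerC (a : ℝ) (Y : Set (L2I a)) : Set (ℤ →ᵇ L2I a) :=
  {x | (∃ q : ℕ, 0 < q ∧ ∀ n : ℤ, x (n + q) = x n) ∧ ∀ n : ℤ, x n ∈ Y}

/-- The limit-periodic elements of `Y^ℤ`. -/
def LPC (a : ℝ) (Y : Set (L2I a)) : Set (ℤ →ᵇ L2I a) := closure (PerC a Y)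

/-- Cantor set of zero Hausdorff dimension (continuum case: closed, possibly
unbounded). -/
def IsZeroDimCantorC (s : Set ℝ) : Prop :=
  s.Nonempty ∧ IsClosed s ∧ Preperfect s ∧ interior s = ∅ ∧ dimH s = 0

namespace ContinuumSchrodinger

open Filter Topology

/-! ### Locally square integrable functions -/

/-- The `j`-th block `[ja, (j+1)a)`, on which the potential `aggC a y` is a translate of `y j`. -/
def block (a : ℝ) (j : ℤ) : Set ℝ := Ico (j * a) ((j + 1) * a)

section block

variable {a : ℝ}

lemma measurableSet_block (a : ℝ) (j : ℤ) : MeasurableSet (block a j) := measurableSet_Ico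

lemma mem_block_iff_floor_eq (ha : 0 < a) {x : ℝ} {j : ℤ} : x ∈ block a j ↔ ⌊x / a⌋ = j := by
  rw [Int.floor_eq_iff, le_div_iff₀ ha, div_lt_iff₀ ha]; rfl

lemma pairwise_disjoint_block (ha : 0 < a) : Pairwise (Function.onFun Disjoint (block a)) :=
  fun _ _ hij => Set.disjoint_left.2 fun _ hi hj =>
    hij (((mem_block_iff_floor_eq ha).1 hi).symm.trans ((mem_block_iff_floor_eq ha).1 hj))

lemma iUnion_block (ha : 0 < a) : ⋃ j, block a j = univ :=
  eq_univ_of_forall fun _ => mem_iUnion.2 ⟨_, (mem_block_iff_floor_eq ha).2 rfl⟩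

lemma block_subset_Icc (a : ℝ) (j : ℤ) : block a j ⊆ Icc (j * a) (j * a + a) :=
  fun _ hx => ⟨hx.1, by linarith [hx.2]⟩

lemma volume_real_block (ha : 0 < a) (j : ℤ) : (volume : Measure ℝ).real (block a j) = a := by
  rw [block, Real.volume_real_Ico_of_le (by nlinarith)]; ring

lemma hasSum_setIntegral_block (ha : 0 < a) {f : ℝ → ℝ} (hf : Integrable f) :
    HasSum (fun j => ∫ x in block a j, f x) (∫ x, f x) := by
  simpa only [iUnion_block ha, setIntegral_univ] using
    hasSum_integral_iUnion (measurableSet_block a) (pairwise_disjoint_block ha)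
      (hf.integrableOn (s := ⋃ j, block a j))

lemma setIntegral_block_eq_intervalIntegral (ha : 0 < a) (j : ℤ) (f : ℝ → ℝ) :
    ∫ x in block a j, f x = ∫ x in (j * a : ℝ)..(j * a + a), f x := by
  rw [intervalIntegral.integral_of_le (by linarith), block, integral_Ico_eq_integral_Ioc]
  congr 3; ring

lemma Ico_eq_biUnion_block (ha : 0 < a) (m n : ℤ) :
    Ico (m * a) (n * a) = ⋃ j ∈ Finset.Ico m n, block a j := by
  ext x
  simp only [mem_iUnion, Finset.mem_Ico, exists_prop, mem_block_iff_floor_eq ha, exists_eq_right']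
  rw [Int.le_floor, Int.floor_lt, le_div_iff₀ ha, div_lt_iff₀ ha]; rfl

lemma setIntegral_Ico_eq_sum_block (ha : 0 < a) {f : ℝ → ℝ} (m n : ℤ)
    (hf : ∀ j, IntegrableOn f (block a j)) :
    ∫ x in Ico (m * a) (n * a), f x = ∑ j ∈ Finset.Ico m n, ∫ x in block a j, f x := by
  rw [Ico_eq_biUnion_block ha, integral_biUnion_finset]
  · exact fun j _ => measurableSet_block a j
  · exact fun i _ j _ hij => pairwise_disjoint_block ha hij
  · exact fun j _ => hf j

lemma exists_subset_Ico_of_isBounded (ha : 0 < a) {s : Set ℝ} (hs : Bornology.IsBounded s) :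
    ∃ n : ℤ, s ⊆ Ico (((-n : ℤ) : ℝ) * a) ((n : ℝ) * a) := by
  obtain ⟨R, hR⟩ := hs.subset_closedBall 0
  obtain ⟨n, hn⟩ := exists_nat_gt (R / a)
  rw [div_lt_iff₀ ha] at hn
  refine ⟨n, fun x hx => ?_⟩
  have hxR : |x| ≤ R := by simpa using hR hx
  push_cast
  exact ⟨by linarith [neg_abs_le x], by linarith [le_abs_self x]⟩

end block

lemma integrable_mul_of_memLp_two {α : Type*} [MeasurableSpace α] {μ : Measure α} {f g : α → ℝ}
    (hf : MemLp f 2 μ) (hg : MemLp g 2 μ) : Integrable (fun x => f x * g x) μ :=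
  hf.integrable_mul hg

lemma sq_integral_abs_mul_le {α : Type*} [MeasurableSpace α] {μ : Measure α} {f g : α → ℝ}
    (hf : MemLp f 2 μ) (hg : MemLp g 2 μ) :
    (∫ x, |f x * g x| ∂μ) ^ 2 ≤ (∫ x, f x ^ 2 ∂μ) * ∫ x, g x ^ 2 ∂μ := by
  have holder := integral_mul_norm_le_Lp_mul_Lq (μ := μ) (f := f) (g := g)
    Real.HolderConjugate.two_two (by simpa using hf) (by simpa using hg)
  simp only [Real.norm_eq_abs, ← abs_mul, Real.rpow_two, sq_abs, ← Real.sqrt_eq_rpow] at holder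
  have hf0 : 0 ≤ ∫ x, f x ^ 2 ∂μ := integral_nonneg fun _ => sq_nonneg _
  have hg0 : 0 ≤ ∫ x, g x ^ 2 ∂μ := integral_nonneg fun _ => sq_nonneg _
  calc (∫ x, |f x * g x| ∂μ) ^ 2
      ≤ (√(∫ x, f x ^ 2 ∂μ) * √(∫ x, g x ^ 2 ∂μ)) ^ 2 :=
        pow_le_pow_left₀ (integral_nonneg fun _ => abs_nonneg _) holder 2
    _ = _ := by rw [mul_pow, Real.sq_sqrt hf0, Real.sq_sqrt hg0]

/-- `W` is locally square integrable on `ℝ`, phrased through the restrictions of Lebesgue measure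
to compact sets. -/
def LocL2 (W : ℝ → ℝ) : Prop := ∀ ⦃K⦄, IsCompact K → MemLp W 2 (volume.restrict K)

lemma locL2_of_memLp {g : ℝ → ℝ} (hg : MemLp g 2 volume) : LocL2 g := fun _ _ => hg.restrict _

lemma locL2_of_continuous {f : ℝ → ℝ} (hf : Continuous f) : LocL2 f := fun K hK => by
  obtain ⟨B, hB⟩ := hK.exists_bound_of_continuousOn hf.continuousOn
  have : IsFiniteMeasure (volume.restrict K) := ⟨by simpa using hK.measure_lt_top⟩
  exact MemLp.of_bound hf.aestronglyMeasurable B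
    ((ae_restrict_iff' hK.measurableSet).2 (Eventually.of_forall hB))

lemma LocL2.sub {f g : ℝ → ℝ} (hf : LocL2 f) (hg : LocL2 g) : LocL2 fun x => f x - g x :=
  fun _ hK => (hf hK).sub (hg hK)

lemma LocL2.locallyIntegrable_mul {f g : ℝ → ℝ} (hf : LocL2 f) (hg : LocL2 g) :
    LocallyIntegrable fun x => f x * g x :=
  locallyIntegrable_iff.2 fun _ hK => (hf hK).integrable_mul (hg hK)

lemma LocL2.locallyIntegrable {f : ℝ → ℝ} (hf : LocL2 f) : LocallyIntegrable f := by
  simpa using hf.locallyIntegrable_mul (locL2_of_continuous (continuous_const (y := (1 : ℝ))))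

lemma LocL2.memLp_mul_of_hasCompactSupport {W φ : ℝ → ℝ} (hW : LocL2 W) (hφ : Continuous φ)
    (hc : HasCompactSupport φ) : MemLp (fun x => W x * φ x) 2 volume := by
  obtain ⟨B, hB⟩ := hc.exists_bound_of_continuous hφ
  have onSupport : MemLp (fun x => W x * φ x) 2 (volume.restrict (tsupport φ)) := by
    refine MemLp.of_le_mul (c := B) (hW hc) ((hW hc).1.mul hφ.aestronglyMeasurable)
      (Eventually.of_forall fun x => ?_)
    rw [norm_mul, mul_comm]
    exact mul_le_mul_of_nonneg_right (hB x) (norm_nonneg _)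
  rwa [← memLp_indicator_iff_restrict (isClosed_tsupport φ).measurableSet,
    indicator_eq_self.2 fun x hx => subset_tsupport φ (right_ne_zero_of_mul hx)] at onSupport

/-- `W` is uniformly locally square integrable at scale `a`: its `L²` norm on every block is at
most `M`. The structure includes the positivity of the scale and of the bound. -/
structure UnifLocL2 (a : ℝ) (W : ℝ → ℝ) (M : ℝ) : Prop where
  scale_pos : 0 < a
  bound_nonneg : 0 ≤ M
  memLp : ∀ j, MemLp W 2 (volume.restrict (block a j))
  integral_sq_le : ∀ j, ∫ x in block a j, W x ^ 2 ≤ M ^ 2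

namespace UnifLocL2

variable {a M : ℝ} {W : ℝ → ℝ}

lemma aestronglyMeasurable (hW : UnifLocL2 a W M) : AEStronglyMeasurable W volume := by
  have := aestronglyMeasurable_iUnion_iff.2 fun j => (hW.memLp j).1
  rwa [iUnion_block hW.scale_pos, Measure.restrict_univ] at this

lemma locL2 (hW : UnifLocL2 a W M) : LocL2 W := fun K hK => by
  obtain ⟨n, hn⟩ := exists_subset_Ico_of_isBounded hW.scale_pos hK.isBounded
  refine (memLp_two_iff_integrable_sq hW.aestronglyMeasurable.restrict).2
    (IntegrableOn.mono_set ?_ hn)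
  rw [Ico_eq_biUnion_block hW.scale_pos, integrableOn_finset_iUnion]
  exact fun j _ => (hW.memLp j).integrable_sq

end UnifLocL2

/-! ### Test functions and weak derivatives -/

/-- The smooth compactly supported functions on `ℝ`, unbundled as in `WeakSchrodingerEq`. -/
structure IsTestFunction (φ : ℝ → ℝ) : Prop where
  contDiff : ContDiff ℝ (⊤ : ℕ∞) φ
  hasCompactSupport : HasCompactSupport φ

lemma exists_isTestFunction_integral_eq_one : ∃ θ : ℝ → ℝ, IsTestFunction θ ∧ ∫ x, θ x = 1 := by
  let f : ContDiffBump (0 : ℝ) := ⟨1, 2, one_pos, by norm_num⟩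
  exact ⟨f.normed volume, ⟨f.contDiff_normed, f.hasCompactSupport_normed⟩, f.integral_normed⟩

namespace IsTestFunction

variable {φ ψ : ℝ → ℝ}

lemma continuous (hφ : IsTestFunction φ) : Continuous φ := hφ.contDiff.continuous

lemma deriv (hφ : IsTestFunction φ) : IsTestFunction (deriv φ) :=
  ⟨(contDiff_infty_iff_deriv.1 hφ.contDiff).2, hφ.hasCompactSupport.deriv⟩

lemma hasDerivAt (hφ : IsTestFunction φ) (x : ℝ) : HasDerivAt φ (_root_.deriv φ x) x :=
  (hφ.contDiff.differentiable (by simp) x).hasDerivAt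

lemma sub_const_mul (hφ : IsTestFunction φ) (hψ : IsTestFunction ψ) (c : ℝ) :
    IsTestFunction fun x => φ x - c * ψ x :=
  ⟨hφ.contDiff.sub (contDiff_const.mul hψ.contDiff),
    hφ.hasCompactSupport.sub hψ.hasCompactSupport.mul_left⟩

lemma memLp_two (hφ : IsTestFunction φ) : MemLp φ 2 volume :=
  hφ.continuous.memLp_of_hasCompactSupport hφ.hasCompactSupport

lemma integrable (hφ : IsTestFunction φ) : Integrable φ :=
  hφ.continuous.integrable_of_hasCompactSupport hφ.hasCompactSupport

lemma integrable_mul {d : ℝ → ℝ} (hφ : IsTestFunction φ) (hd : LocallyIntegrable d) :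
    Integrable fun x => d x * φ x := by
  simpa only [smul_eq_mul] using
    hd.integrable_smul_right_of_hasCompactSupport hφ.continuous hφ.hasCompactSupport

lemma memLp_schrodinger (hφ : IsTestFunction φ) {W : ℝ → ℝ} (hW : LocL2 W) :
    MemLp (fun x => -(_root_.deriv (_root_.deriv φ) x) + W x * φ x) 2 volume :=
  hφ.deriv.deriv.memLp_two.neg.add
    (hW.memLp_mul_of_hasCompactSupport hφ.continuous hφ.hasCompactSupport)

lemma exists_tsupport_subset_Ioo (hφ : IsTestFunction φ) :
    ∃ R > 0, tsupport φ ⊆ Ioo (-R) R := by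
  obtain ⟨R, hR0, hR⟩ := hφ.hasCompactSupport.isBounded.subset_ball_lt 0 0
  exact ⟨R, hR0, by simpa [Real.ball_eq_Ioo] using hR⟩

lemma exists_deriv_eq (hψ : IsTestFunction ψ) (hzero : ∫ x, ψ x = 0) :
    ∃ φ, IsTestFunction φ ∧ _root_.deriv φ = ψ := by
  obtain ⟨R, -, hR⟩ := hψ.exists_tsupport_subset_Ioo
  have vanish : ∀ x, x ∉ Ioo (-R) R → ψ x = 0 := fun x hx =>
    image_eq_zero_of_notMem_tsupport fun h => hx (hR h)
  let φ : ℝ → ℝ := fun x => ∫ t in (-R)..x, ψ t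
  have hasDeriv : ∀ x, HasDerivAt φ (ψ x) x := fun x =>
    (hψ.continuous.integral_hasStrictDerivAt (-R) x).hasDerivAt
  have hderiv : _root_.deriv φ = ψ := funext fun x => (hasDeriv x).deriv
  refine ⟨φ, ⟨?_, HasCompactSupport.intro (isCompact_Icc (a := -R) (b := R)) fun x hx => ?_⟩,
    hderiv⟩
  · rw [contDiff_infty_iff_deriv, hderiv]
    exact ⟨fun x => (hasDeriv x).differentiableAt, hψ.contDiff⟩
  · rw [mem_Icc, not_and_or, not_le, not_le] at hx
    rcases hx with hx | hx
    · refine intervalIntegral.integral_zero_ae (Eventually.of_forall fun t ht => vanish t ?_)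
      rw [uIoc_of_ge hx.le] at ht
      exact fun h => absurd h.1 (not_lt.2 ht.2)
    · refine (intervalIntegral.integral_eq_integral_of_support_subset fun t ht => ?_).trans hzero
      have := hR (subset_tsupport ψ ht)
      exact ⟨this.1, this.2.le.trans hx.le⟩

lemma exists_deriv_eq_sub_integral_mul (hψ : IsTestFunction ψ) {θ : ℝ → ℝ}
    (hθ : IsTestFunction θ) (hθ1 : ∫ x, θ x = 1) :
    ∃ φ, IsTestFunction φ ∧ _root_.deriv φ = fun x => ψ x - (∫ y, ψ y) * θ x := by
  refine (hψ.sub_const_mul hθ _).exists_deriv_eq ?_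
  rw [integral_sub hψ.integrable (hθ.integrable.const_mul _), integral_const_mul, hθ1, mul_one,
    sub_self]

lemma integral_primitive_mul_deriv (hφ : IsTestFunction φ) {F : ℝ → ℝ}
    (hF : LocallyIntegrable F) :
    ∫ x, (∫ t in (0 : ℝ)..x, F t) * _root_.deriv φ x = -∫ x, F x * φ x := by
  set Q : ℝ → ℝ := fun x => ∫ t in (0 : ℝ)..x, F t
  obtain ⟨R, hR0, hR⟩ := hφ.exists_tsupport_subset_Ioo
  have vanish : ∀ x, x ∉ Ioo (-R) R → φ x = 0 := fun x hx =>
    image_eq_zero_of_notMem_tsupport fun h => hx (hR h)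
  have hQ : AbsolutelyContinuousOnInterval Q (-R) R :=
    (hF.integrableOn_isCompact isCompact_uIcc).intervalIntegrable
      |>.absolutelyContinuousOnInterval_intervalIntegral
        (by rw [uIcc_of_le (by linarith)]; exact ⟨by linarith, hR0.le⟩)
  obtain ⟨L, hL⟩ :=
    ContDiff.lipschitzWith_of_hasCompactSupport hφ.hasCompactSupport hφ.contDiff (by simp)
  have parts := hQ.integral_mul_deriv_eq_deriv_mul
    (hL.lipschitzOnWith (s := uIcc (-R) R)).absolutelyContinuousOnInterval
  have whole : ∀ f : ℝ → ℝ, Function.support f ⊆ tsupport φ →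
      ∫ x in (-R)..R, f x = ∫ x, f x := fun f hf =>
    intervalIntegral.integral_eq_integral_of_support_subset
      (hf.trans (hR.trans Ioo_subset_Ioc_self))
  have derivQ : ∀ᵐ x, _root_.deriv Q x = F x := by
    filter_upwards [LocallyIntegrable.ae_hasDerivAt_integral hF] with x hx
    exact (hx 0).deriv
  rw [vanish R (by simp), vanish (-R) (by simp), mul_zero, mul_zero, sub_zero, zero_sub,
    whole _ fun x hx => support_deriv_subset (right_ne_zero_of_mul hx),
    whole _ fun x hx => subset_tsupport φ (right_ne_zero_of_mul hx)] at parts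
  rw [parts]
  exact congrArg Neg.neg (integral_congr_ae (derivQ.mono fun x hx => by simp only [hx]))

end IsTestFunction

section weakDerivative

variable {g p F : ℝ → ℝ}

/-- Du Bois-Reymond: subtracting from `ψ` its mean times a fixed bump makes it a derivative. -/
lemma exists_ae_eq_const_add_primitive (hg : LocallyIntegrable g) (hp : LocallyIntegrable p)
    (h : ∀ ψ, IsTestFunction ψ → ∫ x, g x * deriv ψ x = -∫ x, p x * ψ x) :
    ∃ α : ℝ, g =ᵐ[volume] fun x => α + ∫ t in (0 : ℝ)..x, p t := by
  obtain ⟨θ, hθ, hθ1⟩ := exists_isTestFunction_integral_eq_one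
  have hQ : LocallyIntegrable fun x => ∫ t in (0 : ℝ)..x, p t :=
    (intervalIntegral.continuous_primitive (fun s t =>
      (hp.integrableOn_isCompact isCompact_uIcc).intervalIntegrable) 0).locallyIntegrable
  set d : ℝ → ℝ := fun x => g x - ∫ t in (0 : ℝ)..x, p t with hd_def
  have hd : LocallyIntegrable d := hg.sub hQ
  have weak : ∀ φ, IsTestFunction φ → ∫ x, d x * deriv φ x = 0 := fun φ hφ => by
    simp only [hd_def, sub_mul]
    rw [integral_sub (hφ.deriv.integrable_mul hg) (hφ.deriv.integrable_mul hQ), h φ hφ,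
      hφ.integral_primitive_mul_deriv hp, sub_self]
  have const : d =ᵐ[volume] fun _ => ∫ x, d x * θ x := by
    refine ae_eq_of_integral_contDiff_smul_eq hd (locallyIntegrable_const _) fun ψ hψ hψc => ?_
    have hψ : IsTestFunction ψ := ⟨hψ, hψc⟩
    obtain ⟨φ, hφ, hφ'⟩ := hψ.exists_deriv_eq_sub_integral_mul hθ hθ1
    have mean := weak φ hφ
    simp only [hφ', mul_sub, mul_left_comm _ (∫ y, ψ y)] at mean
    rw [integral_sub (hψ.integrable_mul hd) ((hθ.integrable_mul hd).const_mul _),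
      integral_const_mul, sub_eq_zero] at mean
    simpa only [smul_eq_mul, integral_mul_const, mul_comm] using mean
  exact ⟨_, const.mono fun x hx => by simp only [hd_def] at hx ⊢; linarith⟩

lemma exists_weak_deriv_of_weak_deriv_deriv (hg : LocallyIntegrable g) (hF : LocallyIntegrable F)
    (h : ∀ φ, IsTestFunction φ → ∫ x, g x * deriv (deriv φ) x = ∫ x, F x * φ x) :
    ∃ β : ℝ, ∀ ψ, IsTestFunction ψ →
      ∫ x, g x * deriv ψ x = -∫ x, ((∫ t in (0 : ℝ)..x, F t) + β) * ψ x := by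
  obtain ⟨θ, hθ, hθ1⟩ := exists_isTestFunction_integral_eq_one
  have hQ : LocallyIntegrable fun x => ∫ t in (0 : ℝ)..x, F t :=
    (intervalIntegral.continuous_primitive (fun s t =>
      (hF.integrableOn_isCompact isCompact_uIcc).intervalIntegrable) 0).locallyIntegrable
  set Q : ℝ → ℝ := fun x => ∫ t in (0 : ℝ)..x, F t
  refine ⟨-((∫ x, g x * deriv θ x) + ∫ x, Q x * θ x), fun ψ hψ => ?_⟩
  obtain ⟨φ, hφ, hφ'⟩ := hψ.exists_deriv_eq_sub_integral_mul hθ hθ1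
  have hφ'' : deriv (deriv φ) = fun x => deriv ψ x - (∫ y, ψ y) * deriv θ x := by
    rw [hφ']
    exact funext fun x => ((hψ.hasDerivAt x).sub ((hθ.hasDerivAt x).const_mul _)).deriv
  have lhs : ∫ x, g x * deriv (deriv φ) x
      = (∫ x, g x * deriv ψ x) - (∫ y, ψ y) * ∫ x, g x * deriv θ x := by
    simp only [hφ'', mul_sub, mul_left_comm _ (∫ y, ψ y)]
    rw [integral_sub (hψ.deriv.integrable_mul hg) ((hθ.deriv.integrable_mul hg).const_mul _),
      integral_const_mul]
  have rhs : ∫ x, F x * φ x = -((∫ x, Q x * ψ x) - (∫ y, ψ y) * ∫ x, Q x * θ x) := by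
    rw [← neg_eq_iff_eq_neg, ← hφ.integral_primitive_mul_deriv hF]
    simp only [hφ', mul_sub, mul_left_comm _ (∫ y, ψ y)]
    rw [integral_sub (hψ.integrable_mul hQ) ((hθ.integrable_mul hQ).const_mul _),
      integral_const_mul]
  simp only [add_mul]
  rw [integral_add (hψ.integrable_mul hQ) (hψ.integrable.const_mul _), integral_const_mul]
  linear_combination h φ hφ - lhs + rhs

end weakDerivative

/-! ### Weak solutions and their `C¹` representatives -/

/-- `-g'' + W g = h` in the sense of distributions with `g, h ∈ L²(ℝ)`, i.e. `(g, h)` lies in the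
graph of the maximal realisation of `-d²/dx² + W`; for functions rather than `L²` classes. -/
structure IsWeakSol (W g h : ℝ → ℝ) : Prop where
  memLp_left : MemLp g 2 volume
  memLp_right : MemLp h 2 volume
  weak : ∀ φ, IsTestFunction φ →
    ∫ x, g x * (-(deriv (deriv φ) x) + W x * φ x) = ∫ x, h x * φ x

/-- `G` is a `C¹` representative with derivative `P` of the solution `g` of `-g'' + W g = h`. The
equation itself is recorded in its integrated form, as the second derivative is only `L¹_loc`. -/
structure IsC1Rep (W g h G P : ℝ → ℝ) : Prop where
  ae_eq : g =ᵐ[volume] G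
  hasDerivAt : ∀ x, HasDerivAt G (P x) x
  continuous_deriv : Continuous P
  integral_eq : ∀ s t : ℝ, ∫ x in s..t, (W x * G x - h x) = P t - P s

lemma IsWeakSol.locallyIntegrable {W g h : ℝ → ℝ} (e : IsWeakSol W g h) (hW : LocL2 W) :
    LocallyIntegrable fun x => W x * g x - h x :=
  (hW.locallyIntegrable_mul (locL2_of_memLp e.memLp_left)).sub
    (locL2_of_memLp e.memLp_right).locallyIntegrable

theorem IsWeakSol.exists_isC1Rep {W g h : ℝ → ℝ} (e : IsWeakSol W g h) (hW : LocL2 W) :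
    ∃ G P, IsC1Rep W g h G P := by
  have hg := (locL2_of_memLp e.memLp_left).locallyIntegrable
  have hWg := hW.locallyIntegrable_mul (locL2_of_memLp e.memLp_left)
  have hh := (locL2_of_memLp e.memLp_right).locallyIntegrable
  have hF := e.locallyIntegrable hW
  set F : ℝ → ℝ := fun x => W x * g x - h x with hF_def
  have hFi : ∀ s t, IntervalIntegrable F volume s t := fun s t =>
    (hF.integrableOn_isCompact isCompact_uIcc).intervalIntegrable
  obtain ⟨β, hβ⟩ := exists_weak_deriv_of_weak_deriv_deriv hg hF fun φ hφ => by
    have weak := e.weak φ hφ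
    have split : ∀ x, g x * (-(deriv (deriv φ) x) + W x * φ x)
        = W x * g x * φ x - g x * deriv (deriv φ) x := fun x => by ring
    simp only [split] at weak
    rw [integral_sub (hφ.integrable_mul hWg) (hφ.deriv.deriv.integrable_mul hg)] at weak
    simp only [hF_def, sub_mul]
    rw [integral_sub (hφ.integrable_mul hWg) (hφ.integrable_mul hh)]
    linarith
  set P : ℝ → ℝ := fun x => (∫ t in (0 : ℝ)..x, F t) + β
  have hP : Continuous P := (intervalIntegral.continuous_primitive hFi 0).add continuous_const
  obtain ⟨α, hα⟩ := exists_ae_eq_const_add_primitive hg hP.locallyIntegrable hβ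
  refine ⟨_, P, hα, fun x => (hP.integral_hasStrictDerivAt 0 x).hasDerivAt.const_add α, hP,
    fun s t => ?_⟩
  calc ∫ x in s..t, (W x * (α + ∫ t in (0 : ℝ)..x, P t) - h x) = ∫ x in s..t, F x :=
        intervalIntegral.integral_congr_ae (hα.mono fun x hx _ => by simp only [hF_def, hx])
    _ = P t - P s := by
        rw [add_sub_add_right_eq_sub, intervalIntegral.integral_interval_sub_left (hFi _ _)
          (hFi _ _)]

namespace IsC1Rep

variable {W g h G P : ℝ → ℝ}

lemma continuous (r : IsC1Rep W g h G P) : Continuous G :=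
  continuous_iff_continuousAt.2 fun x => (r.hasDerivAt x).continuousAt

lemma locallyIntegrable (r : IsC1Rep W g h G P) (hW : LocL2 W) (e : IsWeakSol W g h) :
    LocallyIntegrable fun x => W x * G x - h x :=
  (e.locallyIntegrable hW).congr (r.ae_eq.mono fun x hx => by simp only [hx])

end IsC1Rep

/-! ### The block estimate -/

lemma exists_mem_Icc_sq_le_integral_div {c d : ℝ} (hcd : c < d) {G : ℝ → ℝ} (hG : Continuous G) :
    ∃ y ∈ Icc c d, G y ^ 2 ≤ (∫ x in c..d, G x ^ 2) / (d - c) := by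
  obtain ⟨y, hy, hle⟩ := exists_le_setAverage (μ := volume) (s := Ioc c d) (f := fun x => G x ^ 2)
    (by simpa using hcd) (by simp) ((hG.pow 2).integrableOn_Ioc)
  refine ⟨y, Ioc_subset_Icc_self hy, hle.trans_eq ?_⟩
  rw [setAverage_eq, Real.volume_real_Ioc_of_le hcd.le, intervalIntegral.integral_of_le hcd.le,
    smul_eq_mul, div_eq_inv_mul]

/-- Somewhere in the first and in the last third of the interval `|G|` is at most its quadratic mean
there; the mean value theorem between these two points then controls `P` at one point. -/
lemma exists_abs_le_and_abs_deriv_le {a p : ℝ} (ha : 0 < a) {G P : ℝ → ℝ}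
    (hd : ∀ x, HasDerivAt G (P x) x) :
    (∃ y ∈ Icc p (p + a), |G y| ≤ √(3 / a * ∫ y in p..(p + a), G y ^ 2)) ∧
    ∃ y ∈ Icc p (p + a), |P y| ≤ 6 * √(3 / a * ∫ y in p..(p + a), G y ^ 2) / a := by
  have hG : Continuous G := continuous_iff_continuousAt.2 fun x => (hd x).continuousAt
  set I := ∫ y in p..(p + a), G y ^ 2
  set N := √(3 / a * I)
  have small : ∀ c, p ≤ c → c + a / 3 ≤ p + a → ∃ y ∈ Icc c (c + a / 3), |G y| ≤ N := by
    intro c hc hca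
    obtain ⟨y, hy, hle⟩ := exists_mem_Icc_sq_le_integral_div (c := c) (d := c + a / 3)
      (by linarith) hG
    refine ⟨y, hy, Real.abs_le_sqrt (hle.trans ?_)⟩
    have mono : ∫ x in c..(c + a / 3), G x ^ 2 ≤ I :=
      intervalIntegral.integral_mono_interval hc (by linarith) hca
        (Eventually.of_forall fun _ => sq_nonneg _) ((hG.pow 2).intervalIntegrable _ _)
    calc (∫ x in c..(c + a / 3), G x ^ 2) / (c + a / 3 - c) ≤ I / (c + a / 3 - c) := by
          gcongr; linarith
      _ = 3 / a * I := by rw [add_sub_cancel_left]; field_simp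
  obtain ⟨y₁, ⟨hpy₁, hy₁p⟩, hy₁⟩ := small p le_rfl (by linarith)
  obtain ⟨y₂, ⟨hpy₂, hy₂p⟩, hy₂⟩ := small (p + 2 * a / 3) (by linarith) (by linarith)
  have hlt : y₁ < y₂ := by linarith
  have hgap : a / 3 ≤ y₂ - y₁ := by linarith
  obtain ⟨ξ, ⟨hy₁ξ, hξy₂⟩, hξ⟩ := exists_hasDerivAt_eq_slope G P hlt hG.continuousOn fun z _ => hd z
  refine ⟨⟨y₁, ⟨hpy₁, by linarith⟩, hy₁⟩, ξ, ⟨by linarith, by linarith⟩, ?_⟩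
  rw [hξ, abs_div, abs_of_pos (sub_pos.2 hlt)]
  calc |G y₂ - G y₁| / (y₂ - y₁) ≤ (N + N) / (a / 3) := by
        gcongr
        exact (abs_sub _ _).trans (add_le_add hy₂ hy₁)
    _ = 6 * N / a := by field_simp; ring

lemma sq_le_integral_sq_of_deriv_oscillation {a p B : ℝ} (ha : 0 < a) {G P : ℝ → ℝ}
    (hd : ∀ x, HasDerivAt G (P x) x)
    (hP : ∀ x ∈ Icc p (p + a), ∀ y ∈ Icc p (p + a), |P x - P y| ≤ B) {x : ℝ}
    (hx : x ∈ Icc p (p + a)) :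
    G x ^ 2 ≤ 294 / a * (∫ y in p..(p + a), G y ^ 2) + 2 * B ^ 2 * a ^ 2 ∧
    P x ^ 2 ≤ 216 / a ^ 3 * (∫ y in p..(p + a), G y ^ 2) + 2 * B ^ 2 := by
  obtain ⟨⟨y₁, hmem₁, hy₁⟩, ξ, hmemξ, slope⟩ := exists_abs_le_and_abs_deriv_le (p := p) ha hd
  set I := ∫ y in p..(p + a), G y ^ 2
  set N := √(3 / a * I)
  have hI : 0 ≤ I := intervalIntegral.integral_nonneg (by linarith) fun _ _ => sq_nonneg _
  have hN2 : N ^ 2 = 3 / a * I := Real.sq_sqrt (by positivity)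
  have boundP : ∀ z ∈ Icc p (p + a), |P z| ≤ 6 * N / a + B := fun z hz => by
    linarith [hP z hz ξ hmemξ, abs_sub_abs_le_abs_sub (P z) (P ξ)]
  have boundG : |G x| ≤ 7 * N + B * a := by
    have mvt := (convex_Icc p (p + a)).norm_image_sub_le_of_norm_hasDerivWithin_le
      (fun z _ => (hd z).hasDerivWithinAt) boundP hmem₁ hx
    have hdist : |x - y₁| ≤ a := abs_le.2 ⟨by linarith [hx.1, hmem₁.2], by linarith [hx.2, hmem₁.1]⟩
    have hslope : 0 ≤ 6 * N / a + B := (abs_nonneg _).trans (boundP _ hx)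
    have : (6 * N / a + B) * |x - y₁| ≤ 6 * N + B * a :=
      (mul_le_mul_of_nonneg_left hdist hslope).trans_eq (by field_simp)
    rw [Real.norm_eq_abs, Real.norm_eq_abs] at mvt
    linarith [abs_sub_abs_le_abs_sub (G x) (G y₁)]
  constructor
  · calc G x ^ 2 ≤ (7 * N + B * a) ^ 2 := sq_le_sq' (abs_le.1 boundG).1 (abs_le.1 boundG).2
      _ ≤ 98 * N ^ 2 + 2 * B ^ 2 * a ^ 2 := by nlinarith [sq_nonneg (7 * N - B * a)]
      _ = _ := by rw [hN2]; ring
  · have boundPx := abs_le.1 (boundP x hx)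
    calc P x ^ 2 ≤ (6 * N / a + B) ^ 2 := sq_le_sq' boundPx.1 boundPx.2
      _ ≤ 72 * N ^ 2 / a ^ 2 + 2 * B ^ 2 := by
        have := sq_nonneg (6 * N / a - B)
        have split : 72 * N ^ 2 / a ^ 2 = 2 * (6 * N / a) ^ 2 := by ring
        nlinarith
      _ = _ := by rw [hN2]; field_simp; ring

/-- The squared graph norm of the pair `(g, h)`, restricted to the set `s`. -/
def graphNormSqOn (s : Set ℝ) (g h : ℝ → ℝ) : ℝ := (∫ y in s, g y ^ 2) + ∫ y in s, h y ^ 2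

lemma graphNormSqOn_nonneg (s : Set ℝ) (g h : ℝ → ℝ) : 0 ≤ graphNormSqOn s g h :=
  add_nonneg (integral_nonneg fun _ => sq_nonneg _) (integral_nonneg fun _ => sq_nonneg _)

lemma IsWeakSol.hasSum_graphNormSqOn_block {a : ℝ} (ha : 0 < a) {W g h : ℝ → ℝ}
    (e : IsWeakSol W g h) :
    HasSum (fun j => graphNormSqOn (block a j) g h) ((∫ y, g y ^ 2) + ∫ y, h y ^ 2) :=
  (hasSum_setIntegral_block ha e.memLp_left.integrable_sq).add
    (hasSum_setIntegral_block ha e.memLp_right.integrable_sq)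

/-- The constant of the block estimate `IsC1Rep.sq_le_graphNormSqOn`. -/
def sobolevConst (a M : ℝ) : ℝ := 294 / a + 216 / a ^ 3 + 4 * (M ^ 2 + a) * (a ^ 2 + 1)

lemma sobolevConst_pos {a : ℝ} (ha : 0 < a) (M : ℝ) : 0 < sobolevConst a M := by
  unfold sobolevConst; positivity

namespace IsC1Rep

variable {a M : ℝ} {W g h G P : ℝ → ℝ}

lemma abs_sub_le_setIntegral_block (r : IsC1Rep W g h G P) (ha : 0 < a) (hW : LocL2 W)
    (e : IsWeakSol W g h) {j : ℤ} {x y : ℝ} (hx : x ∈ Icc (j * a) (j * a + a))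
    (hy : y ∈ Icc (j * a) (j * a + a)) :
    |P x - P y| ≤ ∫ t in block a j, |W t * g t - h t| := by
  have ae_eq : ∫ t in block a j, |W t * g t - h t| = ∫ t in block a j, |W t * G t - h t| :=
    integral_congr_ae (ae_restrict_of_ae (r.ae_eq.mono fun t ht => by simp only [ht]))
  rw [← r.integral_eq y x, ae_eq, setIntegral_block_eq_intervalIntegral ha,
    intervalIntegral.integral_of_le (le_add_of_nonneg_right ha.le)]
  refine intervalIntegral.norm_integral_le_integral_norm_uIoc.trans
    (setIntegral_mono_set ?_ (Eventually.of_forall fun _ => norm_nonneg (W _ * G _ - h _))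
      (Ioc_subset_Ioc (le_min hy.1 hx.1) (max_le hy.2 hx.2)).eventuallyLE)
  exact ((r.locallyIntegrable hW e).integrableOn_isCompact isCompact_Icc).mono_set
    Ioc_subset_Icc_self |>.abs

end IsC1Rep

lemma IsWeakSol.sq_setIntegral_block_le {a M : ℝ} {W g h : ℝ → ℝ} (e : IsWeakSol W g h)
    (hW : UnifLocL2 a W M) (j : ℤ) :
    (∫ t in block a j, |W t * g t - h t|) ^ 2
      ≤ 2 * (M ^ 2 + a) * graphNormSqOn (block a j) g h := by
  have : IsFiniteMeasure (volume.restrict (block a j)) := ⟨by simp [block]⟩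
  have hg := e.memLp_left.restrict (block a j)
  have hh := e.memLp_right.restrict (block a j)
  have hWg : Integrable (fun t => W t * g t) (volume.restrict (block a j)) :=
    (hW.memLp j).integrable_mul hg
  have hh1 : Integrable h (volume.restrict (block a j)) := hh.integrable one_le_two
  have csW := sq_integral_abs_mul_le (hW.memLp j) hg
  have csh := sq_integral_abs_mul_le hh (memLp_const (1 : ℝ))
  have len : ∫ _ in block a j, (1 : ℝ) ^ 2 = a := by simp [volume_real_block hW.scale_pos]
  rw [len] at csh
  simp only [mul_one] at csh
  have triangle : ∫ t in block a j, |W t * g t - h t|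
      ≤ (∫ t in block a j, |W t * g t|) + ∫ t in block a j, |h t| := by
    rw [← integral_add hWg.abs hh1.abs]
    exact integral_mono (hWg.sub hh1).abs (hWg.abs.add hh1.abs) fun t => abs_sub _ _
  have hN : 0 ≤ ∫ t in block a j, g t ^ 2 := integral_nonneg fun _ => sq_nonneg _
  have csW' := csW.trans (mul_le_mul_of_nonneg_right (hW.integral_sq_le j) hN)
  have hMH : 0 ≤ M ^ 2 * ∫ t in block a j, h t ^ 2 :=
    mul_nonneg (sq_nonneg M) (integral_nonneg fun _ => sq_nonneg _)
  have haN : 0 ≤ a * ∫ t in block a j, g t ^ 2 := mul_nonneg hW.scale_pos.le hN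
  have sq := pow_le_pow_left₀ (integral_nonneg fun _ => abs_nonneg _) triangle 2
  unfold graphNormSqOn
  nlinarith [sq_nonneg ((∫ t in block a j, |W t * g t|) - ∫ t in block a j, |h t|)]

theorem IsC1Rep.sq_le_graphNormSqOn {a M : ℝ} {W g h G P : ℝ → ℝ} (r : IsC1Rep W g h G P)
    (hW : UnifLocL2 a W M) (e : IsWeakSol W g h) {j : ℤ} {x : ℝ}
    (hx : x ∈ Icc (j * a) (j * a + a)) :
    G x ^ 2 ≤ sobolevConst a M * graphNormSqOn (block a j) g h ∧
      P x ^ 2 ≤ sobolevConst a M * graphNormSqOn (block a j) g h := by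
  have ha := hW.scale_pos
  obtain ⟨boundG, boundP⟩ := sq_le_integral_sq_of_deriv_oscillation ha r.hasDerivAt
    (fun x hx y hy => r.abs_sub_le_setIntegral_block ha hW.locL2 e hx hy) hx
  have hB := e.sq_setIntegral_block_le hW j
  have hN : ∫ y in (j * a : ℝ)..(j * a + a), G y ^ 2 ≤ graphNormSqOn (block a j) g h := by
    have hGg : ∫ y in block a j, G y ^ 2 = ∫ y in block a j, g y ^ 2 :=
      integral_congr_ae (ae_restrict_of_ae (r.ae_eq.mono fun x hx => by simp only [hx]))
    rw [← setIntegral_block_eq_intervalIntegral ha, graphNormSqOn, hGg]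
    exact le_add_of_nonneg_right (integral_nonneg fun _ => sq_nonneg _)
  have hT := graphNormSqOn_nonneg (block a j) g h
  set T := graphNormSqOn (block a j) g h
  set B := ∫ t in block a j, |W t * g t - h t|
  have expand : sobolevConst a M * T = 294 / a * T + 216 / a ^ 3 * T
      + 2 * (2 * (M ^ 2 + a) * T) * a ^ 2 + 2 * (2 * (M ^ 2 + a) * T) := by
    unfold sobolevConst; ring
  have hNG := mul_le_mul_of_nonneg_left hN (show 0 ≤ 294 / a by positivity)
  have hNP := mul_le_mul_of_nonneg_left hN (show 0 ≤ 216 / a ^ 3 by positivity)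
  have hBa := mul_le_mul_of_nonneg_right hB (sq_nonneg a)
  have pos₁ : 0 ≤ 294 / a * T := by positivity
  have pos₂ : 0 ≤ 216 / a ^ 3 * T := by positivity
  have pos₃ : 0 ≤ 2 * (M ^ 2 + a) * T := by positivity
  have pos₄ : 0 ≤ 2 * (M ^ 2 + a) * T * a ^ 2 := by positivity
  rw [expand]
  constructor <;> linarith

/-! ### Operations on weak solutions -/

namespace IsWeakSol

variable {W W' g g' h h' D : ℝ → ℝ}

lemma congr (e : IsWeakSol W g h) (hW : W =ᵐ[volume] W') (hg : g =ᵐ[volume] g')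
    (hh : h =ᵐ[volume] h') : IsWeakSol W' g' h' where
  memLp_left := e.memLp_left.ae_eq hg
  memLp_right := e.memLp_right.ae_eq hh
  weak φ hφ := by
    have left : ∫ x, g x * (-(deriv (deriv φ) x) + W x * φ x)
        = ∫ x, g' x * (-(deriv (deriv φ) x) + W' x * φ x) :=
      integral_congr_ae (by filter_upwards [hW, hg] with x hWx hgx; rw [hWx, hgx])
    have right : ∫ x, h x * φ x = ∫ x, h' x * φ x :=
      integral_congr_ae (hh.mono fun x hx => by simp only [hx])
    rw [← left, ← right, e.weak φ hφ]

lemma zero (W : ℝ → ℝ) : IsWeakSol W (fun _ => 0) fun _ => 0 :=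
  ⟨MemLp.zero, MemLp.zero, fun φ _ => by simp⟩

lemma add (hW : LocL2 W) (e : IsWeakSol W g h) (e' : IsWeakSol W g' h') :
    IsWeakSol W (fun x => g x + g' x) fun x => h x + h' x where
  memLp_left := e.memLp_left.add e'.memLp_left
  memLp_right := e.memLp_right.add e'.memLp_right
  weak φ hφ := by
    have hL := hφ.memLp_schrodinger hW
    simp only [add_mul]
    rw [integral_add (integrable_mul_of_memLp_two e.memLp_left hL)
        (integrable_mul_of_memLp_two e'.memLp_left hL),
      integral_add (integrable_mul_of_memLp_two e.memLp_right hφ.memLp_two)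
        (integrable_mul_of_memLp_two e'.memLp_right hφ.memLp_two), e.weak φ hφ, e'.weak φ hφ]

lemma const_mul (e : IsWeakSol W g h) (c : ℝ) :
    IsWeakSol W (fun x => c * g x) fun x => c * h x where
  memLp_left := e.memLp_left.const_mul c
  memLp_right := e.memLp_right.const_mul c
  weak φ hφ := by
    simp only [mul_assoc, integral_const_mul, e.weak φ hφ]

lemma sum_const_mul (hW : LocL2 W) {ι : Type*} (s : Finset ι) (c : ι → ℝ) {u k : ι → ℝ → ℝ}
    (e : ∀ i ∈ s, IsWeakSol W (u i) (k i)) :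
    IsWeakSol W (fun x => ∑ i ∈ s, c i * u i x) fun x => ∑ i ∈ s, c i * k i x := by
  classical
  induction s using Finset.induction_on with
  | empty => simpa using IsWeakSol.zero W
  | insert i s hi ih =>
    simp_rw [Finset.sum_insert hi]
    exact ((e i (Finset.mem_insert_self _ _)).const_mul (c i)).add hW
      (ih fun j hj => e j (Finset.mem_insert_of_mem hj))

lemma add_potential (hW : LocL2 W) (e : IsWeakSol W g h)
    (hDg : MemLp (fun x => D x * g x) 2 volume) :
    IsWeakSol (fun x => W x + D x) g fun x => h x + D x * g x where
  memLp_left := e.memLp_left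
  memLp_right := e.memLp_right.add hDg
  weak φ hφ := by
    have hDφ := integrable_mul_of_memLp_two hDg hφ.memLp_two
    have split : ∀ x, g x * (-(deriv (deriv φ) x) + (W x + D x) * φ x)
        = g x * (-(deriv (deriv φ) x) + W x * φ x) + D x * g x * φ x := fun x => by ring
    simp only [split, add_mul (h _)]
    rw [integral_add (integrable_mul_of_memLp_two e.memLp_left (hφ.memLp_schrodinger hW)) hDφ,
      integral_add (integrable_mul_of_memLp_two e.memLp_right hφ.memLp_two) hDφ, e.weak φ hφ]

end IsWeakSol

/-! ### Relative boundedness of uniformly locally square integrable potentials -/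

lemma integrable_of_setIntegral_block_le {a : ℝ} (ha : 0 < a) {f : ℝ → ℝ} (hf0 : ∀ x, 0 ≤ f x)
    (hf : ∀ j, IntegrableOn f (block a j)) {b : ℤ → ℝ} {s : ℝ} (hb : HasSum b s)
    (h : ∀ j, ∫ x in block a j, f x ≤ b j) : Integrable f ∧ ∫ x, f x ≤ s := by
  have norm_eq : ∀ j, ∫ x in block a j, ‖f x‖ = ∫ x in block a j, f x := fun j =>
    integral_congr_ae (Eventually.of_forall fun x => Real.norm_of_nonneg (hf0 x))
  have hi : Integrable f := by
    have := integrableOn_iUnion_of_summable_integral_norm (μ := volume) (s := block a) hf <| by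
      simp only [norm_eq]
      exact Summable.of_nonneg_of_le (fun j => integral_nonneg hf0) h hb.summable
    rwa [iUnion_block ha, integrableOn_univ] at this
  exact ⟨hi, hasSum_le h (hasSum_setIntegral_block ha hi) hb⟩

theorem IsWeakSol.memLp_mul_and_integral_sq_le {a M δ : ℝ} {W D g h : ℝ → ℝ}
    (e : IsWeakSol W g h) (hW : UnifLocL2 a W M) (hD : UnifLocL2 a D δ) :
    MemLp (fun x => D x * g x) 2 volume ∧ ∫ x, (D x * g x) ^ 2
      ≤ sobolevConst a M * δ ^ 2 * ((∫ y, g y ^ 2) + ∫ y, h y ^ 2) := by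
  obtain ⟨G, P, r⟩ := e.exists_isC1Rep hW.locL2
  have ha := hW.scale_pos
  have meas : AEStronglyMeasurable (fun x => D x * g x) volume :=
    hD.aestronglyMeasurable.mul e.memLp_left.1
  set T : ℤ → ℝ := fun j => sobolevConst a M * graphNormSqOn (block a j) g h
  have hT : ∀ j, 0 ≤ T j := fun j =>
    mul_nonneg (sobolevConst_pos ha M).le (graphNormSqOn_nonneg _ _ _)
  have pointwise : ∀ j, ∀ᵐ x ∂volume.restrict (block a j),
      (D x * g x) ^ 2 ≤ T j * D x ^ 2 := fun j => by
    filter_upwards [ae_restrict_of_ae r.ae_eq, ae_restrict_mem (measurableSet_block a j)]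
      with x hx hxj
    rw [hx, mul_pow, mul_comm]
    exact mul_le_mul_of_nonneg_right (r.sq_le_graphNormSqOn hW e (block_subset_Icc a j hxj)).1
      (sq_nonneg _)
  have hDsq : ∀ j, IntegrableOn (fun x => T j * D x ^ 2) (block a j) := fun j =>
    (hD.memLp j).integrable_sq.const_mul _
  have integ : ∀ j, IntegrableOn (fun x => (D x * g x) ^ 2) (block a j) := fun j =>
    Integrable.mono' (hDsq j) (meas.pow 2).restrict
      ((pointwise j).mono fun x hx => by rwa [Real.norm_of_nonneg (sq_nonneg _)])
  have key := integrable_of_setIntegral_block_le ha (fun x => sq_nonneg (D x * g x)) integ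
    ((e.hasSum_graphNormSqOn_block ha).mul_left (sobolevConst a M * δ ^ 2)) fun j =>
      calc ∫ x in block a j, (D x * g x) ^ 2
          ≤ ∫ x in block a j, T j * D x ^ 2 := integral_mono_ae (integ j) (hDsq j) (pointwise j)
        _ = T j * ∫ x in block a j, D x ^ 2 := integral_const_mul _ _
        _ ≤ T j * δ ^ 2 := mul_le_mul_of_nonneg_left (hD.integral_sq_le j) (hT j)
        _ = _ := by ring
  exact ⟨(memLp_two_iff_integrable_sq meas).2 key.1, key.2⟩

/-! ### Cutoffs -/

/-- `χ` is a smooth cutoff living on the blocks `m, …, n - 1` and equal to `1` on all but the first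
and the last of them, with first two derivatives bounded by `K`. -/
structure IsCutoff (a K : ℝ) (m n : ℤ) (χ : ℝ → ℝ) : Prop where
  isTestFunction : IsTestFunction χ
  abs_le_one : ∀ x, |χ x| ≤ 1
  abs_deriv_le : ∀ x, |deriv χ x| ≤ K
  abs_deriv_deriv_le : ∀ x, |deriv (deriv χ) x| ≤ K
  tsupport_subset : tsupport χ ⊆ Ico (m * a) (n * a)
  tsupport_deriv_subset : tsupport (deriv χ) ⊆ block a m ∪ block a (n - 1)
  eq_one : ∀ x ∈ Ico ((m + 1) * a) ((n - 1) * a), χ x = 1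

lemma hasDerivAt_deriv_of_contDiff {f : ℝ → ℝ} (hf : ContDiff ℝ (⊤ : ℕ∞) f) (x : ℝ) :
    HasDerivAt f (deriv f x) x :=
  (hf.differentiable (by simp) x).hasDerivAt

lemma deriv_smoothTransition_eq_zero {t : ℝ} (ht : t ∉ Icc (0 : ℝ) 1) :
    deriv Real.smoothTransition t = 0 := by
  rw [mem_Icc, not_and_or, not_le, not_le] at ht
  rcases ht with ht | ht
  · have : Real.smoothTransition =ᶠ[𝓝 t] fun _ => 0 := by
      filter_upwards [Iio_mem_nhds ht] with s hs using Real.smoothTransition.zero_of_nonpos hs.le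
    rw [this.deriv_eq, deriv_const]
  · have : Real.smoothTransition =ᶠ[𝓝 t] fun _ => 1 := by
      filter_upwards [Ioi_mem_nhds ht] with s hs using Real.smoothTransition.one_of_one_le hs.le
    rw [this.deriv_eq, deriv_const]

lemma isTestFunction_deriv_smoothTransition : IsTestFunction (deriv Real.smoothTransition) :=
  ⟨(contDiff_infty_iff_deriv.1 Real.smoothTransition.contDiff).2,
    HasCompactSupport.intro isCompact_Icc fun _ ht => deriv_smoothTransition_eq_zero ht⟩

lemma IsTestFunction.exists_abs_le {φ : ℝ → ℝ} (hφ : IsTestFunction φ) : ∃ K, ∀ x, |φ x| ≤ K :=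
  hφ.hasCompactSupport.exists_bound_of_continuous hφ.continuous

/-- The function `x ↦ T (c x - p) + T (q - c x) - 1`, where `T` is `Real.smoothTransition`; it rises
on `[p / c, (p + 1) / c]` and descends on `[(q - 1) / c, q / c]`. -/
def plateau (c p q x : ℝ) : ℝ :=
  Real.smoothTransition (c * x - p) + Real.smoothTransition (q - c * x) - 1

section plateau

variable {c p q : ℝ}

lemma contDiff_plateau : ContDiff ℝ (⊤ : ℕ∞) (plateau c p q) :=
  ((Real.smoothTransition.contDiff.comp ((contDiff_const.mul contDiff_id).sub contDiff_const)).add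
    (Real.smoothTransition.contDiff.comp
      (contDiff_const.sub (contDiff_const.mul contDiff_id)))).sub contDiff_const

lemma hasDerivAt_const_mul_sub (x : ℝ) : HasDerivAt (fun x => c * x - p) c x := by
  simpa using ((hasDerivAt_id x).const_mul c).sub_const p

lemma hasDerivAt_const_sub_mul (x : ℝ) : HasDerivAt (fun x => q - c * x) (-c) x := by
  simpa using ((hasDerivAt_id x).const_mul c).const_sub q

lemma deriv_plateau : deriv (plateau c p q) = fun x =>
    c * (deriv Real.smoothTransition (c * x - p) - deriv Real.smoothTransition (q - c * x)) := by
  have hT := hasDerivAt_deriv_of_contDiff Real.smoothTransition.contDiff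
  ext x
  refine HasDerivAt.deriv ?_
  exact ((((hT _).comp x (hasDerivAt_const_mul_sub x)).add
    ((hT _).comp x (hasDerivAt_const_sub_mul x))).sub_const 1).congr_deriv (by ring)

lemma deriv_deriv_plateau : deriv (deriv (plateau c p q)) = fun x =>
    c ^ 2 * (deriv (deriv Real.smoothTransition) (c * x - p)
      + deriv (deriv Real.smoothTransition) (q - c * x)) := by
  have hT := isTestFunction_deriv_smoothTransition.hasDerivAt
  rw [deriv_plateau]
  ext x
  refine HasDerivAt.deriv ?_
  exact ((((hT _).comp x (hasDerivAt_const_mul_sub x)).sub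
    ((hT _).comp x (hasDerivAt_const_sub_mul x))).const_mul c).congr_deriv (by ring)

lemma abs_plateau_le_one (x : ℝ) : |plateau c p q x| ≤ 1 := by
  have nonneg := Real.smoothTransition.nonneg
  have le_one := Real.smoothTransition.le_one
  unfold plateau
  rw [abs_le]
  constructor
  · linarith [nonneg (c * x - p), nonneg (q - c * x)]
  · linarith [le_one (c * x - p), le_one (q - c * x)]

lemma plateau_eq_one {x : ℝ} (hp : p + 1 ≤ c * x) (hq : c * x ≤ q - 1) : plateau c p q x = 1 := by
  rw [plateau, Real.smoothTransition.one_of_one_le (by linarith),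
    Real.smoothTransition.one_of_one_le (by linarith), add_sub_cancel_right]

lemma tsupport_plateau_subset (hc : 0 < c) (hpq : p + 1 ≤ q) :
    tsupport (plateau c p q) ⊆ Icc (p / c) (q / c) := by
  refine closure_minimal (Function.support_subset_iff'.2 fun x hx => ?_) isClosed_Icc
  rw [mem_Icc, not_and_or, not_le, not_le, lt_div_iff₀' hc, div_lt_iff₀' hc] at hx
  unfold plateau
  rcases hx with hx | hx
  · rw [Real.smoothTransition.zero_of_nonpos (by linarith),
      Real.smoothTransition.one_of_one_le (by linarith), zero_add, sub_self]
  · rw [Real.smoothTransition.one_of_one_le (by linarith),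
      Real.smoothTransition.zero_of_nonpos (by linarith), add_zero, sub_self]

lemma tsupport_deriv_plateau_subset (hc : 0 < c) :
    tsupport (deriv (plateau c p q)) ⊆
      Icc (p / c) ((p + 1) / c) ∪ Icc ((q - 1) / c) (q / c) := by
  refine closure_minimal (Function.support_subset_iff'.2 fun x hx => ?_)
    (isClosed_Icc.union isClosed_Icc)
  simp only [mem_union, mem_Icc, not_or, div_le_iff₀' hc, le_div_iff₀' hc] at hx
  simp only [deriv_plateau]
  rw [deriv_smoothTransition_eq_zero fun h => hx.1 ⟨by linarith [h.1], by linarith [h.2]⟩,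
    deriv_smoothTransition_eq_zero fun h => hx.2 ⟨by linarith [h.2], by linarith [h.1]⟩,
    sub_zero, mul_zero]

end plateau

lemma exists_isCutoff {a : ℝ} (ha : 0 < a) :
    ∃ K, ∀ m n : ℤ, m + 2 ≤ n → ∃ χ, IsCutoff a K m n χ := by
  obtain ⟨K₁, hK₁⟩ := isTestFunction_deriv_smoothTransition.exists_abs_le
  obtain ⟨K₂, hK₂⟩ := isTestFunction_deriv_smoothTransition.deriv.exists_abs_le
  have hK₁0 : 0 ≤ K₁ := (abs_nonneg _).trans (hK₁ 0)
  have hK₂0 : 0 ≤ K₂ := (abs_nonneg _).trans (hK₂ 0)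
  set c : ℝ := 3 / a
  have hc : 0 < c := by positivity
  refine ⟨2 * (c * K₁) + 2 * (c ^ 2 * K₂), fun m n hmn => ?_⟩
  have hmn' : (m : ℝ) + 2 ≤ n := by exact_mod_cast hmn
  have div_c : ∀ t, t / c = t / 3 * a := fun t => by simp only [c]; field_simp
  have supp := tsupport_plateau_subset (p := 3 * m + 1) (q := 3 * n - 1) hc (by linarith)
  refine ⟨plateau c (3 * m + 1) (3 * n - 1), ⟨contDiff_plateau,
      HasCompactSupport.of_support_subset_isCompact isCompact_Icc (subset_closure.trans supp)⟩,
    abs_plateau_le_one, fun x => ?_, fun x => ?_, supp.trans fun x hx => ?_,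
    (tsupport_deriv_plateau_subset hc).trans fun x hx => ?_, fun x hx => ?_⟩
  · rw [deriv_plateau, abs_mul, abs_of_pos hc]
    have := (abs_sub _ _).trans (add_le_add (hK₁ (c * x - (3 * m + 1))) (hK₁ (3 * n - 1 - c * x)))
    nlinarith [mul_nonneg (sq_nonneg c) hK₂0, mul_le_mul_of_nonneg_left this hc.le]
  · rw [deriv_deriv_plateau, abs_mul, abs_of_pos (pow_pos hc 2)]
    have := (abs_add_le _ _).trans
      (add_le_add (hK₂ (c * x - (3 * m + 1))) (hK₂ (3 * n - 1 - c * x)))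
    nlinarith [mul_nonneg hc.le hK₁0, mul_le_mul_of_nonneg_left this (sq_nonneg c)]
  · rw [div_c, div_c] at hx
    exact ⟨by nlinarith [hx.1], by nlinarith [hx.2]⟩
  · simp only [div_c] at hx
    refine hx.imp (fun hx => ⟨?_, ?_⟩) fun hx => ⟨?_, ?_⟩
    · nlinarith [hx.1]
    · nlinarith [hx.2]
    · push_cast; nlinarith [hx.1]
    · push_cast; nlinarith [hx.2]
  · have three : c * x * a = 3 * x := by simp only [c]; field_simp
    exact plateau_eq_one (by nlinarith [hx.1]) (by nlinarith [hx.2])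

namespace IsTestFunction

lemma mul {φ ψ : ℝ → ℝ} (hφ : IsTestFunction φ) (hψ : IsTestFunction ψ) :
    IsTestFunction fun x => φ x * ψ x :=
  ⟨hφ.contDiff.mul hψ.contDiff, hφ.hasCompactSupport.mul_right⟩

lemma integral_mul_deriv {φ G P : ℝ → ℝ} (hφ : IsTestFunction φ)
    (hG : ∀ x, HasDerivAt G (P x) x) (hP : Continuous P) :
    ∫ x, G x * _root_.deriv φ x = -∫ x, P x * φ x := by
  have cG : Continuous G := continuous_iff_continuousAt.2 fun x => (hG x).continuousAt
  exact integral_mul_deriv_eq_deriv_mul_of_integrable (fun x _ => hG x)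
    (fun x _ => hφ.hasDerivAt x)
    (hφ.deriv.integrable_mul cG.locallyIntegrable) (hφ.integrable_mul hP.locallyIntegrable)
    (hφ.integrable_mul cG.locallyIntegrable)

lemma mul_deriv_deriv {χ φ : ℝ → ℝ} (hχ : IsTestFunction χ) (hφ : IsTestFunction φ) (x : ℝ) :
    χ x * _root_.deriv (_root_.deriv φ) x = _root_.deriv (_root_.deriv fun y => χ y * φ y) x
      - 2 * _root_.deriv (fun y => _root_.deriv χ y * φ y) x
      + _root_.deriv (_root_.deriv χ) x * φ x := by
  have first : _root_.deriv (fun y => χ y * φ y)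
      = fun y => _root_.deriv χ y * φ y + χ y * _root_.deriv φ y :=
    funext fun y => ((hχ.hasDerivAt y).mul (hφ.hasDerivAt y)).deriv
  have hη : HasDerivAt (fun y => _root_.deriv χ y * φ y)
      (_root_.deriv (_root_.deriv χ) x * φ x + _root_.deriv χ x * _root_.deriv φ x) x :=
    (hχ.deriv.hasDerivAt x).mul (hφ.hasDerivAt x)
  have second : _root_.deriv (fun y => _root_.deriv χ y * φ y + χ y * _root_.deriv φ y) x
      = _root_.deriv (_root_.deriv χ) x * φ x + _root_.deriv χ x * _root_.deriv φ x
        + (_root_.deriv χ x * _root_.deriv φ x + χ x * _root_.deriv (_root_.deriv φ) x) :=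
    (hη.add ((hχ.hasDerivAt x).mul (hφ.deriv.hasDerivAt x))).deriv
  rw [first, second, hη.deriv]
  ring

end IsTestFunction

theorem IsWeakSol.cutoff {W g h G P χ : ℝ → ℝ} (e : IsWeakSol W g h) (hW : LocL2 W)
    (r : IsC1Rep W g h G P) (hχ : IsTestFunction χ) :
    IsWeakSol W (fun x => χ x * g x)
      fun x => χ x * h x - 2 * (deriv χ x * P x) - deriv (deriv χ) x * G x := by
  have mul_memLp : ∀ {ψ w : ℝ → ℝ}, IsTestFunction ψ → LocL2 w →
      MemLp (fun x => ψ x * w x) 2 volume := fun hψ hw => by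
    simpa only [mul_comm] using
      hw.memLp_mul_of_hasCompactSupport hψ.continuous hψ.hasCompactSupport
  have memG := mul_memLp hχ.deriv.deriv (locL2_of_continuous r.continuous)
  have memP := (mul_memLp hχ.deriv (locL2_of_continuous r.continuous_deriv)).const_mul 2
  have memh := mul_memLp hχ (locL2_of_memLp e.memLp_right)
  refine ⟨mul_memLp hχ (locL2_of_memLp e.memLp_left), (memh.sub memP).sub memG, fun φ hφ => ?_⟩
  have hψ := hχ.mul hφ
  have hη := hχ.deriv.mul hφ
  set ψ : ℝ → ℝ := fun x => χ x * φ x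
  set η : ℝ → ℝ := fun x => deriv χ x * φ x
  have expand : ∀ᵐ x, χ x * g x * (-(deriv (deriv φ) x) + W x * φ x)
      = g x * (-(deriv (deriv ψ) x) + W x * ψ x) + 2 * (G x * deriv η x)
        - deriv (deriv χ) x * G x * φ x := by
    filter_upwards [r.ae_eq] with x hx
    linear_combination (-g x) * hχ.mul_deriv_deriv hφ x + 2 * deriv η x * hx
      - deriv (deriv χ) x * φ x * hx
  have intL := integrable_mul_of_memLp_two e.memLp_left (hψ.memLp_schrodinger hW)
  have intη := (hη.deriv.integrable_mul r.continuous.locallyIntegrable).const_mul 2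
  have intLη : Integrable fun x =>
      g x * (-(deriv (deriv ψ) x) + W x * ψ x) + 2 * (G x * deriv η x) := intL.add intη
  have intG := integrable_mul_of_memLp_two memG hφ.memLp_two
  have intP := integrable_mul_of_memLp_two memP hφ.memLp_two
  have inth := integrable_mul_of_memLp_two memh hφ.memLp_two
  have inthP : Integrable fun x => χ x * h x * φ x - 2 * (deriv χ x * P x) * φ x := inth.sub intP
  have eq_h : ∫ x, h x * ψ x = ∫ x, χ x * h x * φ x :=
    integral_congr_ae (Eventually.of_forall fun x => by simp only [ψ]; ring)
  have eq_P : ∫ x, 2 * (deriv χ x * P x) * φ x = 2 * ∫ x, P x * η x := by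
    rw [← integral_const_mul]
    exact integral_congr_ae (Eventually.of_forall fun x => by simp only [η]; ring)
  calc _ = (∫ x, h x * ψ x) + 2 * -(∫ x, P x * η x) - ∫ x, deriv (deriv χ) x * G x * φ x := by
        rw [integral_congr_ae expand, integral_sub intLη intG, integral_add intL intη,
          integral_const_mul, e.weak ψ hψ, hη.integral_mul_deriv r.hasDerivAt r.continuous_deriv]
    _ = _ := by
        simp only [sub_mul]
        rw [integral_sub inthP intG, integral_sub inth intP, eq_h, eq_P]
        ring

/-! ### Truncation of solutions -/

lemma block_subset_Ico {a : ℝ} (ha : 0 < a) {m n j : ℤ} (hmj : m ≤ j) (hjn : j < n) :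
    block a j ⊆ Ico (m * a) (n * a) := by
  rw [Ico_eq_biUnion_block ha]
  exact subset_biUnion_of_mem (u := fun j => block a j) (by simpa using ⟨hmj, hjn⟩)

lemma integral_eq_sum_block {a : ℝ} (ha : 0 < a) {f : ℝ → ℝ} {m n : ℤ} (hf : Integrable f)
    (hzero : ∀ x, x ∉ Ico (m * a) (n * a) → f x = 0) :
    ∫ x, f x = ∑ j ∈ Finset.Ico m n, ∫ x in block a j, f x := by
  rw [← setIntegral_Ico_eq_sum_block ha m n fun j => hf.integrableOn,
    setIntegral_eq_integral_of_forall_compl_eq_zero hzero]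

namespace IsCutoff

variable {a K M : ℝ} {m n : ℤ} {χ W g h G P : ℝ → ℝ}

lemma eq_zero (hχ : IsCutoff a K m n χ) {x : ℝ} (hx : x ∉ Ico (m * a) (n * a)) :
    χ x = 0 ∧ deriv χ x = 0 ∧ deriv (deriv χ) x = 0 := by
  have hx' : x ∉ tsupport χ := fun h => hx (hχ.tsupport_subset h)
  have hx'' : x ∉ tsupport (deriv χ) := fun h => hx' (_root_.tsupport_deriv_subset h)
  exact ⟨image_eq_zero_of_notMem_tsupport hx', image_eq_zero_of_notMem_tsupport hx'',
    image_eq_zero_of_notMem_tsupport fun h => hx'' (_root_.tsupport_deriv_subset h)⟩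

lemma eq_one_on_block (hχ : IsCutoff a K m n χ) (ha : 0 < a) {j : ℤ} (hmj : m < j)
    (hjn : j < n - 1) {x : ℝ} (hx : x ∈ block a j) :
    χ x = 1 ∧ deriv χ x = 0 ∧ deriv (deriv χ) x = 0 := by
  have hx' : x ∉ tsupport (deriv χ) := fun h => by
    rcases hχ.tsupport_deriv_subset h with h | h
    · exact ((pairwise_disjoint_block ha hmj.ne).le_bot ⟨h, hx⟩).elim
    · exact ((pairwise_disjoint_block ha hjn.ne).le_bot ⟨hx, h⟩).elim
  have one := block_subset_Ico ha (m := m + 1) (n := n - 1) hmj hjn hx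
  push_cast at one
  exact ⟨hχ.eq_one x one, image_eq_zero_of_notMem_tsupport hx',
    image_eq_zero_of_notMem_tsupport fun h => hx' (_root_.tsupport_deriv_subset h)⟩

lemma sq_error_le (hχ : IsCutoff a K m n χ) (x : ℝ) {w y z t : ℝ} (hy : y ^ 2 ≤ t)
    (hz : z ^ 2 ≤ t) :
    (χ x * w - 2 * (deriv χ x * y) - deriv (deriv χ) x * z) ^ 2
      ≤ 3 * w ^ 2 + 15 * (K ^ 2 * t) := by
  have abs₀ := abs_le.1 (hχ.abs_le_one x)
  have abs₁ := abs_le.1 (hχ.abs_deriv_le x)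
  have abs₂ := abs_le.1 (hχ.abs_deriv_deriv_le x)
  have first : (χ x * w) ^ 2 ≤ w ^ 2 := by
    rw [mul_pow]
    exact mul_le_of_le_one_left (sq_nonneg w) (by nlinarith)
  have second : (deriv χ x * y) ^ 2 ≤ K ^ 2 * t := by
    rw [mul_pow]
    exact mul_le_mul (sq_le_sq' abs₁.1 abs₁.2) hy (sq_nonneg _) (sq_nonneg _)
  have third : (deriv (deriv χ) x * z) ^ 2 ≤ K ^ 2 * t := by
    rw [mul_pow]
    exact mul_le_mul (sq_le_sq' abs₂.1 abs₂.2) hz (sq_nonneg _) (sq_nonneg _)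
  nlinarith [sq_nonneg (χ x * w + 2 * (deriv χ x * y)),
    sq_nonneg (χ x * w + deriv (deriv χ) x * z),
    sq_nonneg (2 * (deriv χ x * y) - deriv (deriv χ) x * z)]

lemma setIntegral_sq_error_le (hχ : IsCutoff a K m n χ) (hW : UnifLocL2 a W M)
    (e : IsWeakSol W g h) (r : IsC1Rep W g h G P) (j : ℤ) :
    ∫ x in block a j, (χ x * h x - 2 * (deriv χ x * P x) - deriv (deriv χ) x * G x) ^ 2
      ≤ 3 * (∫ x in block a j, h x ^ 2)
        + 15 * K ^ 2 * a * sobolevConst a M * graphNormSqOn (block a j) g h := by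
  have : IsFiniteMeasure (volume.restrict (block a j)) := ⟨by simp [block]⟩
  set T := graphNormSqOn (block a j) g h
  have inth : IntegrableOn (fun x => 3 * h x ^ 2) (block a j) :=
    (e.memLp_right.integrable_sq.const_mul 3).integrableOn
  have intT : IntegrableOn (fun _ => 15 * (K ^ 2 * (sobolevConst a M * T))) (block a j) :=
    integrable_const _
  have intk := (e.cutoff hW.locL2 r hχ.isTestFunction).memLp_right.integrable_sq
  calc _ ≤ ∫ x in block a j, (3 * h x ^ 2 + 15 * (K ^ 2 * (sobolevConst a M * T))) :=
        setIntegral_mono_on intk.integrableOn (inth.add intT) (measurableSet_block a j)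
          fun x hx => by
            obtain ⟨hG, hP⟩ := r.sq_le_graphNormSqOn hW e (block_subset_Icc a j hx)
            exact hχ.sq_error_le x hP hG
    _ = _ := by
        rw [integral_add inth intT, integral_const_mul, integral_const,
          measureReal_restrict_apply_univ, volume_real_block hW.scale_pos, smul_eq_mul]
        ring

end IsCutoff

lemma sum_Ico_le_of_le_of_interior_le {m n : ℤ} (hmn : m + 2 ≤ n) {C : ℝ} (hC : 1 ≤ C)
    {κ η γ : ℤ → ℝ} (hη : ∀ j, 0 ≤ η j) (hγ : ∀ j, 0 ≤ γ j)
    (general : ∀ j, κ j ≤ C * (η j + γ j)) (interior : ∀ j, m < j → j < n - 1 → κ j ≤ η j) :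
    ∑ j ∈ Finset.Ico m n, κ j ≤ C * (∑ j ∈ Finset.Ico m n, η j + γ m + γ (n - 1)) := by
  have hC0 : 0 ≤ C := zero_le_one.trans hC
  have each : ∀ j ∈ Finset.Ico m n,
      κ j ≤ C * (η j + (if j = m then γ j else 0) + if j = n - 1 then γ j else 0) := fun j hj => by
    rw [Finset.mem_Ico] at hj
    by_cases hjm : j = m
    · refine (general j).trans (mul_le_mul_of_nonneg_left ?_ hC0)
      rw [if_pos hjm]
      split_ifs <;> linarith [hγ j]
    by_cases hjn : j = n - 1
    · rw [if_neg hjm, if_pos hjn, add_zero]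
      exact general j
    · rw [if_neg hjm, if_neg hjn, add_zero, add_zero]
      exact (interior j (by omega) (by omega)).trans (le_mul_of_one_le_left (hη j) hC)
  refine (Finset.sum_le_sum each).trans_eq ?_
  rw [← Finset.mul_sum, Finset.sum_add_distrib, Finset.sum_add_distrib, Finset.sum_ite_eq',
    Finset.sum_ite_eq', if_pos (by rw [Finset.mem_Ico]; omega),
    if_pos (by rw [Finset.mem_Ico]; omega)]

theorem exists_truncation {a : ℝ} (ha : 0 < a) (M : ℝ) : ∃ C : ℝ, 1 ≤ C ∧
    ∀ {W g h : ℝ → ℝ}, UnifLocL2 a W M → IsWeakSol W g h → ∀ m n : ℤ, m + 2 ≤ n →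
    ∃ u k : ℝ → ℝ, IsWeakSol W u k ∧
      (∀ x, x ∉ Ico (m * a) (n * a) → u x = 0 ∧ k x = 0) ∧
      ∑ j ∈ Finset.Ico (m + 1) (n - 1), ∫ x in block a j, g x ^ 2 ≤ ∫ x, u x ^ 2 ∧
      ∫ x, k x ^ 2 ≤ C * (∑ j ∈ Finset.Ico m n, (∫ x in block a j, h x ^ 2)
        + (∫ x in block a m, g x ^ 2) + ∫ x in block a (n - 1), g x ^ 2) := by
  obtain ⟨K, hcutoff⟩ := exists_isCutoff ha
  have hS := (sobolevConst_pos ha M).le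
  have hC : 0 ≤ 15 * K ^ 2 * a * sobolevConst a M := by positivity
  refine ⟨3 + 15 * K ^ 2 * a * sobolevConst a M, by linarith,
    fun {W g h} hW e m n hmn => ?_⟩
  obtain ⟨G, P, r⟩ := e.exists_isC1Rep hW.locL2
  obtain ⟨χ, hχ⟩ := hcutoff m n hmn
  have e' := e.cutoff hW.locL2 r hχ.isTestFunction
  have off : ∀ x, x ∉ Ico (m * a) (n * a) → χ x * g x = 0 ∧
      χ x * h x - 2 * (deriv χ x * P x) - deriv (deriv χ) x * G x = 0 := fun x hx => by
    obtain ⟨h₀, h₁, h₂⟩ := hχ.eq_zero hx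
    simp [h₀, h₁, h₂]
  refine ⟨_, _, e', off, ?_, ?_⟩
  · rw [integral_eq_sum_block ha (m := m) (n := n) e'.memLp_left.integrable_sq
      fun x hx => by rw [(off x hx).1, sq, zero_mul]]
    refine (Finset.sum_congr rfl fun j hj => ?_).trans_le
      (Finset.sum_le_sum_of_subset_of_nonneg (Finset.Ico_subset_Ico (by omega) (by omega))
        fun j _ _ => integral_nonneg fun _ => sq_nonneg _)
    rw [Finset.mem_Ico] at hj
    refine setIntegral_congr_fun (measurableSet_block a j) fun x hx => ?_
    simp only [(hχ.eq_one_on_block ha hj.1 hj.2 hx).1, one_mul]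
  · rw [integral_eq_sum_block ha (m := m) (n := n) e'.memLp_right.integrable_sq
      fun x hx => by rw [(off x hx).2, sq, zero_mul]]
    have hh : ∀ j, 0 ≤ ∫ x in block a j, h x ^ 2 := fun j => integral_nonneg fun _ => sq_nonneg _
    have hg : ∀ j, 0 ≤ ∫ x in block a j, g x ^ 2 := fun j => integral_nonneg fun _ => sq_nonneg _
    refine sum_Ico_le_of_le_of_interior_le hmn (by linarith) hh hg (fun j => ?_)
      fun j hmj hjn => (setIntegral_congr_fun (measurableSet_block a j) fun x hx => ?_).le
    · refine (hχ.setIntegral_sq_error_le hW e r j).trans ?_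
      unfold graphNormSqOn
      linarith [hh j, hg j]
    · obtain ⟨h₀, h₁, h₂⟩ := hχ.eq_one_on_block ha hmj hjn hx
      simp [h₀, h₁, h₂]

/-! ### Symmetry of the maximal operator -/

namespace IsC1Rep

variable {a M : ℝ} {W g h g' h' G P G' P' Q Q' : ℝ → ℝ}

lemma intervalIntegrable (r : IsC1Rep W g h G P) (hW : LocL2 W) (e : IsWeakSol W g h) (s t : ℝ) :
    IntervalIntegrable (fun x => W x * G x - h x) volume s t :=
  ((r.locallyIntegrable hW e).integrableOn_isCompact isCompact_uIcc).intervalIntegrable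

lemma eq_add_integral (r : IsC1Rep W g h G P) (s : ℝ) :
    P = fun x => P s + ∫ y in s..x, (W y * G y - h y) :=
  funext fun x => by rw [r.integral_eq, add_sub_cancel]

lemma absolutelyContinuousOnInterval_deriv (r : IsC1Rep W g h G P) (hW : LocL2 W)
    (e : IsWeakSol W g h) (s t : ℝ) : AbsolutelyContinuousOnInterval P s t := by
  rw [r.eq_add_integral s]
  exact (LipschitzWith.const (P s)).lipschitzOnWith.absolutelyContinuousOnInterval.fun_add <|
    (r.intervalIntegrable hW e s t).absolutelyContinuousOnInterval_intervalIntegral left_mem_uIcc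

lemma ae_deriv_deriv_eq (r : IsC1Rep W g h G P) (hW : LocL2 W) (e : IsWeakSol W g h) :
    ∀ᵐ x, deriv P x = W x * G x - h x := by
  filter_upwards [LocallyIntegrable.ae_hasDerivAt_integral (r.locallyIntegrable hW e)] with x hx
  rw [r.eq_add_integral 0]
  exact ((hx 0).const_add (P 0)).deriv

lemma integral_mul_add_mul_eq_sub (r : IsC1Rep W g h G P) (hW : LocL2 W) (e : IsWeakSol W g h)
    (hQ : ∀ x, HasDerivAt Q (Q' x) x) (hQ' : Continuous Q') (s t : ℝ) :
    ∫ x in s..t, ((W x * G x - h x) * Q x + P x * Q' x) = P t * Q t - P s * Q s := by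
  have deriv_Q : deriv Q = Q' := funext fun x => (hQ x).deriv
  have smooth_Q : ContDiff ℝ 1 Q :=
    contDiff_one_iff_deriv.2 ⟨fun x => (hQ x).differentiableAt, deriv_Q ▸ hQ'⟩
  rw [← (r.absolutelyContinuousOnInterval_deriv hW e s t).integral_deriv_mul_eq_sub
    smooth_Q.contDiffOn.absolutelyContinuousOnInterval]
  refine intervalIntegral.integral_congr_ae ?_
  filter_upwards [r.ae_deriv_deriv_eq hW e] with x hx _
  rw [hx, deriv_Q]

lemma integral_sub_eq_wronskian_sub (r : IsC1Rep W g h G P) (r' : IsC1Rep W g' h' G' P')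
    (hW : LocL2 W) (e : IsWeakSol W g h) (e' : IsWeakSol W g' h') (s t : ℝ) :
    ∫ x in s..t, (g x * h' x - h x * g' x)
      = (P t * G' t - P' t * G t) - (P s * G' s - P' s * G s) := by
  have int₁ : IntervalIntegrable
      (fun x => (W x * G x - h x) * G' x + P x * P' x) volume s t :=
    ((r.intervalIntegrable hW e s t).mul_continuousOn r'.continuous.continuousOn).add
      ((r.continuous_deriv.mul r'.continuous_deriv).intervalIntegrable _ _)
  have int₂ : IntervalIntegrable
      (fun x => (W x * G' x - h' x) * G x + P' x * P x) volume s t :=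
    ((r'.intervalIntegrable hW e' s t).mul_continuousOn r.continuous.continuousOn).add
      ((r'.continuous_deriv.mul r.continuous_deriv).intervalIntegrable _ _)
  calc ∫ x in s..t, (g x * h' x - h x * g' x)
      = ∫ x in s..t, (((W x * G x - h x) * G' x + P x * P' x)
          - ((W x * G' x - h' x) * G x + P' x * P x)) := by
        refine intervalIntegral.integral_congr_ae ?_
        filter_upwards [r.ae_eq, r'.ae_eq] with x hx hx' _
        rw [hx, hx']
        ring
    _ = _ := by
        rw [intervalIntegral.integral_sub int₁ int₂,
          r.integral_mul_add_mul_eq_sub hW e r'.hasDerivAt r'.continuous_deriv,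
          r'.integral_mul_add_mul_eq_sub hW e' r.hasDerivAt r.continuous_deriv]
        ring

lemma tendsto_cofinite_zero (r : IsC1Rep W g h G P) (hW : UnifLocL2 a W M)
    (e : IsWeakSol W g h) :
    Tendsto (fun j : ℤ => G (j * a)) cofinite (𝓝 0) ∧
      Tendsto (fun j : ℤ => P (j * a)) cofinite (𝓝 0) := by
  have of_sq_le : ∀ {F : ℤ → ℝ},
      (∀ j, F j ^ 2 ≤ sobolevConst a M * graphNormSqOn (block a j) g h) →
        Tendsto F cofinite (𝓝 0) := fun {F} hF => by
    have sum := (e.hasSum_graphNormSqOn_block hW.scale_pos).summable.mul_left (sobolevConst a M)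
    have sqrt_lim := (Real.continuous_sqrt.tendsto 0).comp sum.tendsto_cofinite_zero
    rw [Real.sqrt_zero] at sqrt_lim
    exact squeeze_zero_norm (fun j => Real.abs_le_sqrt (hF j)) sqrt_lim
  have mem : ∀ j : ℤ, (j * a : ℝ) ∈ Icc (j * a) (j * a + a) := fun j =>
    left_mem_Icc.2 (le_add_of_nonneg_right hW.scale_pos.le)
  exact ⟨of_sq_le fun j => (r.sq_le_graphNormSqOn hW e (mem j)).1,
    of_sq_le fun j => (r.sq_le_graphNormSqOn hW e (mem j)).2⟩

end IsC1Rep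

theorem IsWeakSol.integral_mul_comm {a M : ℝ} {W g h g' h' : ℝ → ℝ} (e : IsWeakSol W g h)
    (e' : IsWeakSol W g' h') (hW : UnifLocL2 a W M) :
    ∫ x, g x * h' x = ∫ x, h x * g' x := by
  obtain ⟨G, P, r⟩ := e.exists_isC1Rep hW.locL2
  obtain ⟨G', P', r'⟩ := e'.exists_isC1Rep hW.locL2
  have int_gh := integrable_mul_of_memLp_two e.memLp_left e'.memLp_right
  have int_hg := integrable_mul_of_memLp_two e.memLp_right e'.memLp_left
  have integral_lim : Tendsto (fun n : ℕ => ∫ x in (-(n * a))..(n * a), (g x * h' x - h x * g' x))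
      atTop (𝓝 (∫ x, (g x * h' x - h x * g' x))) := by
    have lim : Tendsto (fun n : ℕ => (n : ℝ) * a) atTop atTop :=
      tendsto_natCast_atTop_atTop.atTop_mul_const hW.scale_pos
    exact intervalIntegral_tendsto_integral (int_gh.sub int_hg)
      (tendsto_neg_atTop_atBot.comp lim) lim
  have wronskian_lim : Tendsto (fun j : ℤ => P (j * a) * G' (j * a) - P' (j * a) * G (j * a))
      cofinite (𝓝 0) := by
    obtain ⟨limG, limP⟩ := r.tendsto_cofinite_zero hW e
    obtain ⟨limG', limP'⟩ := r'.tendsto_cofinite_zero hW e'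
    simpa using (limP.mul limG').sub (limP'.mul limG)
  have cast_lim : Tendsto (fun n : ℕ => (n : ℤ)) atTop cofinite :=
    Nat.cofinite_eq_atTop ▸ (Nat.cast_injective (R := ℤ)).tendsto_cofinite
  have neg_lim : Tendsto (fun n : ℕ => -(n : ℤ)) atTop cofinite :=
    neg_injective.tendsto_cofinite.comp cast_lim
  have boundary_lim := (wronskian_lim.comp cast_lim).sub (wronskian_lim.comp neg_lim)
  rw [sub_zero] at boundary_lim
  rw [← sub_eq_zero, ← integral_sub int_gh int_hg]
  refine tendsto_nhds_unique integral_lim (boundary_lim.congr fun n => ?_)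
  rw [r.integral_sub_eq_wronskian_sub r' hW.locL2 e e']
  simp only [Function.comp_apply, Int.cast_neg, Int.cast_natCast, neg_mul]

/-! ### Uniformly locally square integrable potentials -/

lemma IsWeakSol.comp_sub {W g h : ℝ → ℝ} (e : IsWeakSol W g h) (τ : ℝ) :
    IsWeakSol (fun x => W (x - τ)) (fun x => g (x - τ)) fun x => h (x - τ) := by
  have mp := measurePreserving_sub_right (volume : Measure ℝ) τ
  refine ⟨e.memLp_left.comp_measurePreserving mp, e.memLp_right.comp_measurePreserving mp,
    fun φ hφ => ?_⟩
  have hψ : IsTestFunction fun x => φ (x + τ) :=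
    ⟨hφ.contDiff.comp (contDiff_id.add contDiff_const),
      hφ.hasCompactSupport.comp_homeomorph (Homeomorph.addRight τ)⟩
  have deriv_eq : deriv (fun x => φ (x + τ)) = fun x => deriv φ (x + τ) :=
    funext fun x => deriv_comp_add_const φ τ x
  have weak := e.weak _ hψ
  rw [deriv_eq] at weak
  simp only [deriv_comp_add_const] at weak
  rw [← integral_sub_right_eq_self _ τ,
    ← integral_sub_right_eq_self (fun x => h x * φ (x + τ)) τ] at weak
  simpa only [sub_add_cancel] using weak

lemma measurePreserving_sub_block (a : ℝ) (n j : ℤ) :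
    MeasurePreserving (fun x : ℝ => x - n * a) (volume.restrict (block a j))
      (volume.restrict (block a (j - n))) := by
  have preimage : (fun x : ℝ => x - n * a) ⁻¹' block a (j - n) = block a j := by
    ext x
    simp only [block, mem_preimage, mem_Ico]
    push_cast
    constructor <;> rintro ⟨h₁, h₂⟩ <;> constructor <;> linarith
  rw [← preimage]
  exact (measurePreserving_sub_right volume (n * a)).restrict_preimage (measurableSet_block a _)

namespace UnifLocL2

variable {a M M' δ E : ℝ} {W D : ℝ → ℝ}

lemma comp_sub (h : UnifLocL2 a W M) (n : ℤ) : UnifLocL2 a (fun x => W (x - n * a)) M where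
  scale_pos := h.scale_pos
  bound_nonneg := h.bound_nonneg
  memLp j := (h.memLp (j - n)).comp_measurePreserving (measurePreserving_sub_block a n j)
  integral_sq_le j := by
    have emb : MeasurableEmbedding fun x : ℝ => x - n * a :=
      (MeasurableEquiv.subRight ((n : ℝ) * a)).measurableEmbedding
    rw [(measurePreserving_sub_block a n j).integral_comp emb fun x => W x ^ 2]
    exact h.integral_sq_le _

lemma mono (h : UnifLocL2 a W M) (hM : M ≤ M') : UnifLocL2 a W M' where
  scale_pos := h.scale_pos
  bound_nonneg := h.bound_nonneg.trans hM
  memLp := h.memLp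
  integral_sq_le j := (h.integral_sq_le j).trans (pow_le_pow_left₀ h.bound_nonneg hM 2)

lemma add (h : UnifLocL2 a W M) (hD : UnifLocL2 a D δ) :
    UnifLocL2 a (fun x => W x + D x) (2 * (M + δ)) where
  scale_pos := h.scale_pos
  bound_nonneg := mul_nonneg zero_le_two (add_nonneg h.bound_nonneg hD.bound_nonneg)
  memLp j := (h.memLp j).add (hD.memLp j)
  integral_sq_le j := by
    have intW := (h.memLp j).integrable_sq.const_mul 2
    have intD := (hD.memLp j).integrable_sq.const_mul 2
    calc ∫ x in block a j, (W x + D x) ^ 2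
        ≤ ∫ x in block a j, (2 * W x ^ 2 + 2 * D x ^ 2) :=
          integral_mono ((h.memLp j).add (hD.memLp j)).integrable_sq (intW.add intD) fun x => by
            dsimp only
            nlinarith [sq_nonneg (W x - D x)]
      _ = 2 * (∫ x in block a j, W x ^ 2) + 2 * ∫ x in block a j, D x ^ 2 := by
          rw [integral_add intW intD, integral_const_mul, integral_const_mul]
      _ ≤ (2 * (M + δ)) ^ 2 := by
          nlinarith [h.integral_sq_le j, hD.integral_sq_le j,
            mul_nonneg h.bound_nonneg hD.bound_nonneg]

lemma const (ha : 0 < a) (E : ℝ) : UnifLocL2 a (fun _ => E) ((1 + a) * |E|) where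
  scale_pos := ha
  bound_nonneg := by positivity
  memLp j :=
    have : IsFiniteMeasure (volume.restrict (block a j)) := ⟨by simp [block]⟩
    memLp_const E
  integral_sq_le j := by
    rw [integral_const, measureReal_restrict_apply_univ, volume_real_block ha, smul_eq_mul,
      mul_pow, sq_abs]
    exact mul_le_mul_of_nonneg_right (by nlinarith) (sq_nonneg E)

lemma sub_const (h : UnifLocL2 a W M) (E : ℝ) :
    UnifLocL2 a (fun x => W x - E) (2 * (M + (1 + a) * |E|)) := by
  simpa only [sub_eq_add_neg, abs_neg] using h.add (const h.scale_pos (-E))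

end UnifLocL2

lemma integral_sq_eq_norm_sq {α : Type*} [MeasurableSpace α] {μ : Measure α} (f : Lp ℝ 2 μ) :
    ∫ x, f x ^ 2 ∂μ = ‖f‖ ^ 2 := by
  rw [← real_inner_self_eq_norm_sq, L2.inner_def]
  exact integral_congr_ae (Eventually.of_forall fun x => by simp [sq])

section Concatenation

variable {a δ M : ℝ}

lemma aggC_of_mem_block (ha : 0 < a) (y : ℤ → L2I a) {j : ℤ} {x : ℝ} (hx : x ∈ block a j) :
    aggC a y x = y j (x - j * a) := by
  unfold aggC
  rw [(mem_block_iff_floor_eq ha).1 hx]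

lemma unifLocL2_of_translates (ha : 0 < a) (hM : 0 ≤ M) {W : ℝ → ℝ} (f : ℤ → L2I a)
    (hf : ∀ j, ‖f j‖ ≤ M) (hW : ∀ j, (fun x => W x) =ᵐ[volume.restrict (block a j)]
      fun x => f j (x - j * a)) : UnifLocL2 a W M := by
  have mp : ∀ j : ℤ, MeasurePreserving (fun x : ℝ => x - j * a) (volume.restrict (block a j))
      (volume.restrict (Ico 0 a)) := fun j => by
    simpa [block] using measurePreserving_sub_block a j j
  refine ⟨ha, hM, fun j => ?_, fun j => ?_⟩
  · exact ((Lp.memLp (f j)).comp_measurePreserving (mp j)).ae_eq (hW j).symm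
  · have emb : MeasurableEmbedding fun x : ℝ => x - j * a :=
      (MeasurableEquiv.subRight ((j : ℝ) * a)).measurableEmbedding
    have sq_eq : (fun x => W x ^ 2) =ᵐ[volume.restrict (block a j)]
        fun x => f j (x - j * a) ^ 2 := (hW j).fun_comp (· ^ 2)
    rw [integral_congr_ae sq_eq, (mp j).integral_comp emb fun x => f j x ^ 2,
      integral_sq_eq_norm_sq]
    exact pow_le_pow_left₀ (norm_nonneg _) (hf j) 2

lemma unifLocL2_aggC (ha : 0 < a) (hM : 0 ≤ M) (y : ℤ → L2I a) (hy : ∀ j, ‖y j‖ ≤ M) :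
    UnifLocL2 a (aggC a y) M :=
  unifLocL2_of_translates ha hM y hy fun j =>
    (ae_restrict_iff' (measurableSet_block a j)).2 <|
      Eventually.of_forall fun _ hx => aggC_of_mem_block ha y hx

lemma unifLocL2_aggC_sub (ha : 0 < a) (hδ : 0 ≤ δ) (y y' : ℤ → L2I a)
    (h : ∀ j, ‖y j - y' j‖ ≤ δ) : UnifLocL2 a (fun x => aggC a y x - aggC a y' x) δ := by
  refine unifLocL2_of_translates ha hδ (fun j => y j - y' j) h fun j => ?_
  have mp : MeasurePreserving (fun x : ℝ => x - j * a) (volume.restrict (block a j))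
      (volume.restrict (Ico 0 a)) := by
    simpa [block] using measurePreserving_sub_block a j j
  filter_upwards [mp.quasiMeasurePreserving.ae (Lp.coeFn_sub (y j) (y' j)),
    ae_restrict_mem (measurableSet_block a j)] with x hx hmem
  rw [aggC_of_mem_block ha y hmem, aggC_of_mem_block ha y' hmem]
  exact hx.symm

lemma aggC_sub_mul (ha : 0 < a) (y : ℤ → L2I a) (n : ℤ) (x : ℝ) :
    aggC a y (x - n * a) = aggC a (fun j => y (j - n)) x := by
  have floor_eq : ⌊(x - n * a) / a⌋ = ⌊x / a⌋ - n := by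
    rw [sub_div, mul_div_cancel_right₀ _ ha.ne', Int.floor_sub_intCast]
  have arg_eq : x - n * a - (⌊x / a⌋ - n : ℤ) * a = x - ⌊x / a⌋ * a := by
    push_cast
    ring
  unfold aggC
  rw [floor_eq, arg_eq]

end Concatenation

/-! ### Lower bounds -/

/-- `‖(-d²/dx² + W) g‖² ≥ c ‖g‖²` on the maximal domain. For `c > 0` this says that `0` is not in
the spectrum, and unlike the inverse it is compared easily between two potentials. -/
def IsBoundedBelow (W : ℝ → ℝ) (c : ℝ) : Prop :=
  ∀ g h, IsWeakSol W g h → c * ∫ x, g x ^ 2 ≤ ∫ x, h x ^ 2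

namespace IsBoundedBelow

variable {c c' : ℝ} {W : ℝ → ℝ}

lemma mono (hW : IsBoundedBelow W c) (hc : c' ≤ c) : IsBoundedBelow W c' := fun g h e =>
  (mul_le_mul_of_nonneg_right hc (integral_nonneg fun _ => sq_nonneg _)).trans (hW g h e)

lemma comp_sub (hW : IsBoundedBelow W c) (τ : ℝ) : IsBoundedBelow (fun x => W (x - τ)) c := by
  intro g h e
  have bound := hW _ _ <| by
    simpa only [sub_neg_eq_add, add_sub_cancel_right] using e.comp_sub (-τ)
  rwa [integral_add_right_eq_self (fun x => g x ^ 2) τ,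
    integral_add_right_eq_self (fun x => h x ^ 2) τ] at bound

lemma comp_sub_iff (τ : ℝ) : IsBoundedBelow (fun x => W (x - τ)) c ↔ IsBoundedBelow W c :=
  ⟨fun h => by simpa only [sub_neg_eq_add, add_sub_cancel_right] using h.comp_sub (-τ),
    fun h => h.comp_sub τ⟩

end IsBoundedBelow

lemma integral_sub_sq_le {f g : ℝ → ℝ} (hf : MemLp f 2 volume) (hg : MemLp g 2 volume) :
    ∫ x, (f x - g x) ^ 2 ≤ 2 * (∫ x, f x ^ 2) + 2 * ∫ x, g x ^ 2 := by
  have intf := hf.integrable_sq.const_mul 2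
  have intg := hg.integrable_sq.const_mul 2
  rw [← integral_const_mul, ← integral_const_mul, ← integral_add intf intg]
  refine integral_mono (hf.sub hg).integrable_sq (intf.add intg) fun x => ?_
  dsimp only
  nlinarith [sq_nonneg (f x + g x)]

theorem exists_isBoundedBelow_add {a M c : ℝ} (ha : 0 < a) (hc : 0 < c) :
    ∃ δ > 0, ∃ c' > 0, ∀ W D, UnifLocL2 a W M → UnifLocL2 a D δ → IsBoundedBelow W c →
      IsBoundedBelow (fun x => W x + D x) c' := by
  set L := sobolevConst a (2 * (M + 1))
  have hL : 0 < L := sobolevConst_pos ha _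
  set δ := min 1 √(c / (4 * L))
  have hLδ : L * δ ^ 2 ≤ c / 4 := by
    have hδ_sq : δ ^ 2 ≤ c / (4 * L) :=
      (Real.le_sqrt (by positivity) (by positivity)).1 (min_le_right _ _)
    calc L * δ ^ 2 ≤ L * (c / (4 * L)) := mul_le_mul_of_nonneg_left hδ_sq hL.le
      _ = c / 4 := by field_simp
  refine ⟨δ, by positivity, c / 2 / (2 + c / 2), by positivity, fun W D hW hD hlb g h e => ?_⟩
  have hWD : UnifLocL2 a (fun x => W x + D x) (2 * (M + 1)) :=
    (hW.add hD).mono (by linarith [min_le_left 1 √(c / (4 * L))])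
  obtain ⟨memDg, boundDg⟩ := e.memLp_mul_and_integral_sq_le hWD hD
  have e' : IsWeakSol W g fun x => h x - D x * g x := by
    have memNeg : MemLp (fun x => -D x * g x) 2 volume := by
      simp only [neg_mul]
      exact memDg.neg
    refine (e.add_potential hWD.locL2 memNeg).congr ?_ (ae_eq_refl _) ?_ <;>
      exact Eventually.of_forall fun x => by ring
  have lower := hlb _ _ e'
  have upper := integral_sub_sq_le e.memLp_right memDg
  set N := ∫ x, g x ^ 2
  set H := ∫ x, h x ^ 2
  have hN : 0 ≤ N := integral_nonneg fun _ => sq_nonneg _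
  have hH : 0 ≤ H := integral_nonneg fun _ => sq_nonneg _
  have absorb := mul_le_mul_of_nonneg_right hLδ (add_nonneg hN hH)
  rw [div_mul_eq_mul_div, div_le_iff₀ (by positivity)]
  linarith

/-! ### The resolvent -/

lemma inner_eq_integral_mul (f g : L2R) : inner ℝ f g = ∫ x, f x * g x := by
  rw [L2.inner_def]
  exact integral_congr_ae (Eventually.of_forall fun x => by simp [mul_comm])

lemma inner_toLp_eq_integral_mul (f : L2R) {g : ℝ → ℝ} (hg : MemLp g 2 volume) :
    inner ℝ f (hg.toLp g) = ∫ x, f x * g x := by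
  rw [inner_eq_integral_mul]
  exact integral_congr_ae (hg.coeFn_toLp.mono fun x hx => by simp only [hx])

lemma norm_toLp_sq_eq_integral_sq {g : ℝ → ℝ} (hg : MemLp g 2 volume) :
    ‖hg.toLp g‖ ^ 2 = ∫ x, g x ^ 2 := by
  rw [← integral_sq_eq_norm_sq]
  exact integral_congr_ae (hg.coeFn_toLp.mono fun x hx => by simp only [hx])

lemma IsWeakSol.toLp {W g h : ℝ → ℝ} (e : IsWeakSol W g h) :
    IsWeakSol W (e.memLp_left.toLp g) (e.memLp_right.toLp h) :=
  e.congr (ae_eq_refl _) e.memLp_left.coeFn_toLp.symm e.memLp_right.coeFn_toLp.symm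

lemma IsTestFunction.isWeakSol {W φ : ℝ → ℝ} (hφ : IsTestFunction φ) (hW : LocL2 W) :
    IsWeakSol W φ fun x => -(_root_.deriv (_root_.deriv φ) x) + W x * φ x := by
  refine ⟨hφ.memLp_two, hφ.memLp_schrodinger hW, fun ψ hψ => ?_⟩
  have by_parts : ∫ x, φ x * _root_.deriv (_root_.deriv ψ) x
      = ∫ x, _root_.deriv (_root_.deriv φ) x * ψ x := by
    rw [hψ.deriv.integral_mul_deriv hφ.hasDerivAt hφ.deriv.continuous,
      hψ.integral_mul_deriv hφ.deriv.hasDerivAt hφ.deriv.deriv.continuous, neg_neg]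
  have int_pot : Integrable fun x => W x * φ x * ψ x := integrable_mul_of_memLp_two
    (hW.memLp_mul_of_hasCompactSupport hφ.continuous hφ.hasCompactSupport) hψ.memLp_two
  have int_left := integrable_mul_of_memLp_two hφ.memLp_two hψ.deriv.deriv.memLp_two
  have int_right := integrable_mul_of_memLp_two hφ.deriv.deriv.memLp_two hψ.memLp_two
  calc ∫ x, φ x * (-(_root_.deriv (_root_.deriv ψ) x) + W x * ψ x)
      = ∫ x, (W x * φ x * ψ x - φ x * _root_.deriv (_root_.deriv ψ) x) := by
        congr 1 with x
        ring
    _ = ∫ x, (W x * φ x * ψ x - _root_.deriv (_root_.deriv φ) x * ψ x) := by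
        rw [integral_sub int_pot int_left, integral_sub int_pot int_right, by_parts]
    _ = _ := by
        congr 1 with x
        ring

/-- The graph of the maximal operator `-d²/dx² + W`. -/
def maximalGraph (W : ℝ → ℝ) (hW : LocL2 W) : Submodule ℝ (L2R × L2R) where
  carrier := {p | IsWeakSol W p.1 p.2}
  add_mem' {p q} hp hq :=
    (hp.add hW hq).congr (ae_eq_refl _) (Lp.coeFn_add p.1 q.1).symm (Lp.coeFn_add p.2 q.2).symm
  zero_mem' := (IsWeakSol.zero W).congr (ae_eq_refl _) (Lp.coeFn_zero ℝ 2 volume).symm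
    (Lp.coeFn_zero ℝ 2 volume).symm
  smul_mem' c p hp :=
    (hp.const_mul c).congr (ae_eq_refl _) (Lp.coeFn_smul c p.1).symm (Lp.coeFn_smul c p.2).symm

lemma mem_maximalGraph {W : ℝ → ℝ} {hW : LocL2 W} {p : L2R × L2R} :
    p ∈ maximalGraph W hW ↔ IsWeakSol W p.1 p.2 :=
  Iff.rfl

lemma isClosed_maximalGraph (W : ℝ → ℝ) (hW : LocL2 W) :
    IsClosed (maximalGraph W hW : Set (L2R × L2R)) := by
  have eq_iInter : (maximalGraph W hW : Set (L2R × L2R))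
      = ⋂ (φ : ℝ → ℝ) (hφ : IsTestFunction φ), {p : L2R × L2R |
        inner ℝ p.1 ((hφ.memLp_schrodinger hW).toLp _) = inner ℝ p.2 (hφ.memLp_two.toLp _)} := by
    ext p
    simp only [SetLike.mem_coe, mem_maximalGraph, mem_iInter, mem_ofPred_eq,
      inner_toLp_eq_integral_mul]
    exact ⟨fun e => e.weak, fun weak => ⟨Lp.memLp _, Lp.memLp _, weak⟩⟩
  rw [eq_iInter]
  exact isClosed_iInter fun φ => isClosed_iInter fun hφ =>
    isClosed_eq (continuous_fst.inner continuous_const) (continuous_snd.inner continuous_const)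

theorem exists_clm_mem_iff_of_orthogonal_eq_bot {H : Type*} [NormedAddCommGroup H]
    [InnerProductSpace ℝ H] [CompleteSpace H] {Γ : Submodule ℝ (H × H)}
    (hΓ : IsClosed (Γ : Set (H × H))) {K : ℝ} (hK : 0 ≤ K) (bound : ∀ p ∈ Γ, ‖p.1‖ ≤ K * ‖p.2‖)
    (dense : (Γ.map (LinearMap.snd ℝ H H))ᗮ = ⊥) :
    ∃ T : H →L[ℝ] H, ∀ g h, (g, h) ∈ Γ ↔ T h = g := by
  have : CompleteSpace Γ := hΓ.completeSpace_coe
  let f : Γ →L[ℝ] H := (ContinuousLinearMap.snd ℝ H H).comp Γ.subtypeL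
  have antilipschitz : AntilipschitzWith (K + 1).toNNReal f :=
    AddMonoidHomClass.antilipschitz_of_bound f fun p => by
      rw [Real.coe_toNNReal _ (by positivity), add_mul, one_mul]
      exact max_le ((bound p p.2).trans (le_add_of_nonneg_right (norm_nonneg _)))
        (le_add_of_nonneg_left (by positivity))
  have range_eq_map : f.range = Γ.map (LinearMap.snd ℝ H H) :=
    Submodule.ext fun _ => ⟨fun ⟨p, hp⟩ => ⟨p, p.2, hp⟩, fun ⟨p, hpΓ, hp⟩ => ⟨⟨p, hpΓ⟩, hp⟩⟩
  have range_eq_top : f.range = ⊤ := by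
    have closed : IsClosed (f.range : Set H) := antilipschitz.isClosed_range f.uniformContinuous
    rw [← closed.submodule_topologicalClosure_eq, Submodule.topologicalClosure_eq_top_iff,
      range_eq_map, dense]
  let e := ContinuousLinearEquiv.ofBijective f (LinearMap.ker_eq_bot.2 antilipschitz.injective)
    range_eq_top
  have snd_symm : ∀ h, (e.symm h : H × H).2 = h := e.apply_symm_apply
  refine ⟨(ContinuousLinearMap.fst ℝ H H).comp (Γ.subtypeL.comp (e.symm : H →L[ℝ] Γ)),
    fun g h => ?_⟩
  constructor
  · intro hgh
    have symm_eq : e.symm h = ⟨(g, h), hgh⟩ := e.symm_apply_eq.2 rfl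
    exact congrArg (fun p : Γ => (p : H × H).1) symm_eq
  · rintro rfl
    have pair_eq : ((e.symm h : H × H).1, h) = e.symm h := Prod.ext rfl (snd_symm h).symm
    exact pair_eq ▸ (e.symm h).2

lemma isWeakSol_zero_of_mem_orthogonal {W : ℝ → ℝ} (hW : LocL2 W) {v : L2R}
    (hv : v ∈ ((maximalGraph W hW).map (LinearMap.snd ℝ L2R L2R))ᗮ) :
    IsWeakSol W v fun _ => 0 := by
  rw [Submodule.mem_orthogonal'] at hv
  refine ⟨Lp.memLp v, MemLp.zero, fun φ hφ => ?_⟩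
  have orth := hv ((hφ.memLp_schrodinger hW).toLp _) ⟨(_, _), (hφ.isWeakSol hW).toLp, rfl⟩
  rw [inner_toLp_eq_integral_mul] at orth
  simpa only [zero_mul, integral_zero] using orth

/-- The bounded operator `T` inverts the maximal operator `-d²/dx² + W`. -/
def IsInverse (W : ℝ → ℝ) (T : L2R →L[ℝ] L2R) : Prop :=
  ∀ g h : L2R, IsWeakSol W g h ↔ T h = g

lemma notMem_contSpectrum_iff_exists_isInverse {V : ℝ → ℝ} {E : ℝ} :
    E ∉ ContSpectrum V ↔ ∃ T, IsInverse (fun x => V x - E) T := by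
  have weak_iff : ∀ g h : L2R, WeakSchrodingerEq V E g h ↔ IsWeakSol (fun x => V x - E) g h :=
    fun g h => ⟨fun weak => ⟨Lp.memLp g, Lp.memLp h, fun φ hφ => weak φ hφ.1 hφ.2⟩,
      fun e φ hφ hc => e.weak φ ⟨hφ, hc⟩⟩
  simp only [ContSpectrum, mem_ofPred_eq, not_not, weak_iff]
  refine exists_congr fun T => ⟨fun ⟨sol, uniq⟩ g h => ⟨uniq g h, ?_⟩,
    fun hT => ⟨fun f => (hT _ f).2 rfl, fun g h => (hT g h).1⟩⟩
  rintro rfl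
  exact sol h

namespace IsInverse

variable {W : ℝ → ℝ} {T T' : L2R →L[ℝ] L2R} {d : ℝ}

lemma isWeakSol (hT : IsInverse W T) (f : L2R) : IsWeakSol W (T f) f := (hT _ f).2 rfl

lemma isBoundedBelow {β : ℝ} (hT : IsInverse W T) (hβ : 0 < β) (hTβ : ‖T‖ ≤ 1 / β) :
    IsBoundedBelow W (β ^ 2) := fun g h e => by
  have norm_le : ‖e.memLp_left.toLp g‖ ≤ ‖e.memLp_right.toLp h‖ / β :=
    calc ‖e.memLp_left.toLp g‖ = ‖T (e.memLp_right.toLp h)‖ := by rw [(hT _ _).1 e.toLp]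
      _ ≤ 1 / β * ‖e.memLp_right.toLp h‖ := T.le_of_opNorm_le hTβ _
      _ = _ := one_div_mul_eq_div _ _
  rw [le_div_iff₀ hβ] at norm_le
  rw [← norm_toLp_sq_eq_integral_sq e.memLp_left, ← norm_toLp_sq_eq_integral_sq e.memLp_right,
    ← mul_pow, mul_comm]
  exact pow_le_pow_left₀ (by positivity) norm_le 2

lemma inner_apply_comm {a M : ℝ} (hT : IsInverse W T) (hW : UnifLocL2 a W M) (f g : L2R) :
    inner ℝ (T f) g = inner ℝ f (T g) := by
  rw [inner_eq_integral_mul, inner_eq_integral_mul]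
  exact (hT.isWeakSol f).integral_mul_comm (hT.isWeakSol g) hW

end IsInverse

/-- A bounded below maximal operator is onto: its range is closed, and a vector orthogonal to the
images of the test functions is in the kernel, hence zero. -/
theorem IsBoundedBelow.exists_isInverse {W : ℝ → ℝ} {c : ℝ} (hlb : IsBoundedBelow W c)
    (hW : LocL2 W) (hc : 0 < c) : ∃ T, IsInverse W T := by
  refine exists_clm_mem_iff_of_orthogonal_eq_bot (isClosed_maximalGraph W hW)
    (K := 1 / √c) (by positivity) (fun p hp => ?_) ?_
  · have sq_le := hlb _ _ (mem_maximalGraph.1 hp)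
    rw [integral_sq_eq_norm_sq, integral_sq_eq_norm_sq] at sq_le
    rw [one_div_mul_eq_div, le_div_iff₀ (Real.sqrt_pos.2 hc)]
    refine (pow_le_pow_iff_left₀ (by positivity) (norm_nonneg _) two_ne_zero).1 ?_
    rwa [mul_pow, Real.sq_sqrt hc.le, mul_comm]
  · rw [Submodule.eq_bot_iff]
    intro v hv
    have sq_le := hlb _ _ (isWeakSol_zero_of_mem_orthogonal hW hv)
    rw [integral_sq_eq_norm_sq, zero_pow two_ne_zero, integral_zero] at sq_le
    exact norm_eq_zero.1 (pow_eq_zero_iff two_ne_zero |>.1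
      (le_antisymm (nonpos_of_mul_nonpos_right sq_le hc) (sq_nonneg _)))

lemma isUnit_sub_inv_smul_one {k A : Type*} [Field k] [Ring A] [Algebra k A] {d : k} (hd : d ≠ 0)
    {T T' : A} (left : d • (T * T') = T' - T) (right : d • (T' * T) = T' - T) :
    IsUnit (T - d⁻¹ • (1 : A)) := by
  refine ⟨⟨T - d⁻¹ • 1, -d • (1 + d • T'), ?_, ?_⟩, rfl⟩
  · rw [sub_mul, mul_smul_comm, mul_add, mul_one, mul_smul_comm, left, smul_mul_assoc, one_mul]
    match_scalars <;> field_simp <;> ring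
  · rw [mul_sub, smul_mul_assoc, add_mul, one_mul, smul_mul_assoc, right, mul_smul_comm, mul_one]
    match_scalars <;> field_simp <;> ring

lemma IsWeakSol.sub_const {W : ℝ → ℝ} {g h : L2R} (hW : LocL2 W) (e : IsWeakSol W g h) (d : ℝ) :
    IsWeakSol (fun x => W x - d) g (h - d • g : L2R) := by
  refine (e.add_potential (D := fun _ => -d) hW (e.memLp_left.const_mul (-d))).congr
    (Eventually.of_forall fun x => (sub_eq_add_neg _ _).symm) (ae_eq_refl _) ?_
  filter_upwards [Lp.coeFn_sub h (d • g), Lp.coeFn_smul d g] with x hsub hsmul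
  rw [hsub, Pi.sub_apply, hsmul, Pi.smul_apply, smul_eq_mul, neg_mul, sub_eq_add_neg]

lemma IsInverse.isUnit_sub {W : ℝ → ℝ} {T T' : L2R →L[ℝ] L2R} {d : ℝ} (hT : IsInverse W T)
    (hT' : IsInverse (fun x => W x - d) T') (hd : d ≠ 0) (hW : LocL2 W) :
    IsUnit (T - d⁻¹ • (1 : L2R →L[ℝ] L2R)) := by
  refine isUnit_sub_inv_smul_one hd (T' := T') ?_ ?_ <;> ext1 f
  · have e := (hT'.isWeakSol f).sub_const (hW.sub (locL2_of_continuous continuous_const)) (-d)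
    simp only [sub_neg_eq_add, sub_add_cancel, neg_smul] at e
    have resolvent := (hT _ _).1 e
    rw [map_add, map_smul] at resolvent
    exact eq_sub_of_add_eq' resolvent
  · have resolvent := (hT' _ _).1 ((hT.isWeakSol f).sub_const hW d)
    rw [map_sub, map_smul, sub_eq_iff_eq_add] at resolvent
    exact eq_sub_of_add_eq' resolvent.symm

/-! ### Spectral gaps -/

section SymmetricOperator

variable {H : Type*} [NormedAddCommGroup H] [InnerProductSpace ℝ H] {T : H →L[ℝ] H}

lemma norm_apply_apply_sub_sq_le (hT : ∀ x y, inner ℝ (T x) y = inner ℝ x (T y)) (x : H) :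
    ‖T (T x) - ‖T‖ ^ 2 • x‖ ^ 2 ≤ ‖T‖ ^ 2 * (‖T‖ ^ 2 * ‖x‖ ^ 2 - ‖T x‖ ^ 2) := by
  have norm_sq : ‖T (T x)‖ ^ 2 ≤ ‖T‖ ^ 2 * ‖T x‖ ^ 2 := by
    rw [← mul_pow]
    exact pow_le_pow_left₀ (norm_nonneg _) (T.le_opNorm _) 2
  rw [norm_sub_sq_real, norm_smul, inner_smul_right, hT (T x) x, real_inner_self_eq_norm_sq,
    mul_pow, norm_pow, norm_norm]
  linarith

lemma not_isUnit_mul_self_sub_norm_sq (hT : ∀ x y, inner ℝ (T x) y = inner ℝ x (T y))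
    (hpos : 0 < ‖T‖) : ¬ IsUnit (T * T - ‖T‖ ^ 2 • (1 : H →L[ℝ] H)) := by
  rintro ⟨U, hU⟩
  set C := (‖(↑U⁻¹ : H →L[ℝ] H)‖ + 1) ^ 2 * ‖T‖ ^ 2
  have hC : 0 < C := by positivity
  have norm_sq_le : ∀ x, ‖x‖ ^ 2 ≤ C * (‖T‖ ^ 2 * ‖x‖ ^ 2 - ‖T x‖ ^ 2) := fun x => by
    have norm_le : ‖x‖ ≤ (‖(↑U⁻¹ : H →L[ℝ] H)‖ + 1) * ‖T (T x) - ‖T‖ ^ 2 • x‖ :=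
      calc ‖x‖ = ‖(↑U⁻¹ : H →L[ℝ] H) ((U : H →L[ℝ] H) x)‖ := by
            rw [← mul_apply_eq_comp, Units.inv_mul, one_apply_eq_self]
        _ = ‖(↑U⁻¹ : H →L[ℝ] H) (T (T x) - ‖T‖ ^ 2 • x)‖ := by rw [hU]; rfl
        _ ≤ _ := (↑U⁻¹ : H →L[ℝ] H).le_of_opNorm_le (le_add_of_nonneg_right zero_le_one) _
    calc ‖x‖ ^ 2 ≤ (‖(↑U⁻¹ : H →L[ℝ] H)‖ + 1) ^ 2 * ‖T (T x) - ‖T‖ ^ 2 • x‖ ^ 2 := by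
          rw [← mul_pow]
          exact pow_le_pow_left₀ (norm_nonneg _) norm_le 2
      _ ≤ (‖(↑U⁻¹ : H →L[ℝ] H)‖ + 1) ^ 2 * (‖T‖ ^ 2 * (‖T‖ ^ 2 * ‖x‖ ^ 2 - ‖T x‖ ^ 2)) :=
          mul_le_mul_of_nonneg_left (norm_apply_apply_sub_sq_le hT x) (sq_nonneg _)
      _ = _ := (mul_assoc _ _ _).symm
  have below : √(‖T‖ ^ 2 - 1 / C) < ‖T‖ :=
    (Real.sqrt_lt' hpos).2 (sub_lt_self _ (by positivity))
  obtain ⟨x, norm_lt, lt_norm⟩ := T.exists_lt_apply_of_lt_opNorm below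
  have hTx : 0 < ‖T x‖ := (Real.sqrt_nonneg _).trans_lt lt_norm
  have near_max : C * (‖T‖ ^ 2 - ‖T x‖ ^ 2) < 1 := by
    rw [Real.sqrt_lt' hTx, sub_lt_comm, lt_div_iff₀ hC, mul_comm] at lt_norm
    exact lt_norm
  have norm_sq_lt : ‖x‖ ^ 2 < 1 := pow_lt_one₀ (norm_nonneg _) norm_lt two_ne_zero
  have hle := norm_sq_le x
  rcases le_or_gt (C * ‖T‖ ^ 2) 1 with h | h
  · nlinarith [mul_pos hC (pow_pos hTx 2), sq_nonneg ‖x‖]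
  · nlinarith

lemma norm_le_of_forall_isUnit_sub (hT : ∀ x y, inner ℝ (T x) y = inner ℝ x (T y)) {b : ℝ}
    (hb : 0 ≤ b) (hu : ∀ μ : ℝ, b < |μ| → IsUnit (T - μ • (1 : H →L[ℝ] H))) : ‖T‖ ≤ b := by
  by_contra! hlt
  refine not_isUnit_mul_self_sub_norm_sq hT (hb.trans_lt hlt) ?_
  have unit_pos := hu ‖T‖ (by rwa [abs_norm])
  have unit_neg := hu (-‖T‖) (by rwa [abs_neg, abs_norm])
  convert unit_pos.mul unit_neg using 1
  simp only [neg_smul, sub_neg_eq_add, mul_add, sub_mul, mul_smul_comm, smul_mul_assoc, mul_one,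
    one_mul]
  module

end SymmetricOperator

theorem isBoundedBelow_sq_of_forall_isInverse {a M β : ℝ} {W : ℝ → ℝ} (hW : UnifLocL2 a W M)
    (hβ : 0 < β) (h : ∀ d : ℝ, |d| < β → ∃ T, IsInverse (fun x => W x - d) T) :
    IsBoundedBelow W (β ^ 2) := by
  obtain ⟨T, hT⟩ := h 0 (by rwa [abs_zero])
  simp only [sub_zero] at hT
  refine hT.isBoundedBelow hβ <|
    norm_le_of_forall_isUnit_sub (hT.inner_apply_comm hW) (by positivity) fun μ hμ => ?_
  have hμ_pos : 0 < |μ| := lt_trans (by positivity) hμ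
  obtain ⟨T', hT'⟩ := h μ⁻¹ (by rw [abs_inv]; exact inv_lt_of_inv_lt₀ hβ (one_div β ▸ hμ))
  simpa only [inv_inv] using hT.isUnit_sub hT' (inv_ne_zero (abs_pos.1 hμ_pos)) hW.locL2

lemma notMem_contSpectrum_iff {a M E : ℝ} {V : ℝ → ℝ} (hV : UnifLocL2 a V M) :
    E ∉ ContSpectrum V ↔ ∃ c > 0, IsBoundedBelow (fun x => V x - E) c := by
  rw [notMem_contSpectrum_iff_exists_isInverse]
  constructor
  · rintro ⟨T, hT⟩
    refine ⟨(1 / (‖T‖ + 1)) ^ 2, by positivity, hT.isBoundedBelow (by positivity) ?_⟩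
    rw [one_div_one_div]
    exact le_add_of_nonneg_right zero_le_one
  · rintro ⟨c, hc, hlb⟩
    exact hlb.exists_isInverse (hV.sub_const E).locL2 hc

lemma isBoundedBelow_of_forall_notMem_contSpectrum {a M E β : ℝ} {V : ℝ → ℝ}
    (hV : UnifLocL2 a V M) (hβ : 0 < β) (h : ∀ E', |E' - E| < β → E' ∉ ContSpectrum V) :
    IsBoundedBelow (fun x => V x - E) (β ^ 2) :=
  isBoundedBelow_sq_of_forall_isInverse (hV.sub_const E) hβ fun d hd => by
    simpa only [sub_sub] using
      notMem_contSpectrum_iff_exists_isInverse.1 (h (E + d) (by rwa [add_sub_cancel_left]))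

/-- An empty spectrum would bound the operator below by arbitrarily large constants, which a single
test function contradicts. -/
theorem contSpectrum_nonempty {a M : ℝ} {V : ℝ → ℝ} (hV : UnifLocL2 a V M) :
    (ContSpectrum V).Nonempty := by
  by_contra hempty
  rw [not_nonempty_iff_eq_empty] at hempty
  obtain ⟨θ, hθ, integral_θ⟩ := exists_isTestFunction_integral_eq_one
  have hpos : 0 < ∫ x, θ x ^ 2 := by
    refine (integral_nonneg fun x => sq_nonneg (θ x)).lt_of_ne' fun h => ?_
    rw [integral_eq_zero_iff_of_nonneg (fun x => sq_nonneg (θ x)) hθ.memLp_two.integrable_sq] at h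
    have θ_eq_zero : θ =ᵐ[volume] fun _ => 0 :=
      h.mono fun x hx => pow_eq_zero_iff two_ne_zero |>.1 hx
    rw [integral_congr_ae θ_eq_zero, integral_zero] at integral_θ
    exact zero_ne_one integral_θ
  set H := ∫ x, (-(deriv (deriv θ) x) + (V x - 0) * θ x) ^ 2
  have : 0 ≤ H := integral_nonneg fun x => sq_nonneg _
  set β := √((H + 1) / ∫ x, θ x ^ 2)
  have hβ : β ^ 2 * (∫ x, θ x ^ 2) = H + 1 := by
    rw [Real.sq_sqrt (by positivity), div_mul_cancel₀ _ hpos.ne']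
  have hlb := isBoundedBelow_of_forall_notMem_contSpectrum (E := 0) (β := β) hV (by positivity)
    (fun E' _ => hempty ▸ notMem_empty E') _ _ (hθ.isWeakSol (hV.sub_const 0).locL2)
  linarith

theorem isClosed_contSpectrum {a M : ℝ} {V : ℝ → ℝ} (hV : UnifLocL2 a V M) :
    IsClosed (ContSpectrum V) := by
  rw [← isOpen_compl_iff, Metric.isOpen_iff]
  intro E hE
  have ha := hV.scale_pos
  obtain ⟨c, hc, hlb⟩ := (notMem_contSpectrum_iff hV).1 hE
  obtain ⟨δ, hδ, c', hc', perturb⟩ := exists_isBoundedBelow_add (a := a) ha hc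
  refine ⟨δ / (1 + a), by positivity, fun E' hE' => (notMem_contSpectrum_iff hV).2 ⟨c', hc', ?_⟩⟩
  rw [Metric.mem_ball, Real.dist_eq, abs_sub_comm, lt_div_iff₀ (by positivity), mul_comm] at hE'
  simpa only [sub_add_sub_cancel] using
    perturb _ (fun _ => E - E') (hV.sub_const E) ((UnifLocL2.const ha _).mono hE'.le) hlb

/-! ### Isolated points of the spectrum -/

namespace IsC1Rep

lemma sum_const_mul {ι : Type*} [Fintype ι] {W : ℝ → ℝ} (hW : LocL2 W) (c : ι → ℝ)
    {g h G P : ι → ℝ → ℝ} (e : ∀ i, IsWeakSol W (g i) (h i))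
    (r : ∀ i, IsC1Rep W (g i) (h i) (G i) (P i)) :
    IsC1Rep W (fun x => ∑ i, c i * g i x) (fun x => ∑ i, c i * h i x)
      (fun x => ∑ i, c i * G i x) fun x => ∑ i, c i * P i x where
  ae_eq := (eventually_all.2 fun i => (r i).ae_eq).mono fun x hx => by simp only [hx]
  hasDerivAt x := HasDerivAt.fun_sum fun i _ => ((r i).hasDerivAt x).const_mul (c i)
  continuous_deriv := continuous_finsetSum _ fun i _ => (r i).continuous_deriv.const_mul (c i)
  integral_eq s t := by
    have integrand_eq : ∀ x, W x * (∑ i, c i * G i x) - ∑ i, c i * h i x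
        = ∑ i, c i * (W x * G i x - h i x) := fun x => by
      rw [Finset.mul_sum, ← Finset.sum_sub_distrib]
      exact Finset.sum_congr rfl fun i _ => by ring
    simp_rw [integrand_eq]
    rw [intervalIntegral.integral_finsetSum fun i _ =>
      ((r i).intervalIntegrable hW (e i) s t).const_mul _, ← Finset.sum_sub_distrib]
    refine Finset.sum_congr rfl fun i _ => ?_
    rw [intervalIntegral.integral_const_mul, (r i).integral_eq, mul_sub]

variable {W g G P : ℝ → ℝ} {t : ℝ}

lemma abs_deriv_le_mul_setIntegral (hW : LocL2 W) (r : IsC1Rep W g (fun _ => 0) G P)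
    (hP : P t = 0) {s : Set ℝ} (hs : IsCompact s) {B x : ℝ} (hB : 0 ≤ B) (hxs : uIoc t x ⊆ s)
    (hG : ∀ y ∈ uIoc t x, |G y| ≤ B) : |P x| ≤ B * ∫ y in s, |W y| := by
  have int_abs : IntegrableOn (fun y => B * |W y|) s :=
    (hW.locallyIntegrable.integrableOn_isCompact hs).abs.const_mul B
  have P_eq : ∫ y in t..x, W y * G y = P x := by
    simpa only [sub_zero, hP] using r.integral_eq t x
  calc |P x| = ‖∫ y in t..x, W y * G y‖ := by rw [P_eq, Real.norm_eq_abs]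
    _ ≤ |(∫ y in t..x, B * |W y|)| := by
        refine intervalIntegral.norm_integral_le_abs_of_norm_le ?_
          (intervalIntegrable_iff.2 (int_abs.mono_set hxs))
        refine (ae_restrict_iff' measurableSet_uIoc).2 (Eventually.of_forall fun y hy => ?_)
        rw [norm_mul, mul_comm]
        exact mul_le_mul_of_nonneg_right (hG y hy) (norm_nonneg _)
    _ = ∫ y in uIoc t x, B * |W y| := by
        rw [intervalIntegral.abs_integral_eq_abs_integral_uIoc,
          abs_of_nonneg (integral_nonneg fun _ => by positivity)]
    _ ≤ ∫ y in s, B * |W y| := setIntegral_mono_set int_abs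
        (Eventually.of_forall fun y => by positivity) (Eventually.of_forall hxs)
    _ = _ := integral_const_mul _ _

lemma exists_ball_eq_zero (hW : LocL2 W) (r : IsC1Rep W g (fun _ => 0) G P) (hG : G t = 0)
    (hP : P t = 0) : ∃ ρ > 0, Metric.ball t ρ ⊆ {x | G x = 0 ∧ P x = 0} := by
  set w := ∫ x in Icc (t - 1) (t + 1), |W x|
  have hw : 0 ≤ w := integral_nonneg fun _ => abs_nonneg _
  set ρ := min 1 (1 / (2 * (w + 1)))
  have hρ : 0 < ρ := lt_min one_pos (by positivity)
  have hρ_one : ρ ≤ 1 := min_le_left _ _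
  have hwρ : w * ρ < 1 :=
    calc w * ρ ≤ w * (1 / (2 * (w + 1))) := mul_le_mul_of_nonneg_left (min_le_right _ _) hw
      _ < 1 := by rw [mul_one_div, div_lt_one (by positivity)]; linarith
  have ht : t ∈ Icc (t - ρ) (t + ρ) := ⟨by linarith, by linarith⟩
  obtain ⟨s, hs, hmax⟩ := (isCompact_Icc (a := t - ρ) (b := t + ρ)).exists_isMaxOn ⟨t, ht⟩
    r.continuous.abs.continuousOn
  replace hmax : ∀ x ∈ Icc (t - ρ) (t + ρ), |G x| ≤ |G s| := fun x hx => hmax hx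
  have deriv_le : ∀ x ∈ Icc (t - ρ) (t + ρ), |P x| ≤ |G s| * w := fun x hx => by
    have uIoc_subset : uIoc t x ⊆ Icc (t - ρ) (t + ρ) :=
      uIoc_subset_uIcc.trans (uIcc_subset_Icc ht hx)
    exact r.abs_deriv_le_mul_setIntegral hW hP isCompact_Icc (abs_nonneg _)
      (uIoc_subset.trans (Icc_subset_Icc (by linarith) (by linarith)))
      fun y hy => hmax y (uIoc_subset hy)
  have le_self : |G s| ≤ |G s| * w * ρ := by
    have mean_value := (convex_Icc (t - ρ) (t + ρ)).norm_image_sub_le_of_norm_hasDerivWithin_le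
      (fun x _ => (r.hasDerivAt x).hasDerivWithinAt) deriv_le ht hs
    rw [hG, sub_zero] at mean_value
    refine mean_value.trans (mul_le_mul_of_nonneg_left ?_ (by positivity))
    exact abs_sub_le_iff.2 ⟨by linarith [hs.2], by linarith [hs.1]⟩
  have max_eq_zero : |G s| = 0 := by nlinarith [abs_nonneg (G s)]
  refine ⟨ρ, hρ, fun x hx => ?_⟩
  rw [Real.ball_eq_Ioo] at hx
  have hG_le := hmax x (Ioo_subset_Icc_self hx)
  have hP_le := deriv_le x (Ioo_subset_Icc_self hx)
  rw [max_eq_zero] at hG_le hP_le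
  exact ⟨abs_nonpos_iff.1 hG_le, abs_nonpos_iff.1 (hP_le.trans_eq (zero_mul w))⟩

theorem eq_zero_of_initial_eq_zero (hW : LocL2 W) (r : IsC1Rep W g (fun _ => 0) G P)
    (hG : G t = 0) (hP : P t = 0) (x : ℝ) : G x = 0 := by
  have clopen : IsClopen {x | G x = 0 ∧ P x = 0} :=
    ⟨(isClosed_eq r.continuous continuous_const).inter
      (isClosed_eq r.continuous_deriv continuous_const),
      Metric.isOpen_iff.2 fun _ hx => r.exists_ball_eq_zero hW hx.1 hx.2⟩
  have mem : x ∈ {x | G x = 0 ∧ P x = 0} := clopen.eq_univ ⟨t, hG, hP⟩ ▸ mem_univ x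
  exact mem.1

end IsC1Rep

lemma coeFn_sum_smul {ι : Type*} (s : Finset ι) (c : ι → ℝ) (g : ι → L2R) :
    ⇑(∑ i ∈ s, c i • g i) =ᵐ[volume] fun x => ∑ i ∈ s, c i * g i x := by
  classical
  induction s using Finset.induction_on with
  | empty =>
    simp only [Finset.sum_empty]
    exact Lp.coeFn_zero ℝ 2 (volume : Measure ℝ)
  | insert i s hi ih =>
    simp only [Finset.sum_insert hi]
    filter_upwards [ih, Lp.coeFn_add (c i • g i) (∑ i ∈ s, c i • g i), Lp.coeFn_smul (c i) (g i)]
      with x hsum hadd hsmul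
    rw [hadd, Pi.add_apply, hsum, hsmul, Pi.smul_apply, smul_eq_mul]

theorem exists_sum_smul_eq_zero_of_isWeakSol_zero {W : ℝ → ℝ} (hW : LocL2 W) (g : Fin 3 → L2R)
    (e : ∀ i, IsWeakSol W (g i) fun _ => 0) : ∃ c : Fin 3 → ℝ, c ≠ 0 ∧ ∑ i, c i • g i = 0 := by
  choose G P r using fun i => (e i).exists_isC1Rep hW
  let F : (Fin 3 → ℝ) →ₗ[ℝ] ℝ × ℝ := Fintype.linearCombination ℝ fun i => (G i 0, P i 0)
  have ker_ne_bot : LinearMap.ker F ≠ ⊥ := F.ker_ne_bot_of_finrank_lt (by simp)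
  obtain ⟨c, hc, hc0⟩ := Submodule.exists_mem_ne_zero_of_ne_bot ker_ne_bot
  rw [LinearMap.mem_ker, Fintype.linearCombination_apply] at hc
  have initial := Prod.ext_iff.1 hc
  simp only [Prod.fst_sum, Prod.snd_sum, Prod.smul_fst, Prod.smul_snd, smul_eq_mul, Prod.fst_zero,
    Prod.snd_zero] at initial
  have rsum := IsC1Rep.sum_const_mul hW c e r
  simp only [mul_zero, Finset.sum_const_zero] at rsum
  refine ⟨c, hc0, Lp.ext ?_⟩
  filter_upwards [coeFn_sum_smul Finset.univ c g, rsum.ae_eq,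
    Lp.coeFn_zero ℝ 2 (volume : Measure ℝ)] with x hsum hae hzero
  rw [hsum, hae, rsum.eq_zero_of_initial_eq_zero hW initial.1 initial.2, hzero, Pi.zero_apply]

theorem exists_inner_sum_smul_eq_zero {W : ℝ → ℝ} (hW : LocL2 W) (v : Fin 3 → L2R) :
    ∃ c : Fin 3 → ℝ, c ≠ 0 ∧
      ∀ g : L2R, IsWeakSol W g (fun _ => 0) → inner ℝ (∑ i, c i • v i) g = 0 := by
  let kernel : Submodule ℝ L2R := (maximalGraph W hW).comap (LinearMap.inl ℝ L2R L2R)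
  have zero_ae : (⇑(0 : L2R) : ℝ → ℝ) =ᵐ[volume] fun _ => 0 := Lp.coeFn_zero ℝ 2 volume
  have mem_kernel : ∀ g : L2R, g ∈ kernel ↔ IsWeakSol W g fun _ => 0 := fun g =>
    ⟨fun hg => (mem_maximalGraph (hW := hW).1 hg).congr (ae_eq_refl _) (ae_eq_refl _) zero_ae,
      fun e => e.congr (ae_eq_refl _) (ae_eq_refl _) zero_ae.symm⟩
  have closed : IsClosed (kernel : Set L2R) :=
    (isClosed_maximalGraph W hW).preimage (continuous_id.prodMk continuous_const)
  have : CompleteSpace kernel := closed.completeSpace_coe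
  obtain ⟨c, hc0, hc⟩ := exists_sum_smul_eq_zero_of_isWeakSol_zero hW
    (fun i => kernel.starProjection (v i))
    fun i => (mem_kernel _).1 (kernel.starProjection_apply_mem _)
  have orth : ∑ i, c i • v i ∈ kernelᗮ := by
    rw [← Submodule.starProjection_apply_eq_zero_iff, map_sum, ← hc]
    simp only [map_smul]
  exact ⟨c, hc0, fun g hg => Submodule.inner_left_of_mem_orthogonal ((mem_kernel g).2 hg) orth⟩

section SymmetricRelation

variable {H : Type*} [NormedAddCommGroup H] [InnerProductSpace ℝ H] {Γ : Submodule ℝ (H × H)}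
  {κ : ℝ}

lemma mul_inner_le_half_add_sq (hκ : 0 ≤ κ)
    (symm : ∀ p ∈ Γ, ∀ q ∈ Γ, inner ℝ p.1 q.2 = inner ℝ p.2 q.1)
    (quad : ∀ p ∈ Γ, κ * |inner ℝ p.2 p.1| ≤ ‖p.2‖ ^ 2) {p q : H × H} (hp : p ∈ Γ) (hq : q ∈ Γ) :
    κ * inner ℝ p.2 q.1 ≤ (‖p.2‖ ^ 2 + ‖q.2‖ ^ 2) / 2 := by
  have quad_add := quad _ (Γ.add_mem hp hq)
  have quad_sub := quad _ (Γ.sub_mem hp hq)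
  have inner_eq : inner ℝ q.2 p.1 = inner ℝ p.2 q.1 := by rw [real_inner_comm, symm p hp q hq]
  rw [Prod.fst_add, Prod.snd_add, norm_add_sq_real] at quad_add
  rw [Prod.fst_sub, Prod.snd_sub, norm_sub_sq_real] at quad_sub
  have polarization : 4 * inner ℝ p.2 q.1
      = inner ℝ (p.2 + q.2) (p.1 + q.1) - inner ℝ (p.2 - q.2) (p.1 - q.1) := by
    simp only [inner_add_left, inner_add_right, inner_sub_left, inner_sub_right, inner_eq]
    ring
  have le_add := mul_le_mul_of_nonneg_left (le_abs_self (inner ℝ (p.2 + q.2) (p.1 + q.1))) hκ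
  have le_sub := mul_le_mul_of_nonneg_left (neg_abs_le (inner ℝ (p.2 - q.2) (p.1 - q.1))) hκ
  have := congrArg (κ * ·) polarization
  simp only [mul_sub] at this
  linarith

lemma mul_inner_le_norm_mul_norm (hκ : 0 ≤ κ)
    (symm : ∀ p ∈ Γ, ∀ q ∈ Γ, inner ℝ p.1 q.2 = inner ℝ p.2 q.1)
    (quad : ∀ p ∈ Γ, κ * |inner ℝ p.2 p.1| ≤ ‖p.2‖ ^ 2) {p q : H × H} (hp : p ∈ Γ) (hq : q ∈ Γ) :
    κ * inner ℝ p.2 q.1 ≤ ‖p.2‖ * ‖q.2‖ := by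
  rcases eq_or_ne p.2 0 with hp0 | hp0
  · simp [hp0]
  rcases eq_or_ne q.2 0 with hq0 | hq0
  · simp [← symm p hp q hq, hq0]
  have scaled := mul_inner_le_half_add_sq hκ symm quad (Γ.smul_mem ‖q.2‖ hp) (Γ.smul_mem ‖p.2‖ hq)
  simp only [Prod.smul_fst, Prod.smul_snd, inner_smul_left, inner_smul_right, norm_smul,
    norm_norm, RCLike.conj_to_real] at scaled
  have hpos : 0 < ‖p.2‖ * ‖q.2‖ := mul_pos (norm_pos_iff.2 hp0) (norm_pos_iff.2 hq0)
  refine le_of_mul_le_mul_left ?_ hpos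
  linarith

theorem mul_norm_le_norm_of_mem_closure_range (hκ : 0 ≤ κ)
    (symm : ∀ p ∈ Γ, ∀ q ∈ Γ, inner ℝ p.1 q.2 = inner ℝ p.2 q.1)
    (quad : ∀ p ∈ Γ, κ * |inner ℝ p.2 p.1| ≤ ‖p.2‖ ^ 2) {p : H × H} (hp : p ∈ Γ)
    (hmem : p.1 ∈ (Γ.map (LinearMap.snd ℝ H H)).topologicalClosure) : κ * ‖p.1‖ ≤ ‖p.2‖ := by
  have closed : IsClosed {l : H | κ * inner ℝ p.1 l ≤ ‖p.2‖ * ‖l‖} :=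
    isClosed_le (by fun_prop) (by fun_prop)
  have le_self : κ * inner ℝ p.1 p.1 ≤ ‖p.2‖ * ‖p.1‖ := by
    refine closure_minimal ?_ closed hmem
    rintro _ ⟨q, hq, rfl⟩
    rw [mem_ofPred_eq, LinearMap.snd_apply, symm p hp q hq]
    exact mul_inner_le_norm_mul_norm hκ symm quad hp hq
  rcases eq_or_ne p.1 0 with h0 | h0
  · simp [h0]
  rw [real_inner_self_eq_norm_sq, sq, ← mul_assoc] at le_self
  exact le_of_mul_le_mul_right le_self (norm_pos_iff.2 h0)

end SymmetricRelation

lemma IsBoundedBelow.two_mul_inner_le {W : ℝ → ℝ} {d : ℝ}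
    (hlb : IsBoundedBelow (fun x => W x - d) (d ^ 2)) (hW : LocL2 W) {g h : L2R}
    (e : IsWeakSol W g h) : 2 * d * inner ℝ h g ≤ ‖h‖ ^ 2 := by
  have sq_le := hlb _ _ (e.sub_const hW d)
  rw [integral_sq_eq_norm_sq, integral_sq_eq_norm_sq, norm_sub_sq_real, norm_smul,
    inner_smul_right, mul_pow, Real.norm_eq_abs, sq_abs] at sq_le
  linarith

/-- The gaps `(-κ, 0)` and `(0, κ)` bound the operator below at their midpoints `±κ / 2`; expanding
these bounds gives `κ |⟨h, g⟩| ≤ ‖h‖²` for `h` the image of `g`. -/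
lemma mul_abs_inner_le_norm_sq_of_punctured_gap {a M κ : ℝ} {W : ℝ → ℝ} (hW : UnifLocL2 a W M)
    (hκ : 0 < κ)
    (hgap : ∀ d : ℝ, d ≠ 0 → |d| < κ → ∃ T, IsInverse (fun x => W x - d) T) {g h : L2R}
    (e : IsWeakSol W g h) : κ * |inner ℝ h g| ≤ ‖h‖ ^ 2 := by
  have midpoint : ∀ d : ℝ, |d| = κ / 2 → IsBoundedBelow (fun x => W x - d) (d ^ 2) := by
    intro d hd
    rw [← sq_abs, hd]
    refine isBoundedBelow_sq_of_forall_isInverse (hW.sub_const d) (by positivity) fun d' hd' => ?_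
    simp only [sub_sub]
    refine hgap _ (fun h0 => ?_) ((abs_add_le d d').trans_lt (by linarith))
    rw [eq_neg_of_add_eq_zero_left h0, abs_neg] at hd
    exact hd'.ne hd
  have pos := (midpoint (κ / 2) (abs_of_pos (by positivity))).two_mul_inner_le hW.locL2 e
  have neg := (midpoint (-(κ / 2)) (by rw [abs_neg, abs_of_pos (by positivity)])).two_mul_inner_le
    hW.locL2 e
  rcases abs_cases (inner ℝ h g : ℝ) with ⟨habs, -⟩ | ⟨habs, -⟩ <;> rw [habs] <;> linarith

theorem mul_norm_le_norm_of_punctured_gap {a M κ : ℝ} {W : ℝ → ℝ} (hW : UnifLocL2 a W M)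
    (hκ : 0 < κ)
    (hgap : ∀ d : ℝ, d ≠ 0 → |d| < κ → ∃ T, IsInverse (fun x => W x - d) T) {f k : L2R}
    (e : IsWeakSol W f k)
    (horth : ∀ g : L2R, IsWeakSol W g (fun _ => 0) → inner ℝ f g = 0) : κ * ‖f‖ ≤ ‖k‖ := by
  refine mul_norm_le_norm_of_mem_closure_range (Γ := maximalGraph W hW.locL2) (p := (f, k)) hκ.le
    (fun p hp q hq => ?_) (fun p hp => mul_abs_inner_le_norm_sq_of_punctured_gap hW hκ hgap hp) e ?_
  · rw [inner_eq_integral_mul, inner_eq_integral_mul]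
    exact (mem_maximalGraph.1 hp).integral_mul_comm hq hW
  · rw [← Submodule.orthogonal_orthogonal_eq_closure, Submodule.mem_orthogonal']
    exact fun v hv => horth v (isWeakSol_zero_of_mem_orthogonal hW.locL2 hv)

lemma exists_isWeakSol_lt_of_not_isBoundedBelow {c : ℝ} {W : ℝ → ℝ} (hn : ¬ IsBoundedBelow W c)
    (hc : 0 ≤ c) : ∃ g h, IsWeakSol W g h ∧ 0 < (∫ x, g x ^ 2) ∧
      ∫ x, h x ^ 2 < c * ∫ x, g x ^ 2 := by
  simp only [IsBoundedBelow, not_forall, not_le] at hn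
  obtain ⟨g, h, e, hlt⟩ := hn
  have : 0 ≤ ∫ x, h x ^ 2 := integral_nonneg fun _ => sq_nonneg _
  exact ⟨g, h, e, pos_of_mul_pos_right (this.trans_lt hlt) hc, hlt⟩

lemma exists_truncation_window {f g : ℤ → ℝ} {A η : ℝ} (hf : HasSum f A) (hA : 0 < A)
    (hg : Tendsto g cofinite (𝓝 0)) (hη : 0 < η) : ∃ m n : ℤ, m + 2 ≤ n ∧
      A / 2 < ∑ j ∈ Finset.Ico (m + 1) (n - 1), f j ∧ g m < η ∧ g (n - 1) < η := by
  have tendsto_sum : Tendsto (fun N : ℕ => ∑ j ∈ Finset.Ico (-(N : ℤ)) N, f j) atTop (𝓝 A) :=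
    SummationFilter.hasSum_symmetricIco_int_iff.1 <|
      hf.mono_left (SummationFilter.symmetricIco ℤ).le_atTop
  have tendsto_left : Tendsto (fun N : ℕ => g (-(N : ℤ) - 1)) atTop (𝓝 0) := by
    refine hg.comp ?_
    rw [← Nat.cofinite_eq_atTop]
    exact Function.Injective.tendsto_cofinite fun i j hij => by simpa using hij
  have tendsto_right : Tendsto (fun N : ℕ => g N) atTop (𝓝 0) := by
    refine hg.comp ?_
    rw [← Nat.cofinite_eq_atTop]
    exact Nat.cast_injective.tendsto_cofinite
  obtain ⟨N, hsum, hleft, hright⟩ := ((tendsto_sum.eventually_const_lt (half_lt_self hA)).and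
    ((tendsto_left.eventually_lt_const hη).and (tendsto_right.eventually_lt_const hη))).exists
  exact ⟨-N - 1, N + 1, by omega, by simpa using hsum, hleft, by simpa using hright⟩

theorem exists_isWeakSol_supported {a M ε : ℝ} {W : ℝ → ℝ} (hW : UnifLocL2 a W M)
    (hn : ∀ c > 0, ¬ IsBoundedBelow W c) (hε : 0 < ε) :
    ∃ (u k : ℝ → ℝ) (m n : ℤ), IsWeakSol W u k ∧
      (∀ x, x ∉ Ico (m * a) (n * a) → u x = 0 ∧ k x = 0) ∧ 0 < ∫ x, u x ^ 2 ∧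
      ∫ x, k x ^ 2 ≤ ε * ∫ x, u x ^ 2 := by
  have ha := hW.scale_pos
  obtain ⟨C, hC, truncation⟩ := exists_truncation ha M
  have hC0 : 0 < C := by linarith
  obtain ⟨g, h, e, hA, hlt⟩ :=
    exists_isWeakSol_lt_of_not_isBoundedBelow (hn (ε / (4 * C)) (by positivity)) (by positivity)
  set A := ∫ x, g x ^ 2
  have sum_g := hasSum_setIntegral_block ha e.memLp_left.integrable_sq
  have sum_h := hasSum_setIntegral_block ha e.memLp_right.integrable_sq
  obtain ⟨m, n, hmn, inner_mass, left_mass, right_mass⟩ := exists_truncation_window sum_g hA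
    sum_g.summable.tendsto_cofinite_zero (η := ε / (8 * C) * A) (by positivity)
  obtain ⟨u, k, eu, supp, mass_le, error_le⟩ := truncation hW e m n hmn
  have hu : A / 2 < ∫ x, u x ^ 2 := inner_mass.trans_le mass_le
  refine ⟨u, k, m, n, eu, supp, by linarith, error_le.trans ?_⟩
  have window_le := sum_le_hasSum (Finset.Ico m n)
    (fun j _ => integral_nonneg fun x => sq_nonneg (h x)) sum_h
  calc _ ≤ C * (ε / (4 * C) * A + ε / (8 * C) * A + ε / (8 * C) * A) :=
        mul_le_mul_of_nonneg_left (by linarith) hC0.le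
    _ = ε * (A / 2) := by field_simp; ring
    _ ≤ _ := mul_le_mul_of_nonneg_left hu.le hε.le

lemma IsWeakSol.exists_translate {a M δ : ℝ} {W u k : ℝ → ℝ} (e : IsWeakSol W u k)
    (hW : UnifLocL2 a W M) {n : ℤ} (hD : UnifLocL2 a (fun x => W x - W (x - n * a)) δ) :
    ∃ k' : ℝ → ℝ, IsWeakSol W (fun x => u (x - n * a)) k' ∧
      (∀ x, u (x - n * a) = 0 → k (x - n * a) = 0 → k' x = 0) ∧
      ∫ x, k' x ^ 2 ≤ 2 * (∫ x, k x ^ 2)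
        + 2 * (sobolevConst a M * δ ^ 2 * ((∫ x, u x ^ 2) + ∫ x, k x ^ 2)) := by
  have e' := e.comp_sub (n * a)
  obtain ⟨memLp_error, error_le⟩ := e'.memLp_mul_and_integral_sq_le (hW.comp_sub n) hD
  have translate_sq : ∀ f : ℝ → ℝ, ∫ x, f (x - n * a) ^ 2 = ∫ x, f x ^ 2 := fun f =>
    integral_sub_right_eq_self (fun x => f x ^ 2) _
  rw [translate_sq, translate_sq] at error_le
  have sum := e'.add_potential (hW.comp_sub n).locL2 memLp_error
  simp only [add_sub_cancel] at sum
  refine ⟨_, sum, fun x hu hk => by rw [hu, hk, mul_zero, add_zero], ?_⟩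
  have sq_le := integral_sub_sq_le e'.memLp_right memLp_error.neg
  simp only [Pi.neg_apply, sub_neg_eq_add, neg_sq, translate_sq] at sq_le
  linarith

lemma integral_sum_mul_sq_of_disjoint {ι : Type*} [Fintype ι] (c : ι → ℝ) {v : ι → ℝ → ℝ}
    (hv : ∀ i, MemLp (v i) 2 volume) (hdisj : ∀ i j, i ≠ j → ∀ x, v i x = 0 ∨ v j x = 0) :
    ∫ x, (∑ i, c i * v i x) ^ 2 = ∑ i, c i ^ 2 * ∫ x, v i x ^ 2 := by
  have sq_sum : ∀ x, (∑ i, c i * v i x) ^ 2 = ∑ i, c i ^ 2 * v i x ^ 2 := fun x => by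
    rw [sq, Finset.sum_mul_sum]
    refine Finset.sum_congr rfl fun i _ => ?_
    rw [Finset.sum_eq_single i (fun j _ hj => ?_) (by simp)]
    · ring
    · rcases hdisj i j hj.symm x with h | h <;> simp [h]
  simp_rw [sq_sum]
  rw [integral_finsetSum _ fun i _ => ((hv i).integrable_sq).const_mul _]
  exact Finset.sum_congr rfl fun i _ => integral_const_mul _ _

/-- The kernel is at most two-dimensional, so a nontrivial combination of three disjointly supported
functions is orthogonal to it. -/
theorem exists_sq_mul_integral_le_of_punctured_gap {a M κ : ℝ} {W : ℝ → ℝ}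
    (hW : UnifLocL2 a W M) (hκ : 0 < κ)
    (hgap : ∀ d : ℝ, d ≠ 0 → |d| < κ → ∃ T, IsInverse (fun x => W x - d) T)
    {u k : Fin 3 → ℝ → ℝ} (e : ∀ i, IsWeakSol W (u i) (k i))
    (hu : ∀ i j, i ≠ j → ∀ x, u i x = 0 ∨ u j x = 0)
    (hk : ∀ i j, i ≠ j → ∀ x, k i x = 0 ∨ k j x = 0) :
    ∃ i, κ ^ 2 * ∫ x, u i x ^ 2 ≤ ∫ x, k i x ^ 2 := by
  obtain ⟨c, hc0, orth⟩ := exists_inner_sum_smul_eq_zero hW.locL2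
    fun i => (e i).memLp_left.toLp (u i)
  have esum := IsWeakSol.sum_const_mul hW.locL2 Finset.univ c fun i _ => e i
  have toLp_sum : esum.memLp_left.toLp _ = ∑ i, c i • (e i).memLp_left.toLp (u i) := by
    refine Lp.ext ?_
    filter_upwards [esum.memLp_left.coeFn_toLp,
      coeFn_sum_smul Finset.univ c fun i => (e i).memLp_left.toLp (u i),
      eventually_all.2 fun i => (e i).memLp_left.coeFn_toLp] with x hleft hright hi
    rw [hleft, hright]
    exact Finset.sum_congr rfl fun i _ => by rw [hi i]
  have norm_le := mul_norm_le_norm_of_punctured_gap hW hκ hgap esum.toLp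
    fun g hg => toLp_sum ▸ orth g hg
  have sq_le := pow_le_pow_left₀ (by positivity) norm_le 2
  rw [mul_pow, norm_toLp_sq_eq_integral_sq, norm_toLp_sq_eq_integral_sq,
    integral_sum_mul_sq_of_disjoint c (fun i => (e i).memLp_left) hu,
    integral_sum_mul_sq_of_disjoint c (fun i => (e i).memLp_right) hk, Finset.mul_sum] at sq_le
  by_contra! hlt
  refine sq_le.not_gt (Finset.sum_lt_sum (fun i _ => ?_) ?_)
  · rw [mul_left_comm]
    exact mul_le_mul_of_nonneg_left (hlt i).le (sq_nonneg _)
  · obtain ⟨i, hi⟩ := Function.ne_iff.1 hc0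
    refine ⟨i, Finset.mem_univ i, ?_⟩
    rw [mul_left_comm]
    exact mul_lt_mul_of_pos_left (hlt i) (pow_pos (abs_pos.2 hi) 2 |>.trans_eq (sq_abs _))

lemma eq_of_sub_mul_mem_Ico {a x : ℝ} (ha : 0 < a) {m n N i j : ℤ} (hN : n - m ≤ N)
    (hi : x - (i * N : ℤ) * a ∈ Ico (m * a) (n * a))
    (hj : x - (j * N : ℤ) * a ∈ Ico (m * a) (n * a)) : i = j := by
  have sub_lt : ∀ i j : ℤ, x - (i * N : ℤ) * a ∈ Ico (m * a) (n * a) →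
      x - (j * N : ℤ) * a ∈ Ico (m * a) (n * a) → (j - i) * N < n - m := by
    intro i j hi hj
    have : (((j - i) * N : ℤ) : ℝ) * a < ((n - m : ℤ) : ℝ) * a := by
      push_cast [sub_mul] at hi hj ⊢
      linarith [hi.2, hj.1]
    exact_mod_cast lt_of_mul_lt_mul_right this ha.le
  have hij := sub_lt i j hi hj
  have hji := sub_lt j i hj hi
  rcases lt_trichotomy i j with h | h | h
  · nlinarith
  · exact h
  · nlinarith

theorem exists_disjoint_translates {a M δ : ℝ} {W u k : ℝ → ℝ} (hW : UnifLocL2 a W M)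
    {Q m n : ℤ} (hQ : 0 < Q)
    (hqp : ∀ i : ℤ, UnifLocL2 a (fun x => W x - W (x - (i * Q : ℤ) * a)) δ) (e : IsWeakSol W u k)
    (supp : ∀ x, x ∉ Ico (m * a) (n * a) → u x = 0 ∧ k x = 0) :
    ∃ u' k' : ℕ → ℝ → ℝ, (∀ i, IsWeakSol W (u' i) (k' i)) ∧
      (∀ i j, i ≠ j → ∀ x, u' i x = 0 ∨ u' j x = 0) ∧
      (∀ i j, i ≠ j → ∀ x, k' i x = 0 ∨ k' j x = 0) ∧
      (∀ i, ∫ x, u' i x ^ 2 = ∫ x, u x ^ 2) ∧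
      ∀ i, ∫ x, k' i x ^ 2 ≤ 2 * (∫ x, k x ^ 2)
        + 2 * (sobolevConst a M * δ ^ 2 * ((∫ x, u x ^ 2) + ∫ x, k x ^ 2)) := by
  set N := |n - m| * Q
  have hN : n - m ≤ N := (le_abs_self _).trans (le_mul_of_one_le_right (abs_nonneg _) hQ)
  have translates : ∀ i : ℕ, UnifLocL2 a (fun x => W x - W (x - ((i : ℤ) * N : ℤ) * a)) δ :=
    fun i => by simpa only [N, mul_assoc] using hqp (i * |n - m|)
  choose k' e' supp' error_le using fun i => e.exists_translate hW (translates i)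
  have disjoint : ∀ i j : ℕ, i ≠ j → ∀ x,
      x - ((i : ℤ) * N : ℤ) * a ∉ Ico (m * a) (n * a) ∨
        x - ((j : ℤ) * N : ℤ) * a ∉ Ico (m * a) (n * a) := by
    intro i j hij x
    by_contra! hx
    exact hij (by exact_mod_cast eq_of_sub_mul_mem_Ico hW.scale_pos hN hx.1 hx.2)
  exact ⟨_, k', e',
    fun i j hij x => (disjoint i j hij x).imp (fun h => (supp _ h).1) fun h => (supp _ h).1,
    fun i j hij x => (disjoint i j hij x).imp (fun h => supp' i x (supp _ h).1 (supp _ h).2)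
      fun h => supp' j x (supp _ h).1 (supp _ h).2,
    fun i => integral_sub_right_eq_self (fun x => u x ^ 2) _, error_le⟩

lemma exists_punctured_gap_of_not_accPt {E : ℝ} {V : ℝ → ℝ}
    (hacc : ¬ AccPt E (𝓟 (ContSpectrum V))) :
    ∃ κ > 0, ∀ d : ℝ, d ≠ 0 → |d| < κ → ∃ T, IsInverse (fun x => V x - E - d) T := by
  rw [accPt_iff_nhds] at hacc
  push Not at hacc
  obtain ⟨U, hU, isolated⟩ := hacc
  obtain ⟨κ, hκ, ball_subset⟩ := Metric.mem_nhds_iff.1 hU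
  refine ⟨κ, hκ, fun d hd hlt => ?_⟩
  simp only [sub_sub]
  refine notMem_contSpectrum_iff_exists_isInverse.1 fun hmem => hd ?_
  simpa using isolated (E + d) ⟨ball_subset (by simpa [Real.dist_eq] using hlt), hmem⟩

theorem preperfect_contSpectrum {a M : ℝ} {V : ℝ → ℝ} (hV : UnifLocL2 a V M)
    (hqp : ∀ δ > 0, ∃ Q : ℤ, 0 < Q ∧
      ∀ i : ℤ, UnifLocL2 a (fun x => V x - V (x - (i * Q : ℤ) * a)) δ) :
    Preperfect (ContSpectrum V) := by
  intro E hE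
  by_contra hacc
  have hW := hV.sub_const E
  obtain ⟨κ, hκ, hgap⟩ := exists_punctured_gap_of_not_accPt hacc
  set L := sobolevConst a (2 * (M + (1 + a) * |E|))
  have hL : 0 < L := sobolevConst_pos hV.scale_pos _
  set ε := min 1 (κ ^ 2 / 16)
  set δ := √(κ ^ 2 / (16 * L))
  have hδ : L * δ ^ 2 = κ ^ 2 / 16 := by
    rw [Real.sq_sqrt (by positivity)]
    field_simp
  obtain ⟨u, k, m, n, e, supp, hu, hk⟩ := exists_isWeakSol_supported (ε := ε) hW
    (fun c hc hlb => (notMem_contSpectrum_iff hV).2 ⟨c, hc, hlb⟩ hE) (by positivity)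
  obtain ⟨Q, hQ, quasi⟩ := hqp δ (by positivity)
  obtain ⟨u', k', e', disj_left, disj_right, mass_eq, error_le⟩ :=
    exists_disjoint_translates hW hQ (by simpa only [sub_sub_sub_cancel_right] using quasi) e supp
  obtain ⟨i, hi⟩ := exists_sq_mul_integral_le_of_punctured_gap hW hκ hgap
    (fun i : Fin 3 => e' i) (fun i j hij => disj_left i j (Fin.val_ne_of_ne hij))
    fun i j hij => disj_right i j (Fin.val_ne_of_ne hij)
  have error_i := error_le i
  rw [mass_eq] at hi
  rw [hδ] at error_i
  have hk_one : ∫ x, k x ^ 2 ≤ 1 * ∫ x, u x ^ 2 :=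
    hk.trans (mul_le_mul_of_nonneg_right (min_le_left _ _) hu.le)
  have hk_κ : ∫ x, k x ^ 2 ≤ κ ^ 2 / 16 * ∫ x, u x ^ 2 :=
    hk.trans (mul_le_mul_of_nonneg_right (min_le_right _ _) hu.le)
  nlinarith [mul_pos (pow_pos hκ 2) hu]

lemma exists_quasiPeriod_of_mem_LPC {a δ : ℝ} {Y : Set (L2I a)} {y : ℤ →ᵇ L2I a}
    (hy : y ∈ LPC a Y) (hδ : 0 < δ) :
    ∃ Q : ℤ, 0 < Q ∧ ∀ i j : ℤ, ‖y j - y (j - i * Q)‖ ≤ δ := by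
  obtain ⟨p, ⟨⟨Q, hQ, periodic⟩, -⟩, dist_lt⟩ := Metric.mem_closure_iff.1 hy (δ / 2) (by positivity)
  replace periodic : Function.Periodic (fun j => p j) (Q : ℤ) := periodic
  refine ⟨Q, by exact_mod_cast hQ, fun i j => ?_⟩
  have dist_le : ∀ j, dist (y j) (p j) ≤ δ / 2 := fun j => (dist_coe_le_dist j).trans dist_lt.le
  have dist_le' := dist_le (j - i * Q)
  rw [show p (j - i * Q) = p j from periodic.sub_int_mul_eq i] at dist_le'
  rw [← dist_eq_norm]
  linarith [dist_triangle_right (y j) (y (j - i * Q)) (p j), dist_le j]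

theorem preperfect_contSpectrum_of_mem_LPC {a : ℝ} (ha : 0 < a) {Y : Set (L2I a)}
    {y : ℤ →ᵇ L2I a} (hy : y ∈ LPC a Y) : Preperfect (ContSpectrum (aggC a y)) := by
  refine preperfect_contSpectrum (unifLocL2_aggC ha (norm_nonneg y) y y.norm_coe_le_norm)
    fun δ hδ => ?_
  obtain ⟨Q, hQ, quasi⟩ := exists_quasiPeriod_of_mem_LPC hy hδ
  refine ⟨Q, hQ, fun i => ?_⟩
  simpa only [aggC_sub_mul ha] using
    unifLocL2_aggC_sub ha hδ.le y (fun j => y (j - i * Q)) (quasi i)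

/-! ### Localization of approximate eigenfunctions in boxes -/

lemma IsWeakSol.congr_potential {W W' u k : ℝ → ℝ} (e : IsWeakSol W u k)
    (h : ∀ x, u x ≠ 0 → W x = W' x) : IsWeakSol W' u k := by
  refine ⟨e.memLp_left, e.memLp_right, fun φ hφ => ?_⟩
  rw [← e.weak φ hφ]
  refine integral_congr_ae (Eventually.of_forall fun x => ?_)
  by_cases hx : u x = 0
  · simp only [hx, zero_mul]
  · simp only [h x hx]

lemma sum_Ico_eq_add_interior_add {m n : ℤ} (hmn : m + 2 ≤ n) (f : ℤ → ℝ) :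
    ∑ j ∈ Finset.Ico m n, f j = f m + ∑ j ∈ Finset.Ico (m + 1) (n - 1), f j + f (n - 1) := by
  have insert_eq : Finset.Ico m n = insert m (insert (n - 1) (Finset.Ico (m + 1) (n - 1))) := by
    ext j
    simp only [Finset.mem_Ico, Finset.mem_insert]
    omega
  rw [insert_eq, Finset.sum_insert, Finset.sum_insert]
  · ring
  · simp
  · simp only [Finset.mem_insert, Finset.mem_Ico]
    omega

theorem exists_interior_mass_le {a : ℝ} (ha : 0 < a) (M : ℝ) : ∃ C > 0,
    ∀ {W W' g h : ℝ → ℝ} {c : ℝ}, UnifLocL2 a W M → 0 ≤ c → IsBoundedBelow W' c →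
    IsWeakSol W g h → ∀ m n : ℤ, m + 2 ≤ n → EqOn W W' (Ico (m * a) (n * a)) →
    c * ∑ j ∈ Finset.Ico (m + 1) (n - 1), ∫ x in block a j, g x ^ 2 ≤
      C * (∑ j ∈ Finset.Ico m n, (∫ x in block a j, h x ^ 2)
        + (∫ x in block a m, g x ^ 2) + ∫ x in block a (n - 1), g x ^ 2) := by
  obtain ⟨C, hC, truncation⟩ := exists_truncation ha M
  refine ⟨C, by linarith, fun hW hc hlb e m n hmn hWW => ?_⟩
  obtain ⟨u, k, eu, supp, mass_le, error_le⟩ := truncation hW e m n hmn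
  have eu' := eu.congr_potential fun x hx => hWW <| by
    by_contra hx'
    exact hx (supp x hx').1
  exact (mul_le_mul_of_nonneg_left mass_le hc).trans ((hlb _ _ eu').trans error_le)

lemma le_pow_mul_add_of_le_mul_add {S : ℕ → ℝ} {θ K H : ℝ} {r : ℕ} (hθ : 0 ≤ θ)
    (hK : θ * (1 + K) = K) (hKH : 0 ≤ K * H) (step : ∀ s < r, S s ≤ θ * (H + S (s + 1))) :
    ∀ t ≤ r, S (r - t) ≤ θ ^ t * S r + K * H := by
  intro t
  induction t with
  | zero => intro _; simpa using hKH
  | succ t ih =>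
    intro ht
    have step_t := step (r - (t + 1)) (by omega)
    rw [show r - (t + 1) + 1 = r - t by omega] at step_t
    have ih_t := ih (by omega)
    calc S (r - (t + 1)) ≤ θ * (H + S (r - t)) := step_t
      _ ≤ θ * (H + (θ ^ t * S r + K * H)) := by gcongr
      _ = θ ^ (t + 1) * S r + θ * (1 + K) * H := by ring
      _ = _ := by rw [hK]

theorem exists_window_decay {a : ℝ} (ha : 0 < a) (M : ℝ) {c : ℝ} (hc : 0 < c) : ∃ K > 0,
    ∀ {W W' g h : ℝ → ℝ}, UnifLocL2 a W M → IsBoundedBelow W' c → IsWeakSol W g h →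
    ∀ (p : ℤ) (r : ℕ), 1 ≤ r → EqOn W W' (Ico ((p - r : ℤ) * a) ((p + r : ℤ) * a)) →
    (∫ x in block a (p - 1), g x ^ 2) + (∫ x in block a p, g x ^ 2) ≤
      (K / (1 + K)) ^ (r - 1) * (∑ j ∈ Finset.Ico (p - r) (p + r), ∫ x in block a j, g x ^ 2)
        + K * ∑ j ∈ Finset.Ico (p - r) (p + r), ∫ x in block a j, h x ^ 2 := by
  obtain ⟨C, hC, interior⟩ := exists_interior_mass_le ha M
  refine ⟨C / c, by positivity, fun {W W' g h} hW hlb e p r hr hWW => ?_⟩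
  set K := C / c with hK
  have hK0 : 0 < K := by positivity
  set H := ∑ j ∈ Finset.Ico (p - r) (p + r), ∫ x in block a j, h x ^ 2
  have mass_nonneg : ∀ j, 0 ≤ ∫ x in block a j, h x ^ 2 :=
    fun j => integral_nonneg fun _ => sq_nonneg _
  let S : ℕ → ℝ := fun s => ∑ j ∈ Finset.Ico (p - s) (p + s), ∫ x in block a j, g x ^ 2
  have S_succ : ∀ s : ℕ, S (s + 1) = (∫ x in block a (p - (s + 1 : ℕ)), g x ^ 2) + S s
      + ∫ x in block a (p + (s + 1 : ℕ) - 1), g x ^ 2 := fun s => by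
    simp only [S]
    rw [sum_Ico_eq_add_interior_add (by omega)]
    congr 4 <;> push_cast <;> ring
  have step : ∀ s < r, S s ≤ K / (1 + K) * (H + S (s + 1)) := by
    intro s hs
    have window_le : ∑ j ∈ Finset.Ico (p - (s + 1 : ℕ)) (p + (s + 1 : ℕ)),
        ∫ x in block a j, h x ^ 2 ≤ H :=
      Finset.sum_le_sum_of_subset_of_nonneg (Finset.Ico_subset_Ico (by omega) (by omega))
        fun j _ _ => mass_nonneg j
    have subset : Ico ((p - (s + 1 : ℕ) : ℤ) * a) ((p + (s + 1 : ℕ) : ℤ) * a) ⊆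
        Ico ((p - r : ℤ) * a) ((p + r : ℤ) * a) :=
      Ico_subset_Ico (mul_le_mul_of_nonneg_right (by exact_mod_cast by omega) ha.le)
        (mul_le_mul_of_nonneg_right (by exact_mod_cast by omega) ha.le)
    have caccioppoli := interior hW hc.le hlb e _ _ (by omega) (hWW.mono subset)
    rw [show p - (s + 1 : ℕ) + 1 = p - s by push_cast; ring,
      show p + (s + 1 : ℕ) - 1 = p + s by push_cast; ring] at caccioppoli
    have le_annulus : S s ≤ K * (H + (S (s + 1) - S s)) := by
      rw [hK, div_mul_eq_mul_div, le_div_iff₀' hc]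
      refine caccioppoli.trans (mul_le_mul_of_nonneg_left ?_ hC.le)
      rw [S_succ, show p + (s + 1 : ℕ) - 1 = p + s by push_cast; ring]
      linarith
    rw [div_mul_eq_mul_div, le_div_iff₀ (by positivity)]
    linarith
  have decay := le_pow_mul_add_of_le_mul_add (by positivity) (by field_simp)
    (mul_nonneg hK0.le (Finset.sum_nonneg fun j _ => mass_nonneg j)) step (r - 1) (by omega)
  rw [show r - (r - 1) = 0 + 1 by omega, S_succ 0] at decay
  simpa [S] using decay

lemma setIntegral_block_nat_mul {a : ℝ} (ha : 0 < a) (q : ℕ) {f : ℝ → ℝ} (hf : Integrable f)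
    (i : ℤ) : ∫ x in block (q * a) i, f x =
      ∑ j ∈ Finset.Ico (i * q) ((i + 1) * q), ∫ x in block a j, f x := by
  rw [← setIntegral_Ico_eq_sum_block ha _ _ fun j => hf.integrableOn, block]
  push_cast
  rw [mul_assoc, mul_assoc]

lemma sum_window_le_add_box {a : ℝ} (ha : 0 < a) {q r : ℕ} (hrq : r ≤ q) {f : ℝ → ℝ}
    (hf : MemLp f 2) (i : ℤ) :
    ∑ j ∈ Finset.Ico (i * q - r) (i * q + r), ∫ x in block a j, f x ^ 2
      ≤ (∫ x in block (q * a) (i - 1), f x ^ 2) + ∫ x in block (q * a) i, f x ^ 2 := by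
  rw [setIntegral_block_nat_mul ha q hf.integrable_sq, setIntegral_block_nat_mul ha q
    hf.integrable_sq, sub_add_cancel,
    ← Finset.sum_union (Finset.Ico_disjoint_Ico_consecutive _ _ _),
    Finset.Ico_union_Ico_eq_Ico (by nlinarith) (by nlinarith)]
  exact Finset.sum_le_sum_of_subset_of_nonneg
    (Finset.Ico_subset_Ico (by rw [sub_one_mul]; omega) (by rw [add_one_mul]; omega))
    fun j _ _ => integral_nonneg fun _ => sq_nonneg _

theorem exists_box_truncation {a : ℝ} (ha : 0 < a) (M : ℝ) : ∃ C : ℝ, 0 < C ∧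
    ∀ {W g h : ℝ → ℝ}, UnifLocL2 a W M → IsWeakSol W g h → ∀ (q : ℕ) (i : ℤ) (X : ℝ), 2 ≤ q →
    (∫ x in block a (i * q), g x ^ 2) + (∫ x in block a ((i + 1) * q - 1), g x ^ 2) ≤ X →
    ∃ u k : ℝ → ℝ, IsWeakSol W u k ∧
      (∀ x, x ∉ Ico ((i * q : ℤ) * a) (((i + 1) * q : ℤ) * a) → u x = 0 ∧ k x = 0) ∧
      (∫ x in block (q * a) i, g x ^ 2) - X ≤ ∫ x, u x ^ 2 ∧
      ∫ x, k x ^ 2 ≤ C * ((∫ x in block (q * a) i, h x ^ 2) + X) := by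
  obtain ⟨C, hC, truncation⟩ := exists_truncation ha M
  refine ⟨C, by linarith, fun {W g h} hW e q i X hq edge => ?_⟩
  have hmn : i * (q : ℤ) + 2 ≤ (i + 1) * q := by rw [add_one_mul]; omega
  obtain ⟨u, k, eu, supp, mass_le, error_le⟩ := truncation hW e _ _ hmn
  refine ⟨u, k, eu, supp, ?_, error_le.trans (mul_le_mul_of_nonneg_left ?_ (by linarith))⟩
  · rw [setIntegral_block_nat_mul ha q e.memLp_left.integrable_sq, sum_Ico_eq_add_interior_add hmn]
    linarith
  · rw [setIntegral_block_nat_mul ha q e.memLp_right.integrable_sq]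
    linarith

/-- The edges of the boxes lie in the middle of the windows. -/
theorem exists_hasSum_edge_mass_le {a : ℝ} (ha : 0 < a) (M : ℝ) {c : ℝ} (hc : 0 < c) :
    ∃ D > 0, ∃ θ > 0, θ < 1 ∧ ∀ {W g h : ℝ → ℝ}, UnifLocL2 a W M → IsWeakSol W g h →
    ∀ q r : ℕ, 1 ≤ r → r ≤ q → (∀ i : ℤ, ∃ W', IsBoundedBelow W' c ∧
      EqOn W W' (Ico ((i * q - r : ℤ) * a) ((i * q + r : ℤ) * a))) →
    ∃ (X : ℤ → ℝ) (S : ℝ), HasSum X S ∧ S ≤ D * (θ ^ r * (∫ x, g x ^ 2) + ∫ x, h x ^ 2) ∧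
      ∀ i : ℤ, (∫ x in block a (i * q), g x ^ 2)
        + (∫ x in block a ((i + 1) * q - 1), g x ^ 2) ≤ X i := by
  obtain ⟨K, hK, decay⟩ := exists_window_decay ha M hc
  set θ := K / (1 + K)
  have hθ : 0 < θ := by positivity
  refine ⟨4 / θ + 4 * K, by positivity, θ, hθ, (div_lt_one (by positivity)).2 (by linarith),
    fun {W g h} hW e q r hr hrq windows => ?_⟩
  have hqa : 0 < q * a := mul_pos (by exact_mod_cast (by omega : 0 < q)) ha
  have sum_g := hasSum_setIntegral_block hqa e.memLp_left.integrable_sq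
  have sum_h := hasSum_setIntegral_block hqa e.memLp_right.integrable_sq
  have mass_nonneg : ∀ (f : ℝ → ℝ) (s : Set ℝ), 0 ≤ ∫ x in s, f x ^ 2 :=
    fun f s => integral_nonneg fun _ => sq_nonneg _
  set X : ℤ → ℝ := fun i =>
    θ ^ (r - 1) * ((∫ x in block (q * a) (i - 1), g x ^ 2) + ∫ x in block (q * a) i, g x ^ 2)
      + K * ((∫ x in block (q * a) (i - 1), h x ^ 2) + ∫ x in block (q * a) i, h x ^ 2)
  have edge : ∀ i : ℤ, (∫ x in block a (i * q - 1), g x ^ 2) + (∫ x in block a (i * q), g x ^ 2)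
      ≤ X i := fun i => by
    obtain ⟨W', hlb, heq⟩ := windows i
    exact (decay hW hlb e (i * q) r hr heq).trans <| add_le_add
      (mul_le_mul_of_nonneg_left (sum_window_le_add_box ha hrq e.memLp_left i) (by positivity))
      (mul_le_mul_of_nonneg_left (sum_window_le_add_box ha hrq e.memLp_right i) hK.le)
  have sum_X := ((((Equiv.subRight 1).hasSum_iff.2 sum_g).add sum_g).mul_left (θ ^ (r - 1))).add
    ((((Equiv.subRight 1).hasSum_iff.2 sum_h).add sum_h).mul_left K)
  refine ⟨_, _, sum_X.add ((Equiv.addRight 1).hasSum_iff.2 sum_X), ?_, fun i => ?_⟩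
  · have pow_eq : θ ^ r = θ ^ (r - 1) * θ := by rw [← pow_succ, Nat.sub_add_cancel hr]
    have hg : 0 ≤ K * (θ ^ r * ∫ x, g x ^ 2) := by positivity
    have hh : 0 ≤ 4 / θ * ∫ x, h x ^ 2 := by positivity
    have : 4 / θ * (θ ^ r * ∫ x, g x ^ 2) = 4 * (θ ^ (r - 1) * ∫ x, g x ^ 2) := by
      rw [pow_eq]
      field_simp
    linarith
  · change _ ≤ X i + X (i + 1)
    linarith [edge i, edge (i + 1), mass_nonneg g (block a (i * q - 1)),
      mass_nonneg g (block a ((i + 1) * q))]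

/-- An approximate null function is exponentially small at the edges of the boxes, so cutting it off
box by box costs little. -/
theorem exists_box_isWeakSol {a : ℝ} (ha : 0 < a) (M : ℝ) {c : ℝ} (hc : 0 < c) :
    ∃ C > 0, ∃ θ > 0, θ < 1 ∧ ∃ r₀ : ℕ, ∀ {W : ℝ → ℝ}, UnifLocL2 a W M →
    (∀ c' > 0, ¬ IsBoundedBelow W c') → ∀ q r : ℕ, r₀ ≤ r → 2 ≤ q → 1 ≤ r → r ≤ q →
    (∀ i : ℤ, ∃ W', IsBoundedBelow W' c ∧
      EqOn W W' (Ico ((i * q - r : ℤ) * a) ((i * q + r : ℤ) * a))) →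
    ∃ (i : ℤ) (u k : ℝ → ℝ), IsWeakSol W u k ∧
      (∀ x, x ∉ Ico ((i * q : ℤ) * a) (((i + 1) * q : ℤ) * a) → u x = 0 ∧ k x = 0) ∧
      0 < ∫ x, u x ^ 2 ∧ ∫ x, k x ^ 2 ≤ C * θ ^ r * ∫ x, u x ^ 2 := by
  obtain ⟨C, hC, truncation⟩ := exists_box_truncation ha M
  obtain ⟨D, hD, θ, hθ, hθ1, edge_mass⟩ := exists_hasSum_edge_mass_le ha M hc
  obtain ⟨r₀, hr₀⟩ := eventually_atTop.1 <|
    (tendsto_pow_atTop_nhds_zero_of_lt_one hθ.le hθ1).eventually_le_const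
      (show (0 : ℝ) < 1 / (4 * D) by positivity)
  refine ⟨2 * C * (1 + 2 * D), by positivity, θ, hθ, hθ1, r₀,
    fun {W} hW hn q r hrr₀ hq hr hrq windows => ?_⟩
  obtain ⟨g, h, e, hB, hlt⟩ :=
    exists_isWeakSol_lt_of_not_isBoundedBelow (hn (θ ^ r) (by positivity)) (by positivity)
  obtain ⟨X, S, sum_X, S_le, edge⟩ := edge_mass hW e q r hr hrq windows
  have hqa : 0 < q * a := mul_pos (by exact_mod_cast (by omega : 0 < q)) ha
  have sum_g := hasSum_setIntegral_block hqa e.memLp_left.integrable_sq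
  have sum_h := hasSum_setIntegral_block hqa e.memLp_right.integrable_sq
  set B := ∫ x, g x ^ 2
  set H := ∫ x, h x ^ 2
  have S_le_pow : S ≤ 2 * D * θ ^ r * B := by nlinarith
  have S_le_half : S ≤ B / 2 := by
    have := mul_le_mul_of_nonneg_right (hr₀ r hrr₀) (show 0 ≤ 2 * D * B by positivity)
    rw [show 1 / (4 * D) * (2 * D * B) = B / 2 by field_simp; ring] at this
    linarith
  obtain ⟨i, hi⟩ : ∃ i, C * ((∫ x in block (q * a) i, h x ^ 2) + X i) <
      2 * C * (1 + 2 * D) * θ ^ r * ((∫ x in block (q * a) i, g x ^ 2) - X i) := by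
    by_contra! hle
    have total := hasSum_le hle ((sum_g.sub sum_X).mul_left _) ((sum_h.add sum_X).mul_left _)
    have hC_lt : C * (H + S) < C * ((1 + 2 * D) * θ ^ r * B) :=
      mul_lt_mul_of_pos_left (by linarith) hC
    have half_le := mul_le_mul_of_nonneg_left (show B / 2 ≤ B - S by linarith)
      (show 0 ≤ 2 * C * (1 + 2 * D) * θ ^ r by positivity)
    linarith
  obtain ⟨u, k, eu, supp, mass_ge, error_le⟩ := truncation hW e q i (X i) hq (edge i)
  have bound := (error_le.trans hi.le).trans
    (mul_le_mul_of_nonneg_left mass_ge (show 0 ≤ 2 * C * (1 + 2 * D) * θ ^ r by positivity))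
  have hk : 0 ≤ ∫ x, k x ^ 2 := integral_nonneg fun _ => sq_nonneg _
  have excess_pos := pos_of_mul_pos_right ((hk.trans error_le).trans_lt hi) (by positivity)
  exact ⟨i, u, k, eu, supp, excess_pos.trans_le mass_ge, bound⟩

/-! ### Counting separated approximate eigenfunctions in a box -/

section Bessel

variable {H ι : Type*} [NormedAddCommGroup H] [InnerProductSpace ℝ H] [Fintype ι]

lemma norm_sum_smul_sq_le_of_abs_inner_le {v : ι → H} {β : ℝ} (hβ : 0 ≤ β) (hv : ∀ i, ‖v i‖ = 1)
    (hinner : ∀ i j, i ≠ j → |inner ℝ (v i) (v j)| ≤ β) (c : ι → ℝ) :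
    ‖∑ i, c i • v i‖ ^ 2 ≤ (1 + β * Fintype.card ι) * ∑ i, c i ^ 2 := by
  classical
  have term_le : ∀ i j, inner ℝ (c i • v i) (c j • v j)
      ≤ (if i = j then c i ^ 2 else 0) + β * ((c i ^ 2 + c j ^ 2) / 2) := by
    intro i j
    rw [real_inner_smul_left, real_inner_smul_right]
    split_ifs with hij
    · subst hij
      rw [real_inner_self_eq_norm_sq, hv]
      have : 0 ≤ β * ((c i ^ 2 + c i ^ 2) / 2) := by positivity
      linarith
    · calc c i * (c j * inner ℝ (v i) (v j)) ≤ |c i * (c j * inner ℝ (v i) (v j))| := le_abs_self _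
        _ = |inner ℝ (v i) (v j)| * (|c i| * |c j|) := by rw [abs_mul, abs_mul]; ring
        _ ≤ β * ((c i ^ 2 + c j ^ 2) / 2) := by
          refine mul_le_mul (hinner i j hij) ?_ (by positivity) hβ
          linarith [two_mul_le_add_sq |c i| |c j|, sq_abs (c i), sq_abs (c j)]
        _ = 0 + β * ((c i ^ 2 + c j ^ 2) / 2) := (zero_add _).symm
  calc ‖∑ i, c i • v i‖ ^ 2 = ∑ i, ∑ j, inner ℝ (c i • v i) (c j • v j) := by
        simp_rw [← real_inner_self_eq_norm_sq, sum_inner, inner_sum]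
    _ ≤ ∑ i, ∑ j, ((if i = j then c i ^ 2 else 0) + β * ((c i ^ 2 + c j ^ 2) / 2)) :=
        Finset.sum_le_sum fun i _ => Finset.sum_le_sum fun j _ => term_le i j
    _ = (1 + β * Fintype.card ι) * ∑ i, c i ^ 2 := by
        simp only [Finset.sum_add_distrib, Finset.sum_ite_eq, Finset.mem_univ, if_true,
          ← Finset.mul_sum, ← Finset.sum_div, Finset.sum_const, Finset.card_univ, nsmul_eq_mul]
        ring

lemma norm_sum_smul_sq_le_of_norm_le {v : ι → H} {ε : ℝ} (hv : ∀ i, ‖v i‖ ≤ ε) (c : ι → ℝ) :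
    ‖∑ i, c i • v i‖ ^ 2 ≤ ε ^ 2 * Fintype.card ι * ∑ i, c i ^ 2 := by
  have norm_le : ‖∑ i, c i • v i‖ ≤ ∑ i, |c i| * ε :=
    (norm_sum_le _ _).trans <| Finset.sum_le_sum fun i _ => by
      rw [norm_smul, Real.norm_eq_abs]
      exact mul_le_mul_of_nonneg_left (hv i) (abs_nonneg _)
  calc ‖∑ i, c i • v i‖ ^ 2 ≤ (∑ i, |c i| * ε) ^ 2 := pow_le_pow_left₀ (norm_nonneg _) norm_le 2
    _ ≤ Fintype.card ι * ∑ i, (|c i| * ε) ^ 2 := sq_sum_le_card_mul_sum_sq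
    _ = ε ^ 2 * Fintype.card ι * ∑ i, c i ^ 2 := by
        simp_rw [mul_pow, sq_abs, ← Finset.sum_mul]
        ring

lemma norm_sum_smul_add_smul_sq_le {u k : ι → H} {E : ι → ℝ} {A B R : ℝ} (hA : 0 ≤ A)
    (hE : ∀ i, |E i| ≤ R) (hu : ∀ c : ι → ℝ, ‖∑ i, c i • u i‖ ^ 2 ≤ A * ∑ i, c i ^ 2)
    (hk : ∀ c : ι → ℝ, ‖∑ i, c i • k i‖ ^ 2 ≤ B * ∑ i, c i ^ 2) (c : ι → ℝ) :
    ‖∑ i, c i • (k i + E i • u i)‖ ^ 2 ≤ 2 * (B + A * R ^ 2) * ∑ i, c i ^ 2 := by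
  have split : ∑ i, c i • (k i + E i • u i) = (∑ i, c i • k i) + ∑ i, (c i * E i) • u i := by
    simp_rw [smul_add, smul_smul, Finset.sum_add_distrib]
  have coeff_le : ∑ i, (c i * E i) ^ 2 ≤ R ^ 2 * ∑ i, c i ^ 2 := by
    rw [Finset.mul_sum]
    refine Finset.sum_le_sum fun i _ => ?_
    rw [mul_pow, mul_comm]
    exact mul_le_mul_of_nonneg_right (sq_le_sq' (abs_le.1 (hE i)).1 (abs_le.1 (hE i)).2)
      (sq_nonneg _)
  calc ‖∑ i, c i • (k i + E i • u i)‖ ^ 2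
      ≤ (‖∑ i, c i • k i‖ + ‖∑ i, (c i * E i) • u i‖) ^ 2 := by
        rw [split]
        exact pow_le_pow_left₀ (norm_nonneg _) (norm_add_le _ _) 2
    _ ≤ 2 * (‖∑ i, c i • k i‖ ^ 2 + ‖∑ i, (c i * E i) • u i‖ ^ 2) := add_sq_le
    _ ≤ 2 * (B * ∑ i, c i ^ 2 + A * (R ^ 2 * ∑ i, c i ^ 2)) := by
        gcongr
        exacts [hk c, (hu _).trans (mul_le_mul_of_nonneg_left coeff_le hA)]
    _ = 2 * (B + A * R ^ 2) * ∑ i, c i ^ 2 := by ring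

end Bessel

lemma IsWeakSol.add_smul_of_sub {V : ℝ → ℝ} {E : ℝ} {u k : L2R} (hV : LocL2 V)
    (e : IsWeakSol (fun x => V x - E) u k) : IsWeakSol V u (k + E • u : L2R) := by
  have := e.sub_const (hV.sub (locL2_of_continuous (f := fun _ => E) continuous_const)) (-E)
  rw [neg_smul, sub_neg_eq_add] at this
  exact this.congr (Eventually.of_forall fun x => by simp) (ae_eq_refl _) (ae_eq_refl _)

lemma abs_sub_mul_abs_inner_le {a M E E' ε : ℝ} {V : ℝ → ℝ} (hV : UnifLocL2 a V M)
    {u k u' k' : L2R} (e : IsWeakSol (fun x => V x - E) u k)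
    (e' : IsWeakSol (fun x => V x - E') u' k') (hu : ‖u‖ = 1) (hu' : ‖u'‖ = 1) (hk : ‖k‖ ≤ ε)
    (hk' : ‖k'‖ ≤ ε) : |E - E'| * |inner ℝ u u'| ≤ 2 * ε := by
  have symm : inner ℝ u (k' + E' • u') = inner ℝ (k + E • u) u' := by
    rw [inner_eq_integral_mul, inner_eq_integral_mul]
    exact (e.add_smul_of_sub hV.locL2).integral_mul_comm (e'.add_smul_of_sub hV.locL2) hV
  rw [inner_add_left, inner_add_right, real_inner_smul_left, real_inner_smul_right] at symm
  have bound : |inner ℝ u k'| ≤ ε := (abs_real_inner_le_norm _ _).trans (by rwa [hu, one_mul])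
  have bound' : |inner ℝ k u'| ≤ ε := (abs_real_inner_le_norm _ _).trans (by rwa [hu', mul_one])
  calc |E - E'| * |inner ℝ u u'| = |inner ℝ u k' - inner ℝ k u'| := by
        rw [← abs_mul]
        congr 1
        linarith
    _ ≤ |inner ℝ u k'| + |inner ℝ k u'| := abs_sub _ _
    _ ≤ 2 * ε := by linarith

lemma integral_sum_mul_sq_eq_norm_sq {ι : Type*} [Fintype ι] (c : ι → ℝ) (u : ι → L2R) :
    ∫ x, (∑ i, c i * u i x) ^ 2 = ‖∑ i, c i • u i‖ ^ 2 := by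
  rw [← integral_sq_eq_norm_sq]
  refine integral_congr_ae ?_
  filter_upwards [coeFn_sum_smul Finset.univ c u] with x hx
  rw [hx]

lemma graphNormSqOn_le_integral {W g h : ℝ → ℝ} (e : IsWeakSol W g h) (s : Set ℝ) :
    graphNormSqOn s g h ≤ (∫ x, g x ^ 2) + ∫ x, h x ^ 2 :=
  add_le_add
    (setIntegral_le_integral e.memLp_left.integrable_sq <| ae_of_all _ fun _ => sq_nonneg _)
    (setIntegral_le_integral e.memLp_right.integrable_sq <| ae_of_all _ fun _ => sq_nonneg _)

lemma mem_Icc_floor {a : ℝ} (ha : 0 < a) (x : ℝ) :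
    x ∈ Icc ((⌊x / a⌋ : ℝ) * a) ((⌊x / a⌋ : ℝ) * a + a) :=
  block_subset_Icc a _ ((mem_block_iff_floor_eq ha).2 rfl)

/-- The local estimate is applied to the combination with coefficients `G i x`, whose value at `x`
is the sum to be bounded. -/
theorem sum_sq_le_of_norm_sum_smul_sq_le {a M A : ℝ} {ι : Type*} [Fintype ι] {V : ℝ → ℝ}
    (hV : UnifLocL2 a V M) {u h : ι → L2R} {G P : ι → ℝ → ℝ} (e : ∀ i, IsWeakSol V (u i) (h i))
    (r : ∀ i, IsC1Rep V (u i) (h i) (G i) (P i)) (hA : 0 ≤ A)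
    (hbound : ∀ c : ι → ℝ,
      ‖∑ i, c i • u i‖ ^ 2 + ‖∑ i, c i • h i‖ ^ 2 ≤ A * ∑ i, c i ^ 2) (x : ℝ) :
    ∑ i, G i x ^ 2 ≤ sobolevConst a M * A := by
  have hC := (sobolevConst_pos hV.scale_pos M).le
  have eF := IsWeakSol.sum_const_mul hV.locL2 Finset.univ (fun i => G i x) fun i _ => e i
  have rF := IsC1Rep.sum_const_mul hV.locL2 (fun i => G i x) e r
  have local_bound := (rF.sq_le_graphNormSqOn hV eF (mem_Icc_floor hV.scale_pos x)).1
  have sq_le : (∑ i, G i x ^ 2) ^ 2 ≤ sobolevConst a M * A * ∑ i, G i x ^ 2 := by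
    calc (∑ i, G i x ^ 2) ^ 2 = (∑ i, G i x * G i x) ^ 2 := by simp_rw [← sq]
      _ ≤ sobolevConst a M * (‖∑ i, G i x • u i‖ ^ 2 + ‖∑ i, G i x • h i‖ ^ 2) := by
          refine local_bound.trans (mul_le_mul_of_nonneg_left ?_ hC)
          rw [← integral_sum_mul_sq_eq_norm_sq, ← integral_sum_mul_sq_eq_norm_sq]
          exact graphNormSqOn_le_integral eF _
      _ ≤ sobolevConst a M * A * ∑ i, G i x ^ 2 := by
          rw [mul_assoc]
          exact mul_le_mul_of_nonneg_left (hbound _) hC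
  rcases (Finset.sum_nonneg fun i _ => sq_nonneg (G i x)).eq_or_lt with hzero | hpos
  · rw [← hzero]
    positivity
  · exact le_of_mul_le_mul_right (by rwa [← sq]) hpos

lemma card_le_mul_of_sum_sq_le {α ι : Type*} [Fintype ι] [MeasurableSpace α] {μ : Measure α}
    [IsFiniteMeasure μ] {G : ι → α → ℝ} {C : ℝ} (hint : ∀ i, Integrable (fun x => G i x ^ 2) μ)
    (hone : ∀ i, ∫ x, G i x ^ 2 ∂μ = 1) (hC : ∀ x, ∑ i, G i x ^ 2 ≤ C) :
    (Fintype.card ι : ℝ) ≤ C * μ.real univ := by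
  calc (Fintype.card ι : ℝ) = ∫ x, ∑ i, G i x ^ 2 ∂μ := by
        rw [integral_finsetSum _ fun i _ => hint i]
        simp [hone]
    _ ≤ ∫ _, C ∂μ :=
        integral_mono (integrable_finsetSum _ fun i _ => hint i) (integrable_const C) hC
    _ = C * μ.real univ := by rw [integral_const, smul_eq_mul, mul_comm]

lemma setIntegral_sq_eq_norm_sq_of_ae_eq_zero {s : Set ℝ} (hs : MeasurableSet s) {u : L2R}
    {G : ℝ → ℝ} (hG : u =ᵐ[volume] G) (hu : ∀ᵐ x, x ∉ s → u x = 0) :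
    ∫ x in s, G x ^ 2 = ‖u‖ ^ 2 := by
  rw [← integral_sq_eq_norm_sq, ← integral_indicator hs]
  refine integral_congr_ae ?_
  filter_upwards [hu, hG] with x hux hGx
  by_cases hx : x ∈ s
  · rw [indicator_of_mem hx, hGx]
  · rw [indicator_of_notMem hx, hux hx, zero_pow two_ne_zero]

/-- By symmetry the eigenfunctions are almost orthogonal, so the local elliptic estimate bounds
`∑ |u i x|²` uniformly in `x`, and integration over the box counts them. -/
theorem exists_card_le_of_separated {a : ℝ} (ha : 0 < a) (M R : ℝ) : ∃ C > 0,
    ∀ {V : ℝ → ℝ}, UnifLocL2 a V M → ∀ (q : ℕ) {ι : Type*} [Fintype ι] {E : ι → ℝ} {u k : ι → L2R}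
    {ε η : ℝ}, 0 ≤ ε → 0 < η → (∀ i, |E i| ≤ R) → (∀ i j, i ≠ j → η ≤ |E i - E j|) →
    (∀ i, IsWeakSol (fun x => V x - E i) (u i) (k i)) →
    (∀ i, ∀ᵐ x, x ∉ Ico 0 (q * a) → u i x = 0) → (∀ i, ‖u i‖ = 1) → (∀ i, ‖k i‖ ≤ ε) →
    4 * ε * Fintype.card ι ≤ η → ε ^ 2 * Fintype.card ι ≤ 1 → (Fintype.card ι : ℝ) ≤ C * q := by
  have hC := sobolevConst_pos ha M
  refine ⟨sobolevConst a M * (3 / 2 + 2 * (1 + 3 / 2 * R ^ 2)) * a, by positivity, ?_⟩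
  intro V hV q ι _ E u k ε η hε hη hER hsep e hsupp hu hk hεη hε1
  have almost_orthogonal : ∀ i j, i ≠ j → |inner ℝ (u i) (u j)| ≤ 2 * ε / η := fun i j hij => by
    rw [le_div_iff₀ hη, mul_comm]
    exact (mul_le_mul_of_nonneg_right (hsep i j hij) (abs_nonneg _)).trans
      (abs_sub_mul_abs_inner_le hV (e i) (e j) (hu i) (hu j) (hk i) (hk j))
  have bound_u : ∀ c : ι → ℝ, ‖∑ i, c i • u i‖ ^ 2 ≤ 3 / 2 * ∑ i, c i ^ 2 := fun c => by
    refine (norm_sum_smul_sq_le_of_abs_inner_le (by positivity) hu almost_orthogonal c).trans ?_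
    refine mul_le_mul_of_nonneg_right ?_ (Finset.sum_nonneg fun i _ => sq_nonneg _)
    have : 2 * ε / η * Fintype.card ι ≤ 1 / 2 := by
      rw [div_mul_eq_mul_div, div_le_iff₀ hη]
      linarith
    linarith
  have bound_k : ∀ c : ι → ℝ, ‖∑ i, c i • k i‖ ^ 2 ≤ 1 * ∑ i, c i ^ 2 := fun c =>
    (norm_sum_smul_sq_le_of_norm_le hk c).trans
      (mul_le_mul_of_nonneg_right hε1 (Finset.sum_nonneg fun i _ => sq_nonneg _))
  have eV := fun i => (e i).add_smul_of_sub hV.locL2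
  choose G P r using fun i => (eV i).exists_isC1Rep hV.locL2
  have pointwise := sum_sq_le_of_norm_sum_smul_sq_le hV eV r
    (A := 3 / 2 + 2 * (1 + 3 / 2 * R ^ 2)) (by positivity) fun c => by
      rw [add_mul]
      exact add_le_add (bound_u c)
        (norm_sum_smul_add_smul_sq_le (by norm_num) hER bound_u bound_k c)
  have hcard := card_le_mul_of_sum_sq_le (μ := volume.restrict (Ico 0 (q * a)))
    (fun i => ((r i).continuous.pow 2).continuousOn.integrableOn_Icc.mono_set Ico_subset_Icc_self)
    (fun i => by
      rw [setIntegral_sq_eq_norm_sq_of_ae_eq_zero measurableSet_Ico (r i).ae_eq (hsupp i), hu,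
        one_pow]) pointwise
  rwa [measureReal_restrict_apply_univ, Real.volume_real_Ico_of_le (by positivity), sub_zero,
    mul_comm (q : ℝ), ← mul_assoc] at hcard

/-! ### Covering the spectrum of a periodic potential -/

lemma exists_finset_subset_iUnion_closedBall {X : Type*} [PseudoMetricSpace X] {A : Set X}
    {δ : ℝ} (hδ : 0 ≤ δ) {N : ℕ}
    (h : ∀ F : Finset X, ↑F ⊆ A → (F : Set X).Pairwise (fun x y => δ < dist x y) →
      F.card ≠ N + 1) :
    ∃ F : Finset X, F.card ≤ N ∧ A ⊆ ⋃ x ∈ F, Metric.closedBall x δ := by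
  lift δ to NNReal using hδ
  have packing_le : Metric.packingNumber δ A ≤ N := by
    refine iSup₂_le fun s hs => iSup_le fun hsep => ?_
    by_contra! hlt
    obtain ⟨t, hts, ht⟩ := exists_subset_encard_eq (Order.add_one_le_of_lt hlt)
    have hfin : t.Finite := finite_of_encard_eq_coe (k := N + 1) (by exact_mod_cast ht)
    refine h hfin.toFinset ?_ ?_ ?_
    · rw [hfin.coe_toFinset]
      exact hts.trans hs
    · rw [hfin.coe_toFinset]
      refine (hsep.mono hts).imp fun x y hxy => ?_
      rwa [edist_nndist, ENNReal.coe_lt_coe, ← NNReal.coe_lt_coe, coe_nndist] at hxy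
    · rw [hfin.encard_eq_coe_toFinset_card] at ht
      exact_mod_cast ht
  have covering_le := (Metric.coveringNumber_le_packingNumber δ A).trans packing_le
  obtain ⟨s, -, hfin, hcover, hcard⟩ := Metric.exists_set_encard_eq_coveringNumber
    (ne_top_of_le_ne_top (ENat.natCast_ne_top N) covering_le)
  refine ⟨hfin.toFinset, ?_, ?_⟩
  · rw [hfin.encard_eq_coe_toFinset_card] at hcard
    exact_mod_cast hcard.trans_le covering_le
  · simpa only [Finite.mem_toFinset] using Metric.isCover_iff_subset_iUnion_closedBall.1 hcover

lemma eqOn_aggC {a : ℝ} (ha : 0 < a) {y z : ℤ → L2I a} {m n : ℤ}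
    (h : ∀ j ∈ Ico m n, y j = z j) : EqOn (aggC a y) (aggC a z) (Ico (m * a) (n * a)) := by
  rintro x ⟨hm, hn⟩
  have hfloor : ⌊x / a⌋ ∈ Ico m n :=
    ⟨Int.le_floor.2 ((le_div_iff₀ ha).2 hm), Int.floor_lt.2 ((div_lt_iff₀ ha).2 hn)⟩
  simp only [aggC, h _ hfloor]

lemma aggC_sub_int_mul_of_periodic {a : ℝ} (ha : 0 < a) {y : ℤ → L2I a} {q : ℤ}
    (hy : Function.Periodic y q) (i : ℤ) (x : ℝ) : aggC a y (x - (i * q : ℤ) * a) = aggC a y x := by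
  rw [aggC_sub_mul ha]
  exact congrArg (fun z => aggC a z x) (funext fun j => hy.sub_int_mul_eq i)

lemma isBoundedBelow_aggC_add {a E c : ℝ} (ha : 0 < a) (y : ℤ → L2I a) (n : ℤ) :
    IsBoundedBelow (fun x => aggC a (fun j => y (j + n)) x - E) c ↔
      IsBoundedBelow (fun x => aggC a y x - E) c := by
  rw [← IsBoundedBelow.comp_sub_iff ((-n : ℤ) * a) (W := fun x => aggC a y x - E)]
  simp only [aggC_sub_mul ha, sub_neg_eq_add]

lemma contSpectrum_aggC_add {a M : ℝ} (ha : 0 < a) (hM : 0 ≤ M) {y : ℤ → L2I a}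
    (hy : ∀ j, ‖y j‖ ≤ M) (n : ℤ) :
    ContSpectrum (aggC a fun j => y (j + n)) = ContSpectrum (aggC a y) := by
  ext E
  rw [← not_iff_not, notMem_contSpectrum_iff (unifLocL2_aggC ha hM y hy),
    notMem_contSpectrum_iff (unifLocL2_aggC ha hM _ fun j => hy (j + n))]
  simp only [isBoundedBelow_aggC_add ha]

lemma IsWeakSol.exists_normalized {W u k : ℝ → ℝ} {B : ℝ} (e : IsWeakSol W u k)
    (hu : 0 < ∫ x, u x ^ 2) (hk : ∫ x, k x ^ 2 ≤ B * ∫ x, u x ^ 2) :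
    ∃ U K : L2R, IsWeakSol W U K ∧ (∀ᵐ x, u x = 0 → U x = 0) ∧ ‖U‖ = 1 ∧ ‖K‖ ≤ √B := by
  set t : ℝ := (√(∫ x, u x ^ 2))⁻¹ with ht
  have ht_sq : t ^ 2 * ∫ x, u x ^ 2 = 1 := by
    rw [ht, inv_pow, Real.sq_sqrt hu.le, inv_mul_cancel₀ hu.ne']
  have et := e.const_mul t
  refine ⟨_, _, et.toLp, ?_, ?_, Real.le_sqrt_of_sq_le ?_⟩
  · filter_upwards [et.memLp_left.coeFn_toLp] with x hx hux
    rw [hx, hux, mul_zero]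
  · refine (sq_eq_sq₀ (norm_nonneg _) zero_le_one).1 ?_
    simp_rw [norm_toLp_sq_eq_integral_sq et.memLp_left, mul_pow]
    rw [integral_const_mul, ht_sq, one_pow]
  · simp_rw [norm_toLp_sq_eq_integral_sq et.memLp_right, mul_pow]
    rw [integral_const_mul]
    calc t ^ 2 * ∫ x, k x ^ 2 ≤ t ^ 2 * (B * ∫ x, u x ^ 2) := by gcongr
      _ = B := by rw [mul_left_comm, ht_sq, mul_one]

lemma IsWeakSol.exists_normalized_of_periodic {a : ℝ} (ha : 0 < a) {y : ℤ → L2I a} {q : ℕ}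
    (hy : Function.Periodic y (q : ℤ)) {E B : ℝ} {i : ℤ} {u k : ℝ → ℝ}
    (e : IsWeakSol (fun x => aggC a y x - E) u k)
    (hsupp : ∀ x, x ∉ Ico ((i * q : ℤ) * a) (((i + 1) * q : ℤ) * a) → u x = 0)
    (hu : 0 < ∫ x, u x ^ 2) (hk : ∫ x, k x ^ 2 ≤ B * ∫ x, u x ^ 2) :
    ∃ U K : L2R, IsWeakSol (fun x => aggC a y x - E) U K ∧
      (∀ᵐ x, x ∉ Ico 0 (q * a) → U x = 0) ∧ ‖U‖ = 1 ∧ ‖K‖ ≤ √B := by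
  set τ : ℝ := (-i * q : ℤ) * a with hτ
  have translated :
      IsWeakSol (fun x => aggC a y x - E) (fun x => u (x - τ)) fun x => k (x - τ) := by
    simpa only [hτ, aggC_sub_int_mul_of_periodic ha hy] using e.comp_sub τ
  rw [← integral_sub_right_eq_self (fun x => u x ^ 2) τ] at hu hk
  rw [← integral_sub_right_eq_self (fun x => k x ^ 2) τ] at hk
  obtain ⟨U, K, eUK, hU, hnorm⟩ := translated.exists_normalized hu hk
  refine ⟨U, K, eUK, hU.mono fun x hx hxn => hx (hsupp _ fun hmem => hxn ?_), hnorm⟩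
  rw [hτ] at hmem
  push_cast at hmem
  constructor <;> linarith [hmem.1, hmem.2]

theorem exists_approx_eigenfunction {a : ℝ} (ha : 0 < a) (M R : ℝ) {c : ℝ} (hc : 0 < c) :
    ∃ B > 0, ∃ θ > 0, θ < 1 ∧ ∃ r₀ : ℕ, ∀ {w : ℤ → L2I a}, (∀ j, ‖w j‖ ≤ M) →
    ∀ {q r : ℕ}, r₀ ≤ r → 2 ≤ q → 1 ≤ r → r ≤ q → Function.Periodic w (q : ℤ) →
    ∀ {E : ℝ}, |E| ≤ R → E ∈ ContSpectrum (aggC a w) →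
    ∀ {z : ℤ → L2I a}, IsBoundedBelow (fun x => aggC a z x - E) c →
    (∀ j ∈ Ico (-r : ℤ) r, w j = z j) →
    ∃ U K : L2R, IsWeakSol (fun x => aggC a w x - E) U K ∧
      (∀ᵐ x, x ∉ Ico 0 (q * a) → U x = 0) ∧ ‖U‖ = 1 ∧ ‖K‖ ≤ √(B * θ ^ r) := by
  obtain ⟨B, hB, θ, hθ, hθ1, r₀, box⟩ := exists_box_isWeakSol ha (2 * (M + (1 + a) * R)) hc
  refine ⟨B, hB, θ, hθ, hθ1, r₀, ?_⟩
  intro w hw q r hr hq hr1 hrq hper E hER hE z hz hwz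
  have hV := unifLocL2_aggC ha ((norm_nonneg _).trans (hw 0)) w hw
  have not_bounded : ∀ c' > 0, ¬ IsBoundedBelow (fun x => aggC a w x - E) c' := fun c' hc' hlb =>
    (notMem_contSpectrum_iff hV).2 ⟨c', hc', hlb⟩ hE
  obtain ⟨i, u, k, e, hsupp, hu, hk⟩ :=
    box ((hV.sub_const E).mono (by gcongr)) not_bounded q r hr hq hr1 hrq fun i => by
      refine ⟨_, hz.comp_sub ((i * q : ℤ) * a), fun x hx => ?_⟩
      simp only
      rw [← aggC_sub_int_mul_of_periodic ha hper i x]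
      congr 1
      refine eqOn_aggC ha hwz ?_
      push_cast at hx ⊢
      constructor <;> linarith [hx.1, hx.2]
  exact e.exists_normalized_of_periodic ha hper (fun x hx => (hsupp x hx).1) hu hk

theorem exists_finset_cover_contSpectrum {a : ℝ} (ha : 0 < a) (M R : ℝ) {c : ℝ} (hc : 0 < c) :
    ∃ C > (0 : ℝ), ∃ B > (0 : ℝ), ∃ θ > (0 : ℝ), θ < 1 ∧
    ∃ r₀ : ℕ, ∀ {w : ℤ → L2I a}, (∀ j, ‖w j‖ ≤ M) →
    ∀ {q r : ℕ}, r₀ ≤ r → 2 ≤ q → 1 ≤ r → r ≤ q → Function.Periodic w (q : ℤ) →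
    ∀ {A : Set ℝ}, (∀ E ∈ A, |E| ≤ R) → A ⊆ ContSpectrum (aggC a w) →
    (∀ E ∈ A, ∃ z : ℤ → L2I a, IsBoundedBelow (fun x => aggC a z x - E) c ∧
      ∀ j ∈ Ico (-r : ℤ) r, w j = z j) →
    B * θ ^ r * (C * q + 1) ≤ 1 → ∃ F : Finset ℝ, (F.card : ℝ) ≤ C * q ∧
      A ⊆ ⋃ x ∈ F, Metric.closedBall x (4 * √(B * θ ^ r) * (C * q + 1)) := by
  obtain ⟨C, hC, count⟩ := exists_card_le_of_separated ha M R
  obtain ⟨B, hB, θ, hθ, hθ1, r₀, approx⟩ := exists_approx_eigenfunction ha M R hc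
  refine ⟨C, hC, B, hB, θ, hθ, hθ1, r₀, ?_⟩
  intro w hw q r hr hq hr1 hrq hper A hAR hA hwin hsmall
  have hV := unifLocL2_aggC ha ((norm_nonneg _).trans (hw 0)) w hw
  have hCq : 0 ≤ C * q := by positivity
  have state : ∀ E ∈ A, ∃ U K : L2R, IsWeakSol (fun x => aggC a w x - E) U K ∧
      (∀ᵐ x, x ∉ Ico 0 (q * a) → U x = 0) ∧ ‖U‖ = 1 ∧ ‖K‖ ≤ √(B * θ ^ r) := fun E hE => by
    obtain ⟨z, hz, hwz⟩ := hwin E hE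
    exact approx hw hr hq hr1 hrq hper (hAR E hE) (hA hE) hz hwz
  choose! U K e hsupp hU hK using state
  set η : ℝ := 4 * √(B * θ ^ r) * (C * q + 1)
  have hη_pos : 0 < η := by positivity
  obtain ⟨F, hF, hcover⟩ := exists_finset_subset_iUnion_closedBall (A := A) hη_pos.le
    (N := ⌊C * (q : ℝ)⌋₊) fun F hFA hsep hcard => by
      have card_eq : (Fintype.card F : ℝ) = ⌊C * (q : ℝ)⌋₊ + 1 := by
        rw [Fintype.card_coe, hcard, Nat.cast_add_one]
      have card_le : (Fintype.card F : ℝ) ≤ C * q + 1 := by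
        rw [card_eq]
        gcongr
        exact Nat.floor_le hCq
      refine (Nat.lt_floor_add_one (C * (q : ℝ))).not_ge (card_eq ▸ ?_)
      refine count hV q (Real.sqrt_nonneg (B * θ ^ r)) hη_pos (fun x => hAR x (hFA x.2))
        (fun x y hxy => (hsep x.2 y.2 (Subtype.coe_ne_coe.2 hxy)).le)
        (fun x => e x (hFA x.2)) (fun x => hsupp x (hFA x.2)) (fun x => hU x (hFA x.2))
        (fun x => hK x (hFA x.2)) (mul_le_mul_of_nonneg_left card_le (by positivity)) ?_
      rw [Real.sq_sqrt (by positivity)]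
      exact (mul_le_mul_of_nonneg_left card_le (by positivity)).trans hsmall
  exact ⟨F, (Nat.cast_le.2 hF).trans (Nat.floor_le hCq), hcover⟩

/-! ### Hausdorff dimension from thin covers -/

section ThinCover

variable {X : Type*} [MetricSpace X]

/-- A set is `n`-thin if finitely many balls of a common radius cover it, where this radius is
smaller than `1 / (n + 1)` times the inverse `n`-th power of the number of balls. Sets which are
`n`-thin for all `n` have Hausdorff dimension zero, and thinness of the spectrum is stable. -/
def HasThinCover (n : ℕ) (s : Set X) : Prop :=
  ∃ F : Finset X, ∃ r : ℝ, 0 < r ∧ s ⊆ ⋃ x ∈ F, Metric.ball x r ∧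
    (F.card : ℝ) ^ n * r < 1 / (n + 1)

lemma HasThinCover.mono {n : ℕ} {s t : Set X} (h : HasThinCover n t) (hst : s ⊆ t) :
    HasThinCover n s := by
  obtain ⟨F, r, hr, hcover, hlt⟩ := h
  exact ⟨F, r, hr, hst.trans hcover, hlt⟩

lemma ediam_ball_le_ofReal (x : X) {r s : ℝ} (hrs : 2 * r ≤ s) :
    Metric.ediam (Metric.ball x r) ≤ ENNReal.ofReal s := by
  rw [← Metric.eball_ofReal]
  calc Metric.ediam (Metric.eball x (ENNReal.ofReal r)) ≤ 2 * ENNReal.ofReal r :=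
        Metric.ediam_eball_le
    _ = ENNReal.ofReal (2 * r) := by rw [ENNReal.ofReal_mul zero_le_two, ENNReal.ofReal_ofNat]
    _ ≤ ENNReal.ofReal s := ENNReal.ofReal_le_ofReal hrs

lemma sum_ediam_ball_rpow_le (F : Finset X) {n : ℕ} {r d ε : ℝ} (hr : 0 < r) (hd : 0 < d)
    (hnd : 1 ≤ n * d) (h : (F.card : ℝ) ^ n * r ≤ ε) :
    ∑ x : F, Metric.ediam (Metric.ball (x : X) r) ^ d ≤ ENNReal.ofReal ((2 * ε) ^ d) := by
  rcases F.eq_empty_or_nonempty with rfl | hF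
  · simp
  have one_le_card : (1 : ℝ) ≤ F.card := by exact_mod_cast Finset.card_pos.2 hF
  have card_le : (F.card : ℝ) ≤ ((F.card : ℝ) ^ n) ^ d := by
    rw [← Real.rpow_natCast, ← Real.rpow_mul (by positivity)]
    exact Real.self_le_rpow_of_one_le one_le_card hnd
  calc ∑ x : F, Metric.ediam (Metric.ball (x : X) r) ^ d
      ≤ ∑ _x : F, ENNReal.ofReal ((2 * r) ^ d) := by
        gcongr with x
        rw [← ENNReal.ofReal_rpow_of_pos (by positivity)]
        exact ENNReal.rpow_le_rpow (ediam_ball_le_ofReal _ le_rfl) hd.le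
    _ = ENNReal.ofReal (F.card * (2 * r) ^ d) := by
        rw [Finset.sum_const, Finset.card_univ, Fintype.card_coe, nsmul_eq_mul,
          ENNReal.ofReal_mul (by positivity), ENNReal.ofReal_natCast]
    _ ≤ ENNReal.ofReal ((2 * ε) ^ d) := by
        refine ENNReal.ofReal_le_ofReal ?_
        calc (F.card : ℝ) * (2 * r) ^ d ≤ ((F.card : ℝ) ^ n) ^ d * (2 * r) ^ d := by gcongr
          _ = ((F.card : ℝ) ^ n * (2 * r)) ^ d := by
            rw [Real.mul_rpow (x := (F.card : ℝ) ^ n) (by positivity) (by positivity)]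
          _ ≤ (2 * ε) ^ d :=
            Real.rpow_le_rpow (by positivity) (by linarith) hd.le

lemma hausdorffMeasure_eq_zero_of_hasThinCover [MeasurableSpace X] [BorelSpace X] {s : Set X}
    (h : ∀ᶠ n in atTop, HasThinCover n s) {d : ℝ} (hd : 0 < d) :
    Measure.hausdorffMeasure d s = 0 := by
  have choice : ∀ n, HasThinCover n s → ∃ (F : Finset X) (r : ℝ), 0 < r ∧
      s ⊆ ⋃ x ∈ F, Metric.ball x r ∧ (F.card : ℝ) ^ n * r < 1 / (n + 1) := fun _ hn => hn
  choose! F r hFr using choice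
  have bound_tendsto : Tendsto (fun n : ℕ => 2 * (1 / ((n : ℝ) + 1))) atTop (𝓝 0) := by
    simpa only [mul_zero] using tendsto_one_div_add_atTop_nhds_zero_nat.const_mul (2 : ℝ)
  have measure_le := Measure.hausdorffMeasure_le_liminf_sum d s (l := atTop)
    (fun n : ℕ => ENNReal.ofReal (2 * (1 / ((n : ℝ) + 1))))
    (by simpa only [ENNReal.ofReal_zero] using ENNReal.tendsto_ofReal bound_tendsto)
    (fun n (x : F n) => Metric.ball (x : X) (r n))
    (by
      filter_upwards [h] with n hn x
      obtain ⟨hr, -, hlt⟩ := hFr n hn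
      have one_le_card : (1 : ℝ) ≤ (F n).card := by exact_mod_cast Finset.card_pos.2 ⟨x.1, x.2⟩
      have := le_mul_of_one_le_left hr.le (one_le_pow₀ one_le_card (n := n))
      exact ediam_ball_le_ofReal _ (by linarith))
    (by
      filter_upwards [h] with n hn
      exact (hFr n hn).2.1.trans (iUnion_subtype _ fun x : F n => Metric.ball (x : X) (r n)).ge)
  have sum_tendsto : Tendsto (fun n : ℕ => ∑ x : F n, Metric.ediam (Metric.ball (x : X) (r n)) ^ d)
      atTop (𝓝 0) := by
    have majorant := ENNReal.tendsto_ofReal (bound_tendsto.rpow_const (p := d) (Or.inr hd.le))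
    rw [Real.zero_rpow hd.ne', ENNReal.ofReal_zero] at majorant
    refine tendsto_of_tendsto_of_tendsto_of_le_of_le' tendsto_const_nhds majorant
      (Eventually.of_forall fun _ => zero_le) ?_
    filter_upwards [h, eventually_ge_atTop ⌈1 / d⌉₊] with n hn hnd
    obtain ⟨hr, -, hlt⟩ := hFr n hn
    exact sum_ediam_ball_rpow_le _ hr hd ((div_le_iff₀ hd).1 (Nat.ceil_le.1 hnd)) hlt.le
  exact le_antisymm (measure_le.trans_eq sum_tendsto.liminf_eq) zero_le

lemma dimH_eq_zero_of_hasThinCover {s : Set X} (h : ∀ᶠ n in atTop, HasThinCover n s) :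
    dimH s = 0 := by
  borelize X
  by_contra hne
  obtain ⟨d, hd, hlt⟩ := ENNReal.lt_iff_exists_nnreal_btwn.1 (pos_iff_ne_zero.2 hne)
  refine hlt.not_ge (dimH_le_of_hausdorffMeasure_ne_top ?_)
  rw [hausdorffMeasure_eq_zero_of_hasThinCover h (by exact_mod_cast hd)]
  exact ENNReal.zero_ne_top

end ThinCover

/-- The energies of absolute value at most `n` and of distance at least `1 / (n + 1)` from the
exceptional set `S`; for closed `S` this is a compact exhaustion of the complement of `S`. -/
def energyWindow (S : Set ℝ) (n : ℕ) : Set ℝ :=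
  Metric.closedBall 0 n \ Metric.thickening (1 / ((n : ℝ) + 1)) S

lemma isCompact_energyWindow (S : Set ℝ) (n : ℕ) : IsCompact (energyWindow S n) :=
  (isCompact_closedBall _ _).diff Metric.isOpen_thickening

lemma energyWindow_mono (S : Set ℝ) : Monotone (energyWindow S) := fun m n hmn => by
  unfold energyWindow
  gcongr

lemma disjoint_energyWindow (S : Set ℝ) (n : ℕ) : Disjoint (energyWindow S n) S :=
  disjoint_sdiff_left.mono_right (Metric.self_subset_thickening (by positivity) S)

lemma exists_mem_energyWindow {S : Set ℝ} (hS : IsClosed S) {E : ℝ} (hE : E ∉ S) :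
    ∃ n, E ∈ energyWindow S n := by
  rw [← hS.closure_eq, Metric.closure_eq_iInter_thickening] at hE
  simp only [mem_iInter, not_forall] at hE
  obtain ⟨ε, hε, hEε⟩ := hE
  obtain ⟨k, hk⟩ := exists_nat_one_div_lt hε
  obtain ⟨l, hl⟩ := exists_nat_ge |E|
  refine ⟨max k l, ?_, fun hmem => hEε (Metric.thickening_mono ?_ S hmem)⟩
  · rw [Metric.mem_closedBall, dist_zero_right, Real.norm_eq_abs]
    exact hl.trans (by exact_mod_cast le_max_right k l)
  · refine le_trans ?_ hk.le
    gcongr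
    exact le_max_left k l

lemma countable_of_isDiscreteSet {S : Set ℝ} (hS : IsDiscreteSet S) : S.Countable := by
  have := discreteTopology_of_noAccPts fun x (_ : x ∈ S) => hS x
  exact TopologicalSpace.separableSpace_iff_countable.1 inferInstance

lemma dimH_eq_zero_of_hasThinCover_energyWindow {S s : Set ℝ} (hS : IsDiscreteSet S)
    (h : ∀ n, HasThinCover n (s ∩ energyWindow S n)) : dimH s = 0 := by
  have closed : IsClosed S := isClosed_iff_accPt.2 fun x hx => absurd hx (hS x)
  have subset : s ⊆ S ∪ ⋃ n, s ∩ energyWindow S n := fun E hE =>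
    or_iff_not_imp_left.2 fun hES =>
      mem_iUnion.2 <| (exists_mem_energyWindow closed hES).imp fun _ hn => ⟨hE, hn⟩
  refine le_antisymm ((dimH_mono subset).trans ?_) zero_le
  rw [dimH_union, (countable_of_isDiscreteSet hS).dimH_zero, dimH_iUnion]
  refine max_le le_rfl (iSup_le fun m => (dimH_eq_zero_of_hasThinCover ?_).le)
  filter_upwards [eventually_ge_atTop m] with n hn
  exact (h n).mono (inter_subset_inter_right _ (energyWindow_mono S hn))

lemma interior_eq_empty_of_dimH_eq_zero {s : Set ℝ} (h : dimH s = 0) : interior s = ∅ := by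
  by_contra hne
  have dim_one := Real.dimH_of_nonempty_interior (nonempty_iff_ne_empty.2 hne)
  rw [h, Module.finrank_self, Nat.cast_one] at dim_one
  exact zero_ne_one dim_one

/-! ### Stability of gaps -/

theorem exists_isBoundedBelow_of_notMem_contSpectrum {a M : ℝ} (ha : 0 < a) {y₀ : ℤ → L2I a}
    (hy₀ : ∀ j, ‖y₀ j‖ ≤ M) {E₀ : ℝ} (hE₀ : E₀ ∉ ContSpectrum (aggC a y₀)) :
    ∃ δ > 0, ∃ c > 0, ∀ (y : ℤ → L2I a) (E : ℝ), (∀ j, dist (y j) (y₀ j) ≤ δ) →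
      dist E E₀ ≤ δ → IsBoundedBelow (fun x => aggC a y x - E) c := by
  have hV := unifLocL2_aggC ha ((norm_nonneg _).trans (hy₀ 0)) y₀ hy₀
  obtain ⟨c, hc, hlb⟩ := (notMem_contSpectrum_iff hV).1 hE₀
  obtain ⟨δ, hδ, c', hc', perturb⟩ :=
    exists_isBoundedBelow_add (M := 2 * (M + (1 + a) * |E₀|)) ha hc
  refine ⟨δ / (2 * (2 + a)), by positivity, c', hc', fun y E hy hE => ?_⟩
  have potential_diff := unifLocL2_aggC_sub ha (by positivity) y y₀ fun j =>
    (dist_eq_norm (y j) (y₀ j)).symm.trans_le (hy j)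
  have energy_diff : UnifLocL2 a (fun _ => E₀ - E) ((1 + a) * (δ / (2 * (2 + a)))) :=
    (UnifLocL2.const ha _).mono (by rw [abs_sub_comm]; gcongr; exact hE)
  have budget : 2 * (δ / (2 * (2 + a)) + (1 + a) * (δ / (2 * (2 + a)))) = δ := by
    field_simp
    ring
  have perturbed := perturb _ _ (hV.sub_const E₀) (budget ▸ potential_diff.add energy_diff) hlb
  convert! perturbed using 2 with x
  ring

/-- Outside the balls of a thin cover, the given compact set lies in gaps, which are stable. -/
theorem isOpen_setOf_hasThinCover {a : ℝ} (ha : 0 < a) (n : ℕ) {K : Set ℝ} (hK : IsCompact K) :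
    IsOpen {y : ℤ →ᵇ L2I a | HasThinCover n (ContSpectrum (aggC a y) ∩ K)} := by
  rw [isOpen_iff_mem_nhds]
  rintro y ⟨F, r, hr, hcover, hlt⟩
  have uncovered_gaps : ∀ᶠ z : ℤ →ᵇ L2I a in 𝓝 y, ∀ E ∈ K \ ⋃ x ∈ F, Metric.ball x r,
      E ∉ ContSpectrum (aggC a z) := by
    refine (hK.diff (isOpen_biUnion fun _ _ => Metric.isOpen_ball)
      ).eventually_forall_of_forall_eventually fun E hE => ?_
    obtain ⟨δ, hδ, c, hc, stable⟩ := exists_isBoundedBelow_of_notMem_contSpectrum ha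
      y.norm_coe_le_norm fun hmem => hE.2 (hcover ⟨hmem, hE.1⟩)
    filter_upwards [prod_mem_nhds (Metric.closedBall_mem_nhds y hδ)
      (Metric.closedBall_mem_nhds E hδ)] with z hz
    exact (notMem_contSpectrum_iff
      (unifLocL2_aggC ha (norm_nonneg z.1) z.1 z.1.norm_coe_le_norm)).2
      ⟨c, hc, stable z.1 z.2 (fun j => (dist_coe_le_dist j).trans hz.1) hz.2⟩
  filter_upwards [uncovered_gaps] with z hz
  exact ⟨F, r, hr, fun E hE => by_contra fun hout => hz E ⟨hE.2, hout⟩ hE.1, hlt⟩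

theorem exists_finite_family_isBoundedBelow {a M : ℝ} (ha : 0 < a) {Z : Set (ℤ → L2I a)}
    (hZ : ∀ z ∈ Z, ∀ j, ‖z j‖ ≤ M) {K : Set ℝ} (hK : IsCompact K)
    (gap : ∀ E ∈ K, ∃ z ∈ Z, E ∉ ContSpectrum (aggC a z)) :
    ∃ F ⊆ Z, F.Finite ∧ ∃ c > 0, ∀ E ∈ K, ∃ z ∈ F, IsBoundedBelow (fun x => aggC a z x - E) c := by
  refine hK.induction_on (p := fun s => ∃ F ⊆ Z, F.Finite ∧ ∃ c > 0, ∀ E ∈ s, ∃ z ∈ F,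
    IsBoundedBelow (fun x => aggC a z x - E) c) ?_ ?_ ?_ ?_
  · exact ⟨∅, empty_subset Z, finite_empty, 1, one_pos, fun E hE => hE.elim⟩
  · rintro s t hst ⟨F, hFZ, hF, c, hc, hlb⟩
    exact ⟨F, hFZ, hF, c, hc, fun E hE => hlb E (hst hE)⟩
  · rintro s t ⟨F, hFZ, hF, c, hc, hlb⟩ ⟨G, hGZ, hG, d, hd, hlb'⟩
    refine ⟨F ∪ G, union_subset hFZ hGZ, hF.union hG, min c d, lt_min hc hd, ?_⟩
    rintro E (hE | hE)
    · obtain ⟨z, hz, hzE⟩ := hlb E hE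
      exact ⟨z, Or.inl hz, hzE.mono (min_le_left c d)⟩
    · obtain ⟨z, hz, hzE⟩ := hlb' E hE
      exact ⟨z, Or.inr hz, hzE.mono (min_le_right c d)⟩
  · intro E hE
    obtain ⟨z, hz, hzE⟩ := gap E hE
    obtain ⟨δ, hδ, c, hc, stable⟩ :=
      exists_isBoundedBelow_of_notMem_contSpectrum ha (hZ z hz) hzE
    refine ⟨Metric.closedBall E δ, mem_nhdsWithin_of_mem_nhds (Metric.closedBall_mem_nhds E hδ),
      {z}, singleton_subset_iff.2 hz, finite_singleton z, c, hc, fun E' hE' =>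
      ⟨z, rfl, stable z E' (fun j => ?_) hE'⟩⟩
    rw [dist_self]
    exact hδ.le

/-! ### Periodic concatenation -/

lemma map_emod_of_periodic {α : Type*} {f : ℤ → α} {p : ℤ} (hf : Function.Periodic f p) (n : ℤ) :
    f (n % p) = f n := by
  rw [Int.emod_def, mul_comm]
  exact hf.sub_int_mul_eq _

section PeriodicExtension

variable {α : Type*} [Zero α]

lemma perExt_eq_of_emod_eq {m : ℕ} {w : Fin m → α} {n : ℤ} {k : Fin m} (h : n % m = k) :
    perExt w n = w k := by
  rw [perExt, dif_pos k.pos]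
  exact congrArg w (Fin.ext (by simp only [h, Int.toNat_natCast]))

lemma exists_perExt_eq {m : ℕ} (hm : 0 < m) (w : Fin m → α) (n : ℤ) :
    ∃ k : Fin m, n % m = k ∧ perExt w n = w k := by
  have hm' : (0 : ℤ) < m := by exact_mod_cast hm
  obtain ⟨k, hk⟩ := Int.eq_ofNat_of_zero_le (Int.emod_nonneg n hm'.ne')
  have hkm : k < m := by exact_mod_cast hk ▸ Int.emod_lt_of_pos n hm'
  exact ⟨⟨k, hkm⟩, hk, perExt_eq_of_emod_eq hk⟩

lemma periodic_perExt {m : ℕ} (w : Fin m → α) : Function.Periodic (perExt w) (m : ℤ) := fun n => by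
  simp only [perExt, Int.add_emod_right]

lemma perExt_of_periodic {f : ℤ → α} {p : ℕ} (hp : 0 < p) (hf : Function.Periodic f (p : ℤ)) :
    perExt (fun i : Fin p => f (i : ℕ)) = f := funext fun n => by
  obtain ⟨k, hk, eq⟩ := exists_perExt_eq hp (fun i : Fin p => f (i : ℕ)) n
  rw [eq, ← hk, map_emod_of_periodic hf]

/-- The stretch of `z i` which enters the concatenation is the one around `(2 * i + 1) * L`, so that
every constraint which is periodic with a period dividing `L` is inherited. -/
theorem exists_periodic_concat {P : ℤ → Set α} {p L m : ℕ} (hP : Function.Periodic P (p : ℤ))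
    (hpL : p ∣ L) (hL : 0 < L) (hm : 0 < m) {z : Fin m → ℤ → α} (hz : ∀ i j, z i j ∈ P j) :
    ∃ w : ℤ → α, (∀ j, w j ∈ P j) ∧ Function.Periodic w ((m * (2 * L) : ℕ) : ℤ) ∧
      ∀ i : Fin m, ∀ j ∈ Ico (-L : ℤ) L, w (j + (2 * i + 1) * L) = z i (j + (2 * i + 1) * L) := by
  have hq : 0 < m * (2 * L) := by positivity
  set word : Fin (m * (2 * L)) → α := fun k => z k.divNat (k : ℕ)
  refine ⟨perExt word, fun j => ?_, periodic_perExt word, fun i j ⟨hj, hj'⟩ => ?_⟩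
  · obtain ⟨k, hk, eq⟩ := exists_perExt_eq hq word j
    have hPq : Function.Periodic P ((m * (2 * L) : ℕ) : ℤ) := by
      obtain ⟨d, hd⟩ : p ∣ m * (2 * L) := (hpL.mul_left 2).mul_left m
      rw [hd, Nat.cast_mul, mul_comm]
      exact hP.int_mul d
    rw [eq, ← map_emod_of_periodic hPq j, hk]
    exact hz _ _
  · obtain ⟨t, ht⟩ := Int.eq_ofNat_of_zero_le (show 0 ≤ j + L by linarith)
    have ht_lt : t < 2 * L := by omega
    have index_lt : t + 2 * L * i < m * (2 * L) := by
      calc t + 2 * L * i < 2 * L * (i + 1) := by linarith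
        _ ≤ 2 * L * m := Nat.mul_le_mul_left _ i.2
        _ = m * (2 * L) := mul_comm _ _
    have index_eq : j + (2 * i + 1) * L = ((t + 2 * L * i : ℕ) : ℤ) := by
      push_cast
      linear_combination ht
    rw [perExt_eq_of_emod_eq (k := ⟨t + 2 * L * i, index_lt⟩) ?_]
    · have block_eq : (⟨t + 2 * L * i, index_lt⟩ : Fin (m * (2 * L))).divNat = i := Fin.ext <| by
        rw [Fin.coe_divNat, Nat.add_mul_div_left _ _ (by positivity), Nat.div_eq_of_lt ht_lt,
          zero_add]
      simp only [word, block_eq, index_eq]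
    · rw [index_eq, Int.emod_eq_of_lt (by positivity) (by exact_mod_cast index_lt)]

end PeriodicExtension

/-! ### Thin covers for concatenated potentials -/

lemma tendsto_polynomial_eval_mul_pow (P : Polynomial ℝ) {θ : ℝ} (hθ : |θ| < 1) :
    Tendsto (fun k : ℕ => P.eval (k : ℝ) * θ ^ k) atTop (𝓝 0) := by
  simp only [Polynomial.eval_eq_sum_range, Finset.sum_mul, mul_assoc]
  rw [← Finset.sum_const_zero (s := Finset.range (P.natDegree + 1))]
  refine tendsto_finsetSum _ fun i _ => ?_
  simpa only [mul_zero] using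
    (tendsto_pow_const_mul_const_pow_of_abs_lt_one i hθ).const_mul (P.coeff i)

lemma eventually_thin_radius {B C θ : ℝ} (hB : 0 ≤ B) (hθ : 0 ≤ θ) (hθ1 : θ < 1) (m n : ℕ) :
    ∀ᶠ L : ℕ in atTop, B * θ ^ L * (C * (m * (2 * L) : ℕ) + 1) ≤ 1 ∧
      (m * (C * (m * (2 * L) : ℕ))) ^ n * (8 * √(B * θ ^ L) * (C * (m * (2 * L) : ℕ) + 1)) <
        1 / ((n : ℝ) + 1) := by
  let count : Polynomial ℝ := .C (C * m * 2) * .X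
  have eval_count (L : ℕ) : count.eval (L : ℝ) = C * (m * (2 * L) : ℕ) := by
    simp only [count, Polynomial.eval_mul, Polynomial.eval_C, Polynomial.eval_X]
    push_cast
    ring
  have error_tendsto := tendsto_polynomial_eval_mul_pow (.C B * (count + 1))
    (abs_lt.2 ⟨by linarith, hθ1⟩)
  have size_tendsto := tendsto_polynomial_eval_mul_pow
    ((.C (m : ℝ) * count) ^ n * (.C (8 * √B) * (count + 1))) (θ := √θ)
    (by rwa [abs_of_nonneg (Real.sqrt_nonneg θ), Real.sqrt_lt' one_pos, one_pow])
  simp only [Polynomial.eval_mul, Polynomial.eval_pow, Polynomial.eval_add, Polynomial.eval_C,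
    Polynomial.eval_one, eval_count] at error_tendsto size_tendsto
  filter_upwards [error_tendsto.eventually_le_const one_pos,
    size_tendsto.eventually_lt_const (show (0 : ℝ) < 1 / ((n : ℝ) + 1) by positivity)]
    with L error_le size_lt
  refine ⟨by linarith, lt_of_eq_of_lt ?_ size_lt⟩
  have sqrt_pow : √(θ ^ L) = √θ ^ L := by
    rw [Real.sqrt_eq_iff_mul_self_eq (by positivity) (by positivity), ← mul_pow,
      Real.mul_self_sqrt hθ]
  rw [Real.sqrt_mul hB, sqrt_pow]
  ring

theorem exists_forall_hasThinCover {a : ℝ} (ha : 0 < a) (M R : ℝ) {c : ℝ} (hc : 0 < c) {m : ℕ}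
    (hm : 0 < m) (n : ℕ) :
    ∃ L₀ : ℕ, ∀ {L : ℕ}, L₀ ≤ L → ∀ {w : ℤ → L2I a}, (∀ j, ‖w j‖ ≤ M) →
    Function.Periodic w ((m * (2 * L) : ℕ) : ℤ) → ∀ {z : Fin m → ℤ → L2I a},
    (∀ i : Fin m, ∀ j ∈ Ico (-L : ℤ) L, w (j + (2 * i + 1) * L) = z i (j + (2 * i + 1) * L)) →
    ∀ {A : Set ℝ}, (∀ E ∈ A, |E| ≤ R) → A ⊆ ContSpectrum (aggC a w) →
    (∀ E ∈ A, ∃ i, IsBoundedBelow (fun x => aggC a (z i) x - E) c) → HasThinCover n A := by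
  obtain ⟨C, hC, B, hB, θ, hθ, hθ1, r₀, cover⟩ := exists_finset_cover_contSpectrum ha M R hc
  obtain ⟨L₁, radius_small⟩ :=
    eventually_atTop.1 (eventually_thin_radius (C := C) hB.le hθ.le hθ1 m n)
  refine ⟨max (max r₀ L₁) 1, ?_⟩
  intro L hL w hw hper z hwz A hAR hA gap
  simp only [max_le_iff] at hL
  obtain ⟨⟨hr₀, hL₁⟩, hL1⟩ := hL
  obtain ⟨error_le, size_lt⟩ := radius_small L hL₁
  set q : ℕ := m * (2 * L)
  set ρ : ℝ := 8 * √(B * θ ^ L) * (C * q + 1)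
  have hρ_pos : 0 < ρ := by positivity
  have hLq : 2 * L ≤ q := Nat.le_mul_of_pos_left _ hm
  have cover_gap : ∀ i : Fin m, ∃ F : Finset ℝ, (F.card : ℝ) ≤ C * q ∧
      {E ∈ A | IsBoundedBelow (fun x => aggC a (z i) x - E) c} ⊆ ⋃ x ∈ F, Metric.ball x ρ := by
    intro i
    set center : ℤ := (2 * i + 1) * L
    obtain ⟨F, hF, hcover⟩ := cover (w := fun j => w (j + center)) (fun j => hw _) hr₀
      (by omega) hL1 (by omega) (fun j => (congrArg w (add_right_comm j q center)).trans (hper _))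
      (A := {E ∈ A | IsBoundedBelow (fun x => aggC a (z i) x - E) c}) (fun E hE => hAR E hE.1)
      (by
        rw [contSpectrum_aggC_add ha ((norm_nonneg _).trans (hw 0)) hw]
        exact (sep_subset _ _).trans hA)
      (fun E hE => ⟨_, (isBoundedBelow_aggC_add ha (z i) center).2 hE.2, hwz i⟩) error_le
    refine ⟨F, hF, hcover.trans (iUnion₂_mono fun x _ => Metric.closedBall_subset_ball ?_)⟩
    linarith
  choose F hF hcover using cover_gap
  refine ⟨Finset.univ.biUnion F, ρ, hρ_pos, fun E hE => ?_, lt_of_le_of_lt ?_ size_lt⟩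
  · obtain ⟨i, hi⟩ := gap E hE
    obtain ⟨x, hx, hEx⟩ := mem_iUnion₂.1 (hcover i ⟨hE, hi⟩)
    exact mem_iUnion₂.2 ⟨x, Finset.mem_biUnion.2 ⟨i, Finset.mem_univ i, hx⟩, hEx⟩
  · gcongr
    calc ((Finset.univ.biUnion F).card : ℝ) ≤ ∑ i, ((F i).card : ℝ) := by
          exact_mod_cast Finset.card_biUnion_le
      _ ≤ ∑ _i : Fin m, C * q := Finset.sum_le_sum fun i _ => hF i
      _ = m * (C * q) := by rw [Finset.sum_const, Finset.card_univ, Fintype.card_fin, nsmul_eq_mul]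

/-! ### Genericity -/

theorem exists_mem_PerC_hasThinCover {a : ℝ} (ha : 0 < a) {Y : Set (L2I a)} {x : ℤ →ᵇ L2I a}
    (hx : x ∈ PerC a Y) {ε : ℝ} {K : Set ℝ} (hK : IsCompact K)
    (gap : ∀ E ∈ K, ∃ z : ℤ → L2I a, (∀ j, z j ∈ Y ∩ Metric.closedBall (x j) ε) ∧
      E ∉ ContSpectrum (aggC a z)) (hε : 0 ≤ ε) (n : ℕ) :
    ∃ w ∈ PerC a Y, dist x w ≤ ε ∧ HasThinCover n (ContSpectrum (aggC a w) ∩ K) := by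
  classical
  obtain ⟨⟨p, hp, hper⟩, hxY⟩ := hx
  set near : ℤ → Set (L2I a) := fun j => Y ∩ Metric.closedBall (x j) ε
  have near_periodic : Function.Periodic near (p : ℤ) := fun j => by simp only [near, hper]
  have norm_le : ∀ j, ∀ y ∈ near j, ‖y‖ ≤ ‖x‖ + ε := fun j y hy =>
    (norm_le_norm_add_const_of_dist_le hy.2).trans (by gcongr; exact x.norm_coe_le_norm j)
  obtain ⟨R, hR⟩ := hK.isBounded.exists_norm_le
  obtain ⟨F, hF, hFfin, c, hc, hlb⟩ := exists_finite_family_isBoundedBelow ha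
    (Z := {z | ∀ j, z j ∈ near j}) (fun z hz j => norm_le j _ (hz j)) hK gap
  have x_mem : ∀ j, x j ∈ near j := fun j => ⟨hxY j, Metric.mem_closedBall_self hε⟩
  set G : Finset (ℤ → L2I a) := insert ⇑x hFfin.toFinset
  have hG : 0 < G.card := Finset.card_pos.2 (Finset.insert_nonempty _ _)
  set z : Fin G.card → ℤ → L2I a := fun i => G.equivFin.symm i
  have hz : ∀ i j, z i j ∈ near j := fun i => by
    rcases Finset.mem_insert.1 (G.equivFin.symm i).2 with hi | hi
    · rw [show z i = x from hi]
      exact x_mem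
    · exact hF (hFfin.mem_toFinset.1 hi)
  obtain ⟨L₀, thin⟩ := exists_forall_hasThinCover ha (‖x‖ + ε) R hc hG n
  set L := p * (L₀ + 1)
  have hL : 0 < L := by positivity
  obtain ⟨w, hw, hwq, hwz⟩ := exists_periodic_concat near_periodic (dvd_mul_right p _) hL hG hz
  have hwM : ∀ j, ‖w j‖ ≤ ‖x‖ + ε := fun j => norm_le j _ (hw j)
  refine ⟨ofNormedAddCommGroupDiscrete w _ hwM, ⟨⟨_, by positivity, hwq⟩, fun j => (hw j).1⟩,
    (dist_le hε).2 fun j => ?_, thin ?_ hwM hwq hwz (fun E hE => hR E hE.2) inter_subset_left ?_⟩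
  · rw [dist_comm]
    exact (hw j).2
  · exact (Nat.le_succ L₀).trans (Nat.le_mul_of_pos_left _ hp)
  · intro E hE
    obtain ⟨v, hv, hvE⟩ := hlb E hE.2
    refine ⟨G.equivFin ⟨v, Finset.mem_insert_of_mem (hFfin.mem_toFinset.2 hv)⟩, ?_⟩
    simpa only [z, Equiv.symm_apply_apply] using hvE

lemma exists_notMem_contSpectrum_of_gapRichC {a : ℝ} {Y : Set (L2I a)} {S : Set ℝ}
    (hGR : GapRichC a Y S) {E : ℝ} (hE : E ∉ S) {x : ℤ →ᵇ L2I a} (hx : x ∈ PerC a Y) {ε : ℝ}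
    (hε : 0 < ε) : ∃ z : ℤ → L2I a, (∀ j, z j ∈ Y ∩ Metric.closedBall (x j) ε) ∧
      E ∉ ContSpectrum (aggC a z) := by
  obtain ⟨⟨p, hp, hper⟩, hxY⟩ := hx
  obtain ⟨l, hl, y, hyY, hyx, hyE⟩ :=
    hGR.2 E hE p hp (fun i : Fin p => x (i : ℕ)) (fun i => hxY _) ε hε
  rw [perExt_of_periodic hp hper] at hyx
  refine ⟨perExt y, fun j => ⟨?_, ?_⟩, hyE⟩
  · obtain ⟨k, -, eq⟩ := exists_perExt_eq hl y j
    exact eq ▸ hyY k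
  · rw [Metric.mem_closedBall, dist_comm]
    exact (hyx j).le

theorem dense_setOf_hasThinCover {a : ℝ} (ha : 0 < a) {Y : Set (L2I a)} {S : Set ℝ}
    (hGR : GapRichC a Y S) (n : ℕ) : Dense {y : LPC a Y |
      HasThinCover n (ContSpectrum (aggC a (y : ℤ →ᵇ L2I a)) ∩ energyWindow S n)} := by
  refine Metric.dense_iff.2 fun y ε hε => ?_
  obtain ⟨x, hx, hyx⟩ := Metric.mem_closure_iff.1 y.2 (ε / 2) (by positivity)
  obtain ⟨w, hw, hxw, thin⟩ := exists_mem_PerC_hasThinCover ha hx (isCompact_energyWindow S n)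
    (fun E hE => exists_notMem_contSpectrum_of_gapRichC hGR
      (disjoint_left.1 (disjoint_energyWindow S n) hE) hx (show 0 < ε / 4 by positivity))
    (by positivity) n
  refine ⟨⟨w, subset_closure hw⟩, ?_, thin⟩
  rw [Metric.mem_ball, Subtype.dist_eq, dist_comm]
  linarith [dist_triangle (y : ℤ →ᵇ L2I a) x w]

theorem isZeroDimCantorC_contSpectrum {a : ℝ} (ha : 0 < a) {Y : Set (L2I a)} {S : Set ℝ}
    (hS : IsDiscreteSet S) {y : ℤ →ᵇ L2I a} (hy : y ∈ LPC a Y)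
    (thin : ∀ n, HasThinCover n (ContSpectrum (aggC a y) ∩ energyWindow S n)) :
    IsZeroDimCantorC (ContSpectrum (aggC a y)) :=
  have hV := unifLocL2_aggC ha (norm_nonneg y) y y.norm_coe_le_norm
  have dim_zero := dimH_eq_zero_of_hasThinCover_energyWindow hS thin
  ⟨contSpectrum_nonempty hV, isClosed_contSpectrum hV, preperfect_contSpectrum_of_mem_LPC ha hy,
    interior_eq_empty_of_dimH_eq_zero dim_zero, dim_zero⟩

end ContinuumSchrodinger

open ContinuumSchrodinger

theorem continuum_gapRich_generic_zero_dim_cantor_general {a : ℝ} (ha : 0 < a) {Y : Set (L2I a)}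
    {S : Set ℝ} (hGR : GapRichC a Y S) : ∃ R : Set (LPC a Y), IsGδ R ∧ Dense R ∧
      ∀ y ∈ R, IsZeroDimCantorC (ContSpectrum (aggC a ⇑(y : ℤ →ᵇ L2I a))) := by
  set U : ℕ → Set (LPC a Y) := fun n =>
    {y | HasThinCover n (ContSpectrum (aggC a (y : ℤ →ᵇ L2I a)) ∩ energyWindow S n)}
  have isOpen_U : ∀ n, IsOpen (U n) := fun n =>
    (isOpen_setOf_hasThinCover ha n (isCompact_energyWindow S n)).preimage continuous_subtype_val
  have : CompleteSpace (LPC a Y) := (isClosed_closure : IsClosed (LPC a Y)).completeSpace_coe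
  exact ⟨⋂ n, U n, IsGδ.iInter_of_isOpen isOpen_U,
    dense_iInter_of_isOpen isOpen_U (dense_setOf_hasThinCover ha hGR),
    fun y hy => isZeroDimCantorC_contSpectrum ha hGR.1 y.2 (mem_iInter.1 hy)⟩

/-- If `Y ⊆ L²([0,a))` is a perfect gap-rich set, then for generic
`y ∈ LP(ℤ,Y)` the spectrum of `L_y = -d²/dx² + y^♮` is a Cantor set of zero
Hausdorff dimension. -/
theorem continuum_gapRich_generic_zero_dim_cantor (a : ℝ) (ha : 0 < a)
    (Y : Set (L2I a)) (hY : Perfect Y) (S : Set ℝ) (hGR : GapRichC a Y S) :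
    ∃ R : Set (LPC a Y), IsGδ R ∧ Dense R ∧
      ∀ y ∈ R,
        IsZeroDimCantorC (ContSpectrum (aggC a ⇑(y : ℤ →ᵇ L2I a))) := by
  exact continuum_gapRich_generic_zero_dim_cantor_general ha hGR
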